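/- For every natural number n ≥ 2, at least one quarter of the rows of the Sierpiński matrix S_n contain at least one prime; precisely, if A = {k : 1 ≤ k ≤ n and there exists a prime p with (k−1)·n < p ≤ k·n}, then 4·|A| ≥ n. -/

import Mathlib

/-!
Suppose that fewer than `n / 4` rows contain a prime. Then all the primes up to `n ^ 2` are crowded
into those rows, and an upper bound for the number of primes in a row gives an upper bound for
`ψ(n ^ 2)`, to be contradicted by a lower bound of Chebyshev type.

*Upper bound in a single row.* Selberg's sieve, restricted to integers coprime to `30`, produces the
majorant `selNu`, a square that equals `1` at every prime above the level `R`. Its mean value over an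
interval is governed by `selL R = ∑ 1 / φ(r) ≥ (4 / 15) (log R + 2.2)`, and its error by `selB R`; the
result is the Brun–Titchmarsh inequality of `card_primes_interval_le` and
`card_primes_interval_le_of`. With `V = log n / 2 + 1.4` a row of a large matrix holds at most
`n / V + 0.54 n / V ^ 2` primes above `√(n / 5)`, so that `ψ(n ^ 2)` is at most about `n ^ 2 (1 - 1.7 / log n)`.

*Lower bounds for `ψ`.* Chebyshev's combination of `x!`, `(x/2)!`, `(x/3)!`, `(x/5)!`, `(x/30)!` gives
`ψ(x) ≥ 0.92129 x - O(log x)` (`psi_ge_chebyshev`), which suffices for `log n ≤ 20`. A combination with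
period `2310` has the constant `0.9982` but takes the value `2` at some places; the corresponding
intervals `(x/(v+1), x/v]` are bounded by the Brun–Titchmarsh inequality, and `ψ(x) ≥ 0.957 x` remains
for `log x ≥ 40` (`psi_ge_large`). This suffices for `log n ≤ 36`.

*Large `n`.* The upper bound for a single row is limited to the level `R ≈ √n`. For `log n > 36` the
rows are treated on average instead, with `R ≈ n ^ 0.55`. The Fourier coefficients of `selNu` are the
numbers `selW R q`, attached to the fractions with denominator `q ≤ R ^ 2` (`selNu_fourier`), and
`|selW R q| ≤ 3 ^ ω(q) q / (φ(q) ^ 2 L)` (`abs_selW_le`). A large sieve inequality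
(`large_sieve`) then bounds the variance of `selNu` over segments of length about `n / 30` of a
residue class modulo `30` (`variance_le`) in terms of `varT`, which is estimated by Rankin's trick
(`varT_le`). Hence the rows of any set contain on average at most about `n / (0.55 log n)` primes,
`ψ(n ^ 2) ≤ 0.9411 n ^ 2`, and this contradicts `ψ(n ^ 2) ≥ 0.957 n ^ 2`.
-/

open Finset ArithmeticFunction
open scoped Nat ArithmeticFunction.Moebius ArithmeticFunction.omega

namespace SierpinskiRows

/-! ### Integers coprime to 30 -/

/-- The number of integers `1 ≤ m ≤ t` coprime to `30`. -/
def wheel (t : ℕ) : ℕ := #{m ∈ Ioc 0 t | Nat.Coprime m 30}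

lemma wheel_succ (t : ℕ) :
    wheel (t + 1) = wheel t + if Nat.Coprime (t + 1) 30 then 1 else 0 := by
  have h : Ioc 0 (t + 1) = insert (t + 1) (Ioc 0 t) := by
    ext m; simp only [mem_Ioc, mem_insert]; omega
  unfold wheel
  rw [h, filter_insert]
  split_ifs with hc
  · rw [card_insert_of_notMem (by simp)]
  · simp

lemma wheel_eq_sum (t : ℕ) :
    wheel t = ∑ i ∈ range t, if Nat.Coprime (i + 1) 30 then 1 else 0 := by
  induction t with
  | zero => simp [wheel]
  | succ t ih => rw [wheel_succ, sum_range_succ, ih]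

lemma wheel_block (r : ℕ) (hr : r < 30) :
    ∑ i ∈ range 30, (if Nat.Coprime (r + i + 1) 30 then 1 else 0) = 8 := by
  revert r
  decide +kernel

lemma wheel_add_thirty (t : ℕ) : wheel (t + 30) = wheel t + 8 := by
  rw [wheel_eq_sum, wheel_eq_sum, sum_range_add,
    ← wheel_block (t % 30) (Nat.mod_lt _ (by norm_num))]
  have h : ∀ i, Nat.Coprime (t + i + 1) 30 ↔ Nat.Coprime (t % 30 + i + 1) 30 := by
    intro i
    have : t + i + 1 = (t % 30 + i + 1) + 30 * (t / 30) := by omega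
    rw [this, Nat.coprime_add_mul_left_left]
  simp only [h]

/-- The discrepancy of the wheel: `|wheel ⌊y⌋ - 4 y / 15| ≤ 14 / 15` for every real `y ≥ 0`,
written with integers. -/
lemma wheel_bounds (t : ℕ) : 15 * wheel t ≤ 4 * t + 14 ∧ 4 * (t + 1) ≤ 15 * wheel t + 14 := by
  induction t using Nat.strong_induction_on with
  | _ t ih =>
    rcases Nat.lt_or_ge t 30 with h | h
    · clear ih
      rw [wheel_eq_sum]
      revert t
      decide +kernel
    · obtain ⟨s, rfl⟩ := Nat.exists_eq_add_of_le' h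
      have := ih s (by omega)
      rw [wheel_add_thirty]
      omega

lemma card_multiples_le (d A : ℕ) (hd : 0 < d) (hc : Nat.Coprime d 30) :
    #{m ∈ Ioc 0 A | d ∣ m ∧ Nat.Coprime m 30} = wheel (A / d) := by
  unfold wheel
  symm
  apply card_bij (fun j _ => d * j)
  · intro j hj
    simp only [mem_filter, mem_Ioc] at hj ⊢
    refine ⟨⟨Nat.mul_pos hd hj.1.1, ?_⟩, dvd_mul_right _ _, Nat.Coprime.mul_left hc hj.2⟩
    calc d * j ≤ d * (A / d) := Nat.mul_le_mul_left _ hj.1.2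
      _ ≤ A := Nat.mul_div_le A d
  · intro a _ b _ h
    exact Nat.eq_of_mul_eq_mul_left hd h
  · intro m hm
    simp only [mem_filter, mem_Ioc] at hm
    obtain ⟨⟨h1, h2⟩, ⟨j, rfl⟩, h3⟩ := hm
    refine ⟨j, ?_, rfl⟩
    simp only [mem_filter, mem_Ioc]
    refine ⟨⟨Nat.pos_of_mul_pos_left h1 |> fun h => ?_, ?_⟩, Nat.Coprime.coprime_mul_left h3⟩
    · exact Nat.pos_of_ne_zero (by rintro rfl; simp at h1)
    · exact (Nat.le_div_iff_mul_le hd).2 (by rw [mul_comm]; exact h2)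

lemma wheel_div_bounds (d A : ℕ) (hd : 0 < d) :
    |(wheel (A / d) : ℝ) - 4 / 15 * (A / d)| ≤ 14 / 15 := by
  obtain ⟨h1, h2⟩ := wheel_bounds (A / d)
  have h1' : (15 : ℝ) * wheel (A / d) ≤ 4 * (A / d : ℕ) + 14 := by exact_mod_cast h1
  have h2' : (4 : ℝ) * ((A / d : ℕ) + 1) ≤ 15 * wheel (A / d) + 14 := by exact_mod_cast h2
  have h3 : ((A / d : ℕ) : ℝ) ≤ (A : ℝ) / d := Nat.cast_div_le
  have h4 : (A : ℝ) / d ≤ (A / d : ℕ) + 1 := by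
    rw [div_le_iff₀ (by exact_mod_cast hd)]
    have := Nat.lt_div_mul_add (a := A) hd
    have h5 : A ≤ (A / d + 1) * d := by rw [add_mul, one_mul]; omega
    exact_mod_cast h5
  rw [abs_le]; constructor <;> linarith

/-- Multiples of `d` coprime to `30` in an interval of length `N`. -/
lemma card_multiples_interval (d a N : ℕ) (hd : 0 < d) (hc : Nat.Coprime d 30) :
    |(#{m ∈ Ioc a (a + N) | d ∣ m ∧ Nat.Coprime m 30} : ℝ) - 4 / 15 * (N / d)| ≤ 28 / 15 := by
  have hsplit : #{m ∈ Ioc 0 (a + N) | d ∣ m ∧ Nat.Coprime m 30} =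
      #{m ∈ Ioc 0 a | d ∣ m ∧ Nat.Coprime m 30} +
      #{m ∈ Ioc a (a + N) | d ∣ m ∧ Nat.Coprime m 30} := by
    rw [← card_union_of_disjoint, ← filter_union, Ioc_union_Ioc_eq_Ioc (by omega) (by omega)]
    apply disjoint_filter_filter
    rw [disjoint_left]; intro m; simp only [mem_Ioc]; omega
  rw [card_multiples_le _ _ hd hc, card_multiples_le _ _ hd hc] at hsplit
  have h1 := wheel_div_bounds d (a + N) hd
  have h2 := wheel_div_bounds d a hd
  have h3 : (wheel ((a + N) / d) : ℝ) = wheel (a / d) +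
      #{m ∈ Ioc a (a + N) | d ∣ m ∧ Nat.Coprime m 30} := by exact_mod_cast hsplit
  push_cast at h1
  rw [add_div] at h1
  rw [abs_le] at *
  constructor <;> linarith [h1.1, h1.2, h2.1, h2.2]

/-! ### Selberg's sieve weights -/

/-- The squarefree integers `1 ≤ d ≤ R` coprime to `30`: the support of the sieve weights. -/
def sieveRange (R : ℕ) : Finset ℕ := {d ∈ Icc 1 R | Squarefree d ∧ Nat.Coprime d 30}

/-- Selberg's sum `L = ∑ 1 / φ(r)` over the sieve range. -/
noncomputable def selL (R : ℕ) : ℝ := ∑ r ∈ sieveRange R, 1 / (φ r : ℝ)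

/-- Selberg's weights `λ_d = μ(d) (d / L) ∑_{d ∣ r} 1 / φ(r)`, `r` in the sieve range. -/
noncomputable def lam (R d : ℕ) : ℝ :=
  (μ d : ℝ) * (d / selL R) * ∑ r ∈ sieveRange R with d ∣ r, 1 / (φ r : ℝ)

/-- The sieve majorant `ν(m) = (∑_{d ∣ m} λ_d)²`. -/
noncomputable def selNu (R m : ℕ) : ℝ := (∑ d ∈ sieveRange R with d ∣ m, lam R d) ^ 2

/-- The sum `w_q = ∑ λ_d λ_d' / [d, d']` over the pairs with `q ∣ [d, d']`. It is the Fourier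
coefficient of `ν` at every reduced fraction with denominator `q`. -/
noncomputable def selW (R q : ℕ) : ℝ :=
  ∑ d ∈ sieveRange R, ∑ d' ∈ sieveRange R,
    if q ∣ d.lcm d' then lam R d * lam R d' / (d.lcm d' : ℕ) else 0

/-- The linear sums in the variables `λ_d` that diagonalise `w_q`. -/
noncomputable def selZ (R q u e : ℕ) : ℝ :=
  ∑ d ∈ sieveRange R with q.gcd d = u ∧ e ∣ d, lam R d * (u / d)

lemma mem_sieveRange {R d : ℕ} :
    d ∈ sieveRange R ↔ (1 ≤ d ∧ d ≤ R) ∧ Squarefree d ∧ Nat.Coprime d 30 := by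
  simp [sieveRange]

lemma sieveRange_of_dvd {R d r : ℕ} (hr : r ∈ sieveRange R) (h : d ∣ r) : d ∈ sieveRange R := by
  rw [mem_sieveRange] at *
  have hd : 0 < d := Nat.pos_of_dvd_of_pos h hr.1.1
  exact ⟨⟨hd, (Nat.le_of_dvd hr.1.1 h).trans hr.1.2⟩, hr.2.1.squarefree_of_dvd h,
    hr.2.2.coprime_dvd_left h⟩

lemma one_mem_sieveRange {R : ℕ} (hR : 1 ≤ R) : 1 ∈ sieveRange R := by
  rw [mem_sieveRange]; simp [hR]

lemma selL_pos {R : ℕ} (hR : 1 ≤ R) : 0 < selL R := by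
  apply sum_pos
  · intro r hr
    have : 0 < φ r := Nat.totient_pos.2 (mem_sieveRange.1 hr).1.1
    positivity
  · exact ⟨1, one_mem_sieveRange hR⟩

lemma lam_one {R : ℕ} (hR : 1 ≤ R) : lam R 1 = 1 := by
  have := (selL_pos hR).ne'
  have h2 : (∑ r ∈ sieveRange R with 1 ∣ r, 1 / (φ r : ℝ)) = selL R := by simp [selL]
  rw [lam, h2]
  simp [this]

/-- A Möbius sum over the divisors of `r` with a prescribed common part with `q`. -/
lemma moebius_restricted {q r u e : ℕ} (hr : Squarefree r) (hu : u ∣ q)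
    (he : Nat.Coprime e q) :
    ∑ d ∈ r.divisors with q.gcd d = u ∧ e ∣ d, (μ d : ℝ) =
      if u ∣ r ∧ r = e * q.gcd r then (μ u : ℝ) * μ e else 0 := by
  by_cases h : u ∣ r ∧ e ∣ r
  swap
  · rw [if_neg, sum_eq_zero]
    · intro d hd
      simp only [mem_filter, Nat.mem_divisors] at hd
      exact absurd ⟨hd.2.1 ▸ (Nat.gcd_dvd_right q d).trans hd.1.1, hd.2.2.trans hd.1.1⟩ h
    · rintro ⟨h1, h2⟩
      exact h ⟨h1, h2 ▸ dvd_mul_right _ _⟩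
  obtain ⟨hur, her⟩ := h
  have hr0 : r ≠ 0 := hr.ne_zero
  have hcop : Nat.Coprime e (q.gcd r) := he.coprime_dvd_right (Nat.gcd_dvd_left _ _)
  obtain ⟨s, hs⟩ : e * q.gcd r ∣ r := hcop.mul_dvd_of_dvd_of_dvd her (Nat.gcd_dvd_right _ _)
  have hsq : Nat.Coprime (e * q.gcd r) s := by
    rw [hs] at hr; exact Nat.coprime_of_squarefree_mul hr
  have hs0 : s ≠ 0 := by rintro rfl; simp at hs; exact hr0 hs
  have hsr : s ∣ r := hs ▸ dvd_mul_left _ _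
  have hsqq : Nat.Coprime q s := by
    have h1 : q.gcd s ∣ q.gcd r := Nat.gcd_dvd_gcd_of_dvd_right _ hsr
    exact Nat.eq_one_of_dvd_coprimes hsq (h1.trans (dvd_mul_left _ _)) (Nat.gcd_dvd_right _ _)
  have hu0 : 0 < u := Nat.pos_of_dvd_of_pos hur (Nat.pos_of_ne_zero hr0)
  have he0 : 0 < e := Nat.pos_of_dvd_of_pos her (Nat.pos_of_ne_zero hr0)
  have hug : u ∣ q.gcd r := Nat.dvd_gcd hu hur
  have hue : Nat.Coprime u e := (he.coprime_dvd_right hu).symm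
  have hues : Nat.Coprime (u * e) s := by
    apply hsq.coprime_dvd_left
    rw [mul_comm e]; exact Nat.mul_dvd_mul_right hug e
  have key : ∑ d ∈ r.divisors with q.gcd d = u ∧ e ∣ d, (μ d : ℝ) =
      ∑ c ∈ s.divisors, (μ (u * e * c) : ℝ) := by
    symm
    apply sum_bij (fun c _ => u * e * c)
    · intro c hc
      have hcs := Nat.dvd_of_mem_divisors hc
      simp only [mem_filter, Nat.mem_divisors]
      refine ⟨⟨?_, hr0⟩, ?_, ?_⟩
      · rw [hs]
        apply Nat.mul_dvd_mul _ hcs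
        rw [mul_comm e]; exact Nat.mul_dvd_mul_right hug e
      · have hk : Nat.Coprime (e * c) q :=
          Nat.Coprime.mul_left he (hsqq.coprime_dvd_right hcs).symm
        rw [mul_assoc, Nat.Coprime.gcd_mul_right_cancel_right u hk]
        exact Nat.gcd_eq_right hu
      · exact ⟨u * c, by ring⟩
    · intro a _ b _ hab
      exact Nat.eq_of_mul_eq_mul_left (Nat.mul_pos hu0 he0) hab
    · intro d hd
      simp only [mem_filter, Nat.mem_divisors] at hd
      obtain ⟨⟨hdr, -⟩, hqd, hed⟩ := hd
      have hud : u ∣ d := hqd ▸ Nat.gcd_dvd_right q d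
      obtain ⟨c, hc⟩ := hue.mul_dvd_of_dvd_of_dvd hud hed
      refine ⟨c, ?_, hc.symm⟩
      have hdsq : Squarefree d := hr.squarefree_of_dvd hdr
      have hcc : Nat.Coprime (u * e) c := by
        rw [hc] at hdsq; exact Nat.coprime_of_squarefree_mul hdsq
      have hcd : c ∣ d := hc ▸ dvd_mul_left _ _
      have hcq : Nat.Coprime q c := by
        have h1 : q.gcd c ∣ u := hqd ▸ Nat.gcd_dvd_gcd_of_dvd_right _ hcd
        exact Nat.eq_one_of_dvd_coprimes hcc (h1.trans (dvd_mul_right _ _)) (Nat.gcd_dvd_right _ _)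
      have hce : Nat.Coprime (e * q.gcd r) c :=
        Nat.Coprime.mul_left (hcc.coprime_dvd_left (dvd_mul_left _ _))
          (hcq.coprime_dvd_left (Nat.gcd_dvd_left _ _))
      have h2 : c ∣ e * q.gcd r * s := hs ▸ hcd.trans hdr
      exact Nat.mem_divisors.2 ⟨hce.symm.dvd_of_dvd_mul_left h2, hs0⟩
    · intro c _; rfl
  have hmul : ∀ c ∈ s.divisors, (μ (u * e * c) : ℝ) = (μ u : ℝ) * μ e * μ c := by
    intro c hc
    have hcs := Nat.dvd_of_mem_divisors hc
    rw [isMultiplicative_moebius.map_mul_of_coprime (hues.coprime_dvd_right hcs),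
      isMultiplicative_moebius.map_mul_of_coprime hue]
    push_cast; ring
  rw [key, sum_congr rfl hmul, ← mul_sum]
  have hmu : ∑ c ∈ s.divisors, (μ c : ℝ) = if s = 1 then 1 else 0 := by
    have := congrArg (fun f : ArithmeticFunction ℤ => f s) moebius_mul_coe_zeta
    simp only [coe_mul_zeta_apply, one_apply] at this
    exact_mod_cast this
  rw [hmu]
  have hiff : (u ∣ r ∧ r = e * q.gcd r) ↔ s = 1 := by
    constructor
    · rintro ⟨-, h⟩
      have h3 : e * q.gcd r * s = e * q.gcd r * 1 := by rw [mul_one, ← hs]; exact h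
      refine Nat.eq_of_mul_eq_mul_left ?_ h3
      exact Nat.pos_of_ne_zero (by intro h0; rw [h0] at h; exact hr0 h)
    · rintro rfl; exact ⟨hur, by rw [mul_one] at hs; exact hs⟩
  simp only [hiff]
  split_ifs <;> ring

lemma selZ_eq {R q u e : ℕ} (hu : u ∣ q) (he : Nat.Coprime e q) :
    selZ R q u e = u / selL R * ∑ r ∈ sieveRange R,
      1 / (φ r : ℝ) * if u ∣ r ∧ r = e * q.gcd r then (μ u : ℝ) * μ e else 0 := by
  have h1 : selZ R q u e = ∑ d ∈ sieveRange R, ∑ r ∈ sieveRange R,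
      (if (q.gcd d = u ∧ e ∣ d) ∧ d ∣ r then u / selL R * (1 / (φ r : ℝ) * (μ d : ℝ)) else 0) := by
    rw [selZ, sum_filter]
    refine sum_congr rfl fun d hd => ?_
    have hd0 : (d : ℝ) ≠ 0 := by
      have := (mem_sieveRange.1 hd).1.1
      positivity
    split_ifs with h
    · rw [lam, mul_sum, sum_mul, sum_filter]
      refine sum_congr rfl fun r _ => ?_
      by_cases hdr : d ∣ r
      · simp only [hdr, h, and_self, if_true]; field_simp
      · simp [hdr]
    · simp [h]
  rw [h1, sum_comm, mul_sum]
  refine sum_congr rfl fun r hr => ?_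
  rw [← moebius_restricted (mem_sieveRange.1 hr).2.1 hu he, mul_sum, mul_sum, ← sum_filter]
  have hs : {d ∈ sieveRange R | (q.gcd d = u ∧ e ∣ d) ∧ d ∣ r} =
      {d ∈ r.divisors | q.gcd d = u ∧ e ∣ d} := by
    ext d
    simp only [mem_filter, Nat.mem_divisors]
    constructor
    · rintro ⟨_, h2, h3⟩; exact ⟨⟨h3, (mem_sieveRange.1 hr).2.1.ne_zero⟩, h2⟩
    · rintro ⟨⟨h2, _⟩, h3⟩; exact ⟨sieveRange_of_dvd hr h2, h3, h2⟩
  rw [hs]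

/-- Substituting `t = u v` and using `∑ φ(v) = k` over the divisors of `k = q / u`. -/
lemma sum_inv_totient_multiples {q u : ℕ} (hq : Squarefree q) (hu : u ∣ q) :
    ∑ t ∈ q.divisors with u ∣ t, 1 / (φ t : ℝ) = (q / u : ℝ) / φ q := by
  obtain ⟨k, rfl⟩ := hu
  have hk0 : k ≠ 0 := by rintro rfl; simp at hq
  have hu0 : 0 < u := Nat.pos_of_ne_zero (by rintro rfl; simp at hq)
  have hsum : ((k : ℕ) : ℝ) = ∑ v ∈ k.divisors, (φ v : ℝ) := by
    exact_mod_cast (Nat.sum_totient k).symm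
  have hq0 : (φ (u * k) : ℝ) ≠ 0 := by
    have := Nat.totient_pos.2 (Nat.mul_pos hu0 (Nat.pos_of_ne_zero hk0))
    positivity
  have : ((u * k : ℕ) : ℝ) / u = k := by
    push_cast; field_simp
  rw [this, hsum, sum_div]
  symm
  apply sum_bij' (fun v _ => u * k / v) (fun t _ => u * k / t)
  · intro v hv
    have hv := Nat.dvd_of_mem_divisors hv
    have hvk : v ∣ u * k := hv.trans (dvd_mul_left _ _)
    simp only [mem_filter, Nat.mem_divisors]
    refine ⟨⟨Nat.div_dvd_of_dvd hvk, hq.ne_zero⟩, ?_⟩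
    rw [Nat.mul_div_assoc _ hv]; exact dvd_mul_right _ _
  · intro t ht
    simp only [mem_filter, Nat.mem_divisors] at ht
    obtain ⟨⟨h1, _⟩, c, rfl⟩ := ht
    have h2 : c ∣ k := Nat.dvd_of_mul_dvd_mul_left hu0 h1
    rw [Nat.mul_div_mul_left _ _ hu0]
    exact Nat.mem_divisors.2 ⟨Nat.div_dvd_of_dvd h2, hk0⟩
  · intro v hv
    have hv := Nat.dvd_of_mem_divisors hv
    exact Nat.div_div_self (hv.trans (dvd_mul_left _ _)) hq.ne_zero
  · intro t ht
    simp only [mem_filter, Nat.mem_divisors] at ht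
    exact Nat.div_div_self ht.1.1 hq.ne_zero
  · intro v hv
    have hvk : v ∣ u * k := (Nat.dvd_of_mem_divisors hv).trans (dvd_mul_left _ _)
    obtain ⟨c, hc⟩ := hvk
    have hv0 : 0 < v := Nat.pos_of_mem_divisors hv
    rw [hc, Nat.mul_div_cancel_left _ hv0]
    rw [hc] at hq hq0
    have hcop := Nat.coprime_of_squarefree_mul hq
    rw [Nat.totient_mul hcop] at hq0 ⊢
    push_cast at hq0 ⊢
    have := left_ne_zero_of_mul hq0
    have := right_ne_zero_of_mul hq0
    field_simp

lemma abs_selZ_le {R q u e : ℕ} (hR : 1 ≤ R) (hq : Squarefree q) (hu : u ∣ q)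
    (he : Nat.Coprime e q) (he0 : 0 < e) :
    |selZ R q u e| ≤ q / (φ q * φ e * selL R) := by
  have hL := selL_pos hR
  have hq0 : 0 < q := Nat.pos_of_ne_zero hq.ne_zero
  have hu0 : 0 < u := Nat.pos_of_dvd_of_pos hu hq0
  have hmu : ∀ k : ℕ, |(μ k : ℝ)| ≤ 1 := fun k => by exact_mod_cast abs_moebius_le_one
  have hφe : (0 : ℝ) < φ e := by exact_mod_cast Nat.totient_pos.2 he0
  have hφq : (0 : ℝ) < φ q := by exact_mod_cast Nat.totient_pos.2 hq0
  have hu' : (0 : ℝ) < u := by exact_mod_cast hu0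
  rw [selZ_eq hu he, abs_mul, abs_of_nonneg (by positivity)]
  have h1 : |∑ r ∈ sieveRange R,
      1 / (φ r : ℝ) * if u ∣ r ∧ r = e * q.gcd r then (μ u : ℝ) * μ e else 0| ≤
      ∑ r ∈ sieveRange R with u ∣ r ∧ r = e * q.gcd r, 1 / (φ r : ℝ) := by
    refine (abs_sum_le_sum_abs _ _).trans ?_
    rw [sum_filter]
    refine sum_le_sum fun r _ => ?_
    split_ifs with h
    · rw [abs_mul, abs_mul, abs_of_nonneg (by positivity : (0 : ℝ) ≤ 1 / (φ r : ℝ))]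
      have : |(μ u : ℝ)| * |(μ e : ℝ)| ≤ 1 * 1 :=
        mul_le_mul (hmu u) (hmu e) (abs_nonneg _) zero_le_one
      calc _ ≤ 1 / (φ r : ℝ) * (1 * 1) := mul_le_mul_of_nonneg_left this (by positivity)
        _ = _ := by ring
    · simp
  have h2 : ∑ r ∈ sieveRange R with u ∣ r ∧ r = e * q.gcd r, 1 / (φ r : ℝ) ≤
      ∑ t ∈ q.divisors with u ∣ t, 1 / (φ e * φ t : ℝ) := by
    have hinj : Set.InjOn (fun r => q.gcd r)
        ({r ∈ sieveRange R | u ∣ r ∧ r = e * q.gcd r} : Finset ℕ) := by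
      intro a ha b hb hab
      simp only [coe_filter, Set.mem_ofPred_eq] at ha hb
      have hab' : q.gcd a = q.gcd b := hab
      rw [ha.2.2, hb.2.2, hab']
    have h3 : ∑ r ∈ sieveRange R with u ∣ r ∧ r = e * q.gcd r, 1 / (φ r : ℝ) =
        ∑ t ∈ ({r ∈ sieveRange R | u ∣ r ∧ r = e * q.gcd r} : Finset ℕ).image (fun r => q.gcd r),
          1 / (φ e * φ t : ℝ) := by
      rw [sum_image hinj]
      refine sum_congr rfl fun r hr => ?_
      simp only [mem_filter] at hr
      have hcop : Nat.Coprime e (q.gcd r) := he.coprime_dvd_right (Nat.gcd_dvd_left _ _)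
      have : φ r = φ e * φ (q.gcd r) := by
        rw [← Nat.totient_mul hcop, ← hr.2.2]
      rw [this]; push_cast; rfl
    rw [h3]
    apply sum_le_sum_of_subset_of_nonneg
    · intro t ht
      simp only [mem_image, mem_filter] at ht
      obtain ⟨r, ⟨_, h4, _⟩, rfl⟩ := ht
      simp only [mem_filter, Nat.mem_divisors]
      exact ⟨⟨Nat.gcd_dvd_left _ _, hq.ne_zero⟩, Nat.dvd_gcd hu h4⟩
    · intros; positivity
  have h3 : ∑ t ∈ q.divisors with u ∣ t, 1 / (φ e * φ t : ℝ) = (q / u : ℝ) / φ q / φ e := by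
    rw [← sum_inv_totient_multiples hq hu, sum_div]
    refine sum_congr rfl fun t _ => ?_
    rw [div_div, mul_comm]
  calc u / selL R * _ ≤ u / selL R * ((q / u : ℝ) / φ q / φ e) :=
        mul_le_mul_of_nonneg_left (h1.trans (h2.trans h3.le)) (by positivity)
    _ = _ := by field_simp

/-- Diagonalisation of `w_q`. -/
lemma selW_eq {R q : ℕ} (hq : Squarefree q) :
    selW R q = 1 / q * ∑ p ∈ q.divisors ×ˢ q.divisors with p.1.lcm p.2 = q,
      ∑ e ∈ sieveRange R with Nat.Coprime e q, φ e * (selZ R q p.1 e * selZ R q p.2 e) := by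
  have hq0 : 0 < q := Nat.pos_of_ne_zero hq.ne_zero
  have hexp : ∀ p : ℕ × ℕ, ∀ e : ℕ, (φ e : ℝ) * (selZ R q p.1 e * selZ R q p.2 e) =
      ∑ d ∈ sieveRange R, ∑ d' ∈ sieveRange R,
        if (q.gcd d, q.gcd d') = p then
          (if e ∣ d ∧ e ∣ d' then φ e * (lam R d * (q.gcd d / d) * (lam R d' * (q.gcd d' / d')))
            else 0) else 0 := by
    rintro ⟨u, v⟩ e
    simp only [selZ]
    rw [sum_filter, sum_filter, sum_mul_sum, mul_sum]
    refine sum_congr rfl fun d _ => ?_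
    rw [mul_sum]
    refine sum_congr rfl fun d' _ => ?_
    simp only [Prod.mk.injEq]
    by_cases h1 : q.gcd d = u <;> by_cases h2 : q.gcd d' = v <;> by_cases h3 : e ∣ d <;>
      by_cases h4 : e ∣ d' <;> simp [h1, h2, h3, h4]
  simp only [hexp]
  have hswap : ∀ p : ℕ × ℕ, ∀ G : ℕ → ℕ → ℕ → ℝ,
      ∑ e ∈ sieveRange R with Nat.Coprime e q, ∑ d ∈ sieveRange R, ∑ d' ∈ sieveRange R,
        (if (q.gcd d, q.gcd d') = p then G e d d' else 0) =
      ∑ d ∈ sieveRange R, ∑ d' ∈ sieveRange R, (if (q.gcd d, q.gcd d') = p then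
        ∑ e ∈ sieveRange R with Nat.Coprime e q, G e d d' else 0) := by
    intro p G
    rw [sum_comm]
    refine sum_congr rfl fun d _ => ?_
    rw [sum_comm]
    refine sum_congr rfl fun d' _ => ?_
    split_ifs <;> simp
  simp only [hswap]
  rw [sum_comm, selW, mul_sum]
  refine sum_congr rfl fun d hd => ?_
  rw [sum_comm, mul_sum]
  refine sum_congr rfl fun d' hd' => ?_
  rw [sum_ite_eq]
  have hdd := mem_sieveRange.1 hd
  have hdd' := mem_sieveRange.1 hd'
  have hgl : (q.gcd d).lcm (q.gcd d') = q ↔ q ∣ d.lcm d' := by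
    constructor
    · intro h
      rw [← h]
      exact Nat.lcm_dvd ((Nat.gcd_dvd_right _ _).trans (Nat.dvd_lcm_left _ _))
        ((Nat.gcd_dvd_right _ _).trans (Nat.dvd_lcm_right _ _))
    · intro h
      refine Nat.dvd_antisymm (Nat.lcm_dvd (Nat.gcd_dvd_left _ _) (Nat.gcd_dvd_left _ _)) ?_
      have h1 : q ∣ d * d' := h.trans (Nat.lcm_dvd_mul _ _)
      have h2 : q ∣ q.gcd d * q.gcd d' := by
        have h3 := Nat.gcd_mul_right_dvd_mul_gcd q d d'
        rwa [Nat.gcd_eq_left h1] at h3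
      refine (hq.dvd_pow_iff_dvd two_ne_zero).1 (h2.trans ?_)
      rw [pow_two]
      exact Nat.mul_dvd_mul (Nat.dvd_lcm_left _ _) (Nat.dvd_lcm_right _ _)
  have hmem : (q.gcd d, q.gcd d') ∈ {p ∈ q.divisors ×ˢ q.divisors | p.1.lcm p.2 = q} ↔
      q ∣ d.lcm d' := by
    simp only [mem_filter, mem_product, Nat.mem_divisors, hgl]
    constructor
    · exact fun h => h.2
    · exact fun h => ⟨⟨⟨Nat.gcd_dvd_left _ _, hq0.ne'⟩, ⟨Nat.gcd_dvd_left _ _, hq0.ne'⟩⟩, h⟩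
  simp only [hmem]
  split_ifs with h
  swap
  · simp
  set g := d.gcd d' with hg
  have hg0 : 0 < g := Nat.gcd_pos_of_pos_left _ hdd.1.1
  have hgsq : Squarefree g := hdd.2.1.squarefree_of_dvd (Nat.gcd_dvd_left _ _)
  obtain ⟨c, hc⟩ : q.gcd g ∣ g := Nat.gcd_dvd_right _ _
  have hc0 : c ≠ 0 := by rintro rfl; simp at hc; omega
  have hcg : c ∣ g := Dvd.intro_left _ hc.symm
  have hsq : Nat.Coprime (q.gcd g) c := by
    have := hgsq; rw [hc] at this; exact Nat.coprime_of_squarefree_mul this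
  have hcq : Nat.Coprime c q := by
    have h1 : q.gcd c ∣ q.gcd g := Nat.gcd_dvd_gcd_of_dvd_right _ hcg
    exact (Nat.eq_one_of_dvd_coprimes hsq h1 (Nat.gcd_dvd_right _ _) : q.gcd c = 1) |>
      fun h => (Nat.coprime_comm.1 h)
  have hset : {e ∈ sieveRange R | Nat.Coprime e q ∧ (e ∣ d ∧ e ∣ d')} = c.divisors := by
    ext e
    simp only [mem_filter, Nat.mem_divisors]
    constructor
    · rintro ⟨_, h2, h3, h4⟩
      refine ⟨?_, hc0⟩
      have h5 : e ∣ q.gcd g * c := hc ▸ Nat.dvd_gcd h3 h4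
      exact (h2.coprime_dvd_right (Nat.gcd_dvd_left _ _)).dvd_of_dvd_mul_left h5
    · rintro ⟨h2, _⟩
      have h3 := h2.trans hcg
      exact ⟨sieveRange_of_dvd hd (h3.trans (Nat.gcd_dvd_left _ _)), hcq.coprime_dvd_left h2,
        h3.trans (Nat.gcd_dvd_left _ _), h3.trans (Nat.gcd_dvd_right _ _)⟩
  rw [← sum_filter, filter_filter, hset, ← sum_mul]
  have hsum : ∑ e ∈ c.divisors, (φ e : ℝ) = c := by exact_mod_cast Nat.sum_totient c
  rw [hsum]
  have e1 : (q.gcd g : ℝ) * c = g := by exact_mod_cast hc.symm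
  have e2 : (q.gcd g : ℝ) * q = q.gcd d * q.gcd d' := by
    have h6 : (q.gcd d).gcd (q.gcd d') = q.gcd g := by
      refine Nat.dvd_antisymm ?_ ?_
      · exact Nat.dvd_gcd ((Nat.gcd_dvd_left _ _).trans (Nat.gcd_dvd_left _ _))
          (Nat.dvd_gcd ((Nat.gcd_dvd_left _ _).trans (Nat.gcd_dvd_right _ _))
            ((Nat.gcd_dvd_right _ _).trans (Nat.gcd_dvd_right _ _)))
      · exact Nat.dvd_gcd (Nat.gcd_dvd_gcd_of_dvd_right _ (Nat.gcd_dvd_left _ _))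
          (Nat.gcd_dvd_gcd_of_dvd_right _ (Nat.gcd_dvd_right _ _))
    have := Nat.gcd_mul_lcm (q.gcd d) (q.gcd d')
    rw [h6, hgl.2 h] at this
    exact_mod_cast this
  have e3 : (g : ℝ) * (d.lcm d' : ℕ) = d * d' := by exact_mod_cast Nat.gcd_mul_lcm d d'
  have p1 : (0 : ℝ) < d := by exact_mod_cast hdd.1.1
  have p2 : (0 : ℝ) < d' := by exact_mod_cast hdd'.1.1
  have p3 : (0 : ℝ) < q := by exact_mod_cast hq0
  have p4 : (0 : ℝ) < (d.lcm d' : ℕ) := by exact_mod_cast Nat.lcm_pos hdd.1.1 hdd'.1.1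
  have p5 : (0 : ℝ) < q.gcd g := by exact_mod_cast Nat.gcd_pos_of_pos_left _ hq0
  have e4 : (c : ℝ) * (q.gcd d * q.gcd d') * (d.lcm d' : ℕ) = q * (d * d') := by
    rw [← e2, ← e3, ← e1]; ring
  have e5 : 1 / (q : ℝ) * (c * (q.gcd d / d * (q.gcd d' / d'))) = 1 / (d.lcm d' : ℕ) := by
    field_simp
    linarith [e4]
  calc lam R d * lam R d' / (d.lcm d' : ℕ) = lam R d * lam R d' * (1 / (d.lcm d' : ℕ)) := by ring
    _ = _ := by rw [← e5]; ring

lemma selW_one {R : ℕ} (hR : 1 ≤ R) : selW R 1 = 1 / selL R := by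
  have hL := selL_pos hR
  have hz : ∀ e ∈ sieveRange R, selZ R 1 1 e = μ e / (φ e * selL R) := by
    intro e he
    rw [selZ_eq (dvd_refl 1) (Nat.coprime_one_right e)]
    have : ∀ r ∈ sieveRange R, 1 / (φ r : ℝ) *
        (if 1 ∣ r ∧ r = e * Nat.gcd 1 r then (μ 1 : ℝ) * μ e else 0) =
        if e = r then μ e / (φ e : ℝ) else 0 := by
      intro r _
      simp only [one_dvd, Nat.gcd_one_left, mul_one, true_and]
      by_cases h : e = r
      · subst h; simp; ring
      · simp [h, Ne.symm h]
    rw [sum_congr rfl this, sum_ite_eq, if_pos he]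
    field_simp
    simp
  rw [selW_eq squarefree_one]
  have hp : {p ∈ (1 : ℕ).divisors ×ˢ (1 : ℕ).divisors | p.1.lcm p.2 = 1} = {(1, 1)} := by
    decide
  rw [hp, sum_singleton]
  have : ∀ e ∈ sieveRange R, (φ e : ℝ) * (selZ R 1 1 e * selZ R 1 1 e) =
      1 / (φ e : ℝ) * (1 / selL R ^ 2) := by
    intro e he
    have h1 := mem_sieveRange.1 he
    have h2 : (φ e : ℝ) ≠ 0 := by
      have := Nat.totient_pos.2 h1.1.1
      positivity
    have h3 : (μ e : ℝ) ^ 2 = 1 := by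
      have := moebius_sq_eq_one_of_squarefree h1.2.1
      exact_mod_cast this
    rw [hz e he]
    field_simp
    exact h3
  have hf : {e ∈ sieveRange R | Nat.Coprime e 1} = sieveRange R := by simp
  rw [hf, sum_congr rfl this, ← sum_mul]
  change 1 / ((1 : ℕ) : ℝ) * (selL R * _) = _
  push_cast
  field_simp

/-- The factor `3 ^ ω(q)` counts the pairs `(u, v)` with `[u, v] = q`. -/
lemma abs_selW_le {R q : ℕ} (hR : 1 ≤ R) (hq : Squarefree q) :
    |selW R q| ≤ 3 ^ ω q * q / (φ q ^ 2 * selL R) := by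
  have hL := selL_pos hR
  have hq0 : 0 < q := Nat.pos_of_ne_zero hq.ne_zero
  have hq' : (0 : ℝ) < q := by exact_mod_cast hq0
  have hφq : (0 : ℝ) < φ q := by exact_mod_cast Nat.totient_pos.2 hq0
  rw [selW_eq hq, abs_mul, abs_of_nonneg (by positivity)]
  have h1 : ∀ p ∈ {p ∈ q.divisors ×ˢ q.divisors | p.1.lcm p.2 = q},
      |∑ e ∈ sieveRange R with Nat.Coprime e q, φ e * (selZ R q p.1 e * selZ R q p.2 e)| ≤
      q ^ 2 / (φ q ^ 2 * selL R) := by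
    intro p hp
    simp only [mem_filter, mem_product, Nat.mem_divisors] at hp
    calc _ ≤ ∑ e ∈ sieveRange R with Nat.Coprime e q,
          |φ e * (selZ R q p.1 e * selZ R q p.2 e)| := abs_sum_le_sum_abs _ _
      _ ≤ ∑ e ∈ sieveRange R with Nat.Coprime e q,
          1 / (φ e : ℝ) * (q ^ 2 / (φ q ^ 2 * selL R ^ 2)) := by
        refine sum_le_sum fun e he => ?_
        simp only [mem_filter] at he
        have he0 := (mem_sieveRange.1 he.1).1.1
        have hφe : (0 : ℝ) < φ e := by exact_mod_cast Nat.totient_pos.2 he0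
        have a1 := abs_selZ_le hR hq hp.1.1.1 he.2 he0
        have a2 := abs_selZ_le hR hq hp.1.2.1 he.2 he0
        rw [abs_mul, abs_mul, abs_of_pos hφe]
        calc _ ≤ (φ e : ℝ) * (q / (φ q * φ e * selL R) * (q / (φ q * φ e * selL R))) := by
              gcongr
          _ = _ := by field_simp
      _ ≤ ∑ e ∈ sieveRange R, 1 / (φ e : ℝ) * (q ^ 2 / (φ q ^ 2 * selL R ^ 2)) :=
        sum_le_sum_of_subset_of_nonneg (filter_subset _ _) (fun _ _ _ => by positivity)
      _ = selL R * (q ^ 2 / (φ q ^ 2 * selL R ^ 2)) := by rw [← sum_mul]; rfl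
      _ = _ := by field_simp
  have h2 := (abs_sum_le_sum_abs _ _).trans (sum_le_sum h1)
  rw [sum_const, Nat.card_pair_lcm_eq hq, nsmul_eq_mul] at h2
  calc _ ≤ 1 / (q : ℝ) * (((3 ^ ω q : ℕ) : ℝ) * (q ^ 2 / (φ q ^ 2 * selL R))) :=
        mul_le_mul_of_nonneg_left h2 (by positivity)
    _ = _ := by push_cast; field_simp

/-! ### The sieve bound for short intervals -/

/-- The sum `B = ∑ σ(r) / φ(r)` over the sieve range, which controls `∑ |λ_d|`. -/
noncomputable def selB (R : ℕ) : ℝ :=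
  ∑ r ∈ sieveRange R, (∑ d ∈ r.divisors, (d : ℝ)) / (φ r : ℝ)

lemma selNu_eq (R m : ℕ) : selNu R m =
    ∑ d ∈ sieveRange R, ∑ d' ∈ sieveRange R,
      if d.lcm d' ∣ m then lam R d * lam R d' else 0 := by
  rw [selNu, pow_two, sum_filter, sum_mul_sum]
  refine sum_congr rfl fun d _ => sum_congr rfl fun d' _ => ?_
  by_cases h1 : d ∣ m <;> by_cases h2 : d' ∣ m <;> simp [h1, h2, Nat.lcm_dvd_iff]

lemma selNu_nonneg (R m : ℕ) : 0 ≤ selNu R m := sq_nonneg _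

lemma selNu_prime {R p : ℕ} (hR : 1 ≤ R) (hp : p.Prime) (h : R < p) : selNu R p = 1 := by
  have : {d ∈ sieveRange R | d ∣ p} = {1} := by
    ext d
    simp only [mem_filter, mem_singleton]
    constructor
    · rintro ⟨h1, h2⟩
      rcases (Nat.dvd_prime hp).1 h2 with h3 | h3
      · exact h3
      · have := (mem_sieveRange.1 h1).1.2
        omega
    · rintro rfl
      exact ⟨one_mem_sieveRange hR, one_dvd _⟩
  rw [selNu, this, sum_singleton, lam_one hR]
  norm_num

lemma sum_abs_lam_le {R : ℕ} (hR : 1 ≤ R) :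
    ∑ d ∈ sieveRange R, |lam R d| ≤ selB R / selL R := by
  have hL := selL_pos hR
  have h1 : ∀ d ∈ sieveRange R, |lam R d| ≤
      ∑ r ∈ sieveRange R, if d ∣ r then (d : ℝ) / φ r * (1 / selL R) else 0 := by
    intro d _
    rw [lam, abs_mul, abs_mul, abs_of_nonneg (a := (d : ℝ) / selL R) (by positivity),
      abs_of_nonneg (a := ∑ r ∈ sieveRange R with d ∣ r, 1 / (φ r : ℝ))
        (sum_nonneg fun _ _ => by positivity)]
    have h2 : |(μ d : ℝ)| ≤ 1 := by exact_mod_cast abs_moebius_le_one (n := d)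
    calc _ ≤ 1 * (d / selL R) * ∑ r ∈ sieveRange R with d ∣ r, 1 / (φ r : ℝ) := by
          gcongr
      _ = _ := by
          rw [sum_filter, mul_sum]
          refine sum_congr rfl fun r _ => ?_
          split_ifs
          · ring
          · simp
  refine (sum_le_sum h1).trans (le_of_eq ?_)
  rw [sum_comm, selB, sum_div]
  refine sum_congr rfl fun r hr => ?_
  have h3 : {d ∈ sieveRange R | d ∣ r} = r.divisors := by
    ext d
    simp only [mem_filter, Nat.mem_divisors]
    constructor
    · rintro ⟨_, h⟩
      exact ⟨h, by have := (mem_sieveRange.1 hr).1.1; omega⟩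
    · rintro ⟨h, _⟩
      exact ⟨sieveRange_of_dvd hr h, h⟩
  rw [← sum_filter, h3, ← sum_mul, sum_div]
  ring

lemma selW_one' (R : ℕ) : selW R 1 = ∑ d ∈ sieveRange R, ∑ d' ∈ sieveRange R,
    lam R d * lam R d' / (d.lcm d' : ℕ) := by
  simp [selW]

/-- The mean value of the sieve majorant on the integers of an interval coprime to `30`. -/
lemma sum_selNu_interval_le {R : ℕ} (hR : 1 ≤ R) (a N : ℕ) :
    ∑ m ∈ Ioc a (a + N) with Nat.Coprime m 30, selNu R m ≤
      4 / 15 * N / selL R + 28 / 15 * (selB R / selL R) ^ 2 := by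
  have h1 : ∑ m ∈ Ioc a (a + N) with Nat.Coprime m 30, selNu R m =
      ∑ d ∈ sieveRange R, ∑ d' ∈ sieveRange R, lam R d * lam R d' *
        #{m ∈ Ioc a (a + N) | d.lcm d' ∣ m ∧ Nat.Coprime m 30} := by
    simp only [selNu_eq]
    rw [sum_comm]
    refine sum_congr rfl fun d _ => ?_
    rw [sum_comm]
    refine sum_congr rfl fun d' _ => ?_
    rw [← sum_filter, sum_const, filter_filter, nsmul_eq_mul, mul_comm]
    congr 4
    ext m
    exact and_comm
  have h2 : ∀ d ∈ sieveRange R, ∀ d' ∈ sieveRange R, lam R d * lam R d' *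
        (#{m ∈ Ioc a (a + N) | d.lcm d' ∣ m ∧ Nat.Coprime m 30} : ℝ) ≤
      4 / 15 * N * (lam R d * lam R d' / (d.lcm d' : ℕ)) + 28 / 15 * (|lam R d| * |lam R d'|) := by
    intro d hd d' hd'
    have hdd := mem_sieveRange.1 hd
    have hdd' := mem_sieveRange.1 hd'
    have h0 : 0 < d.lcm d' := Nat.lcm_pos hdd.1.1 hdd'.1.1
    have hc : Nat.Coprime (d.lcm d') 30 :=
      (Nat.Coprime.mul_left hdd.2.2 hdd'.2.2).coprime_dvd_left (Nat.lcm_dvd_mul _ _)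
    have h3 := card_multiples_interval (d.lcm d') a N h0 hc
    set c : ℝ := (#{m ∈ Ioc a (a + N) | d.lcm d' ∣ m ∧ Nat.Coprime m 30} : ℝ)
    have h4 : lam R d * lam R d' * (c - 4 / 15 * (N / (d.lcm d' : ℕ))) ≤
        |lam R d| * |lam R d'| * (28 / 15) := by
      refine (le_abs_self _).trans ?_
      rw [abs_mul, abs_mul]
      gcongr
    have h5 : lam R d * lam R d' * (4 / 15 * (N / (d.lcm d' : ℕ) : ℝ)) =
      4 / 15 * N * (lam R d * lam R d' / (d.lcm d' : ℕ)) := by ring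
    linarith
  rw [h1]
  calc _ ≤ ∑ d ∈ sieveRange R, ∑ d' ∈ sieveRange R,
        (4 / 15 * N * (lam R d * lam R d' / (d.lcm d' : ℕ))
          + 28 / 15 * (|lam R d| * |lam R d'|)) :=
        sum_le_sum fun d hd => sum_le_sum fun d' hd' => h2 d hd d' hd'
    _ = 4 / 15 * N * selW R 1 + 28 / 15 * (∑ d ∈ sieveRange R, |lam R d|) ^ 2 := by
        rw [selW_one', pow_two, sum_mul_sum]
        simp only [sum_add_distrib, mul_sum]
    _ ≤ _ := by
        rw [selW_one hR]
        have := sum_abs_lam_le hR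
        have h0 : 0 ≤ ∑ d ∈ sieveRange R, |lam R d| := sum_nonneg fun _ _ => abs_nonneg _
        have : (∑ d ∈ sieveRange R, |lam R d|) ^ 2 ≤ (selB R / selL R) ^ 2 := by gcongr
        have e : 4 / 15 * (N : ℝ) * (1 / selL R) = 4 / 15 * N / selL R := by ring
        rw [e]
        linarith

lemma coprime_thirty_of_prime {p : ℕ} (hp : p.Prime) (h : 5 < p) : Nat.Coprime p 30 := by
  rw [Nat.Prime.coprime_iff_not_dvd hp]
  intro h2
  have h3 : (30 : ℕ) = 2 * (3 * 5) := by norm_num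
  rw [h3, hp.dvd_mul, hp.dvd_mul] at h2
  rcases h2 with h2 | h2 | h2 <;> have := Nat.le_of_dvd (by norm_num) h2 <;> omega

/-- Selberg's upper bound for the number of primes in an interval of length `N`. -/
lemma card_primes_interval_le {R : ℕ} (hR : 1 ≤ R) (a N : ℕ) :
    (#{p ∈ Ioc a (a + N) | p.Prime ∧ R < p ∧ 5 < p} : ℝ) ≤
      4 / 15 * N / selL R + 28 / 15 * (selB R / selL R) ^ 2 := by
  refine le_trans ?_ (sum_selNu_interval_le hR a N)
  rw [card_eq_sum_ones]
  push_cast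
  calc _ = ∑ p ∈ Ioc a (a + N) with p.Prime ∧ R < p ∧ 5 < p, selNu R p := by
        refine sum_congr rfl fun p hp => ?_
        simp only [mem_filter] at hp
        exact (selNu_prime hR hp.2.1 hp.2.2.1).symm
    _ ≤ _ := by
        refine sum_le_sum_of_subset_of_nonneg ?_ fun m _ _ => selNu_nonneg R m
        intro p hp
        simp only [mem_filter] at hp ⊢
        exact ⟨hp.1, coprime_thirty_of_prime hp.2.1 hp.2.2.2⟩

/-! ### Sums over the sieve range -/

lemma sum_divisors_prod_primeFactors {r : ℕ} (hr : Squarefree r) (h : ℕ → ℝ) :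
    ∑ d ∈ r.divisors, ∏ p ∈ d.primeFactors, h p = ∏ p ∈ r.primeFactors, (1 + h p) := by
  have h1 := (IsMultiplicative.prodPrimeFactors h).prodPrimeFactors_one_add_of_squarefree hr
  have h2 : ∏ p ∈ r.primeFactors, (1 + h p) =
      ∏ p ∈ r.primeFactors, (1 + prodPrimeFactors h p) := by
    refine prod_congr rfl fun p hp => ?_
    have hp' := Nat.prime_of_mem_primeFactors hp
    rw [prodPrimeFactors_apply hp'.ne_zero, hp'.primeFactors, prod_singleton]
  rw [h2, h1]
  refine sum_congr rfl fun d hd => ?_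
  rw [prodPrimeFactors_apply (Nat.pos_of_mem_divisors hd).ne']

lemma totient_eq_prod {r : ℕ} (hr : Squarefree r) :
    (φ r : ℝ) = ∏ p ∈ r.primeFactors, ((p : ℝ) - 1) := by
  have h1 := Nat.totient_mul_prod_primeFactors r
  rw [Nat.prod_primeFactors_of_squarefree hr, mul_comm] at h1
  have h2 := Nat.eq_of_mul_eq_mul_left (Nat.pos_of_ne_zero hr.ne_zero) h1
  rw [h2, Nat.cast_prod]
  refine prod_congr rfl fun p hp => ?_
  rw [Nat.cast_sub (Nat.prime_of_mem_primeFactors hp).one_le]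
  simp

lemma cast_eq_prod {r : ℕ} (hr : Squarefree r) :
    (r : ℝ) = ∏ p ∈ r.primeFactors, (p : ℝ) := by
  conv_lhs => rw [← Nat.prod_primeFactors_of_squarefree hr]
  push_cast; rfl

/-- The primes `7 ≤ p ≤ R`. -/
def sievePrimes (R : ℕ) : Finset ℕ := {p ∈ Icc 7 R | p.Prime}

lemma primeFactors_subset {R d : ℕ} (hd : d ∈ sieveRange R) : d.primeFactors ⊆ sievePrimes R := by
  intro p hp
  have h := mem_sieveRange.1 hd
  have hpp := Nat.prime_of_mem_primeFactors hp
  have hpd := Nat.dvd_of_mem_primeFactors hp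
  have hle := Nat.le_of_dvd h.1.1 hpd
  have hc : Nat.Coprime p 30 := h.2.2.coprime_dvd_left hpd
  simp only [sievePrimes, mem_filter, mem_Icc]
  refine ⟨⟨?_, hle.trans h.1.2⟩, hpp⟩
  by_contra hlt
  push Not at hlt
  interval_cases p <;> revert hc hpp <;> decide

/-- A sum of a nonnegative multiplicative function over the sieve range is at most its Euler
product. -/
lemma sum_sieveRange_le_prod (R : ℕ) (h : ℕ → ℝ) (h0 : ∀ p, 0 ≤ h p) :
    ∑ d ∈ sieveRange R, ∏ p ∈ d.primeFactors, h p ≤ ∏ p ∈ sievePrimes R, (1 + h p) := by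
  rw [prod_one_add]
  have hinj : Set.InjOn Nat.primeFactors (sieveRange R) := by
    intro a ha b hb hab
    have h1 := (mem_sieveRange.1 ha).2.1
    have h2 := (mem_sieveRange.1 hb).2.1
    rw [← Nat.prod_primeFactors_of_squarefree h1, ← Nat.prod_primeFactors_of_squarefree h2, hab]
  rw [← sum_image (f := fun t => ∏ p ∈ t, h p) hinj]
  refine sum_le_sum_of_subset_of_nonneg ?_ fun t _ _ => prod_nonneg fun p _ => h0 p
  intro t ht
  obtain ⟨d, hd, rfl⟩ := mem_image.1 ht
  exact mem_powerset.2 (primeFactors_subset hd)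

/-- The integers with the same prime factors as the squarefree number `r` have reciprocals
adding up to at most `1 / φ(r)`. -/
lemma sum_inv_radical_le {r : ℕ} (hr : Squarefree r) (S : Finset ℕ)
    (hS : ∀ m ∈ S, m ≠ 0 ∧ m.primeFactors = r.primeFactors) :
    ∑ m ∈ S, 1 / (m : ℝ) ≤ 1 / (φ r : ℝ) := by
  let f : ℕ →* ℝ := (Nat.castRingHom ℝ : ℕ →* ℝ).comp (MonoidHom.id ℕ) |> fun g =>
    { toFun := fun m => (g m)⁻¹, map_one' := by simp, map_mul' := by intro a b; simp [mul_comm] }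
  have hf : ∀ m : ℕ, f m = (m : ℝ)⁻¹ := fun m => rfl
  obtain ⟨h1, h2⟩ := EulerProduct.summable_and_hasSum_factoredNumbers_prod_filter_prime_geometric
    (f := f) (by
      intro p hp
      rw [hf, norm_inv, Real.norm_natCast]
      exact inv_lt_one_of_one_lt₀ (by exact_mod_cast hp.one_lt)) r.primeFactors
  have hr0 : (0 : ℝ) < r := by exact_mod_cast Nat.pos_of_ne_zero hr.ne_zero
  have hprod : ∏ p ∈ r.primeFactors with p.Prime, (1 - f p)⁻¹ = r / φ r := by
    rw [filter_true_of_mem fun p hp => Nat.prime_of_mem_primeFactors hp, totient_eq_prod hr]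
    conv_rhs => rw [cast_eq_prod hr]
    rw [← prod_div_distrib]
    refine prod_congr rfl fun p hp => ?_
    have hp2 : (1 : ℝ) < p := by exact_mod_cast (Nat.prime_of_mem_primeFactors hp).one_lt
    have : (p : ℝ) - 1 ≠ 0 := by linarith
    rw [hf]
    field_simp
  rw [hprod] at h2
  have hdvd : ∀ m ∈ S, r ∣ m := fun m hm => by
    rw [← Nat.prod_primeFactors_of_squarefree hr, ← (hS m hm).2]
    exact Nat.prod_primeFactors_dvd m
  have hmem : ∀ m ∈ S, m / r ∈ Nat.factoredNumbers r.primeFactors := fun m hm => by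
    rw [Nat.mem_factoredNumbers_iff_primeFactors_subset]
    have hd := Nat.div_dvd_of_dvd (hdvd m hm)
    have h0 : m / r ≠ 0 := fun h => by
      rw [h] at hd; exact (hS m hm).1 (Nat.eq_zero_of_zero_dvd hd)
    exact ⟨h0, (hS m hm).2 ▸ Nat.primeFactors_mono hd (hS m hm).1⟩
  have h3 : ∑ m ∈ S.attach, f (m.1 / r) ≤ r / φ r := by
    let g : {x // x ∈ S} → Nat.factoredNumbers r.primeFactors := fun m => ⟨m.1 / r, hmem m.1 m.2⟩
    have hg : Function.Injective g := by
      intro a b hab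
      have : a.1 / r = b.1 / r := congrArg Subtype.val hab
      apply Subtype.ext
      rw [← Nat.div_mul_cancel (hdvd a.1 a.2), this, Nat.div_mul_cancel (hdvd b.1 b.2)]
    have h4 := sum_le_hasSum (S.attach.map ⟨g, hg⟩)
      (fun i _ => by rw [hf]; positivity) h2
    rw [sum_map] at h4
    exact h4
  rw [sum_attach S (fun m => f (m / r))] at h3
  have h5 : ∀ m ∈ S, 1 / (m : ℝ) = 1 / r * f (m / r) := by
    intro m hm
    rw [hf, Nat.cast_div (hdvd m hm) hr0.ne']
    field_simp
  rw [sum_congr rfl h5, ← mul_sum]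
  calc 1 / (r : ℝ) * ∑ m ∈ S, f (m / r) ≤ 1 / r * (r / φ r) := by gcongr
    _ = 1 / φ r := by field_simp

/-- Grouping the integers `m ≤ R` by their radical. -/
lemma sum_inv_le_selL (R : ℕ) :
    ∑ m ∈ Ioc 0 R with Nat.Coprime m 30, 1 / (m : ℝ) ≤ selL R := by
  rw [selL, ← sum_fiberwise_of_maps_to (t := sieveRange R) (g := fun m => ∏ p ∈ m.primeFactors, p)]
  · refine sum_le_sum fun r hr => sum_inv_radical_le (mem_sieveRange.1 hr).2.1 _ ?_
    intro m hm
    simp only [mem_filter, mem_Ioc] at hm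
    refine ⟨by omega, ?_⟩
    rw [← hm.2, Nat.primeFactors_prod_primeFactors]
  · intro m hm
    simp only [mem_filter, mem_Ioc] at hm
    have hd := Nat.prod_primeFactors_dvd m
    rw [mem_sieveRange]
    refine ⟨⟨Nat.pos_of_dvd_of_pos hd hm.1.1, (Nat.le_of_dvd hm.1.1 hd).trans hm.1.2⟩, ?_,
      hm.2.coprime_dvd_left hd⟩
    rw [← Nat.radical_eq_prod_primeFactors]
    exact UniqueFactorizationMonoid.squarefree_radical

/-- The sum of `1 / m` over the integers `m ≤ t` coprime to `30`. -/
noncomputable def wheelInv (t : ℕ) : ℝ := ∑ m ∈ Ioc 0 t with Nat.Coprime m 30, 1 / (m : ℝ)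

lemma sum_coprime_succ (g : ℕ → ℝ) (t : ℕ) :
    ∑ m ∈ Ioc 0 (t + 1) with Nat.Coprime m 30, g m =
      (∑ m ∈ Ioc 0 t with Nat.Coprime m 30, g m) +
        (if Nat.Coprime (t + 1) 30 then 1 else 0) * g (t + 1) := by
  rw [sum_filter, sum_filter, ← Finset.insert_Ioc_right_eq_Ioc_add_one (by omega),
    sum_insert (by simp), add_comm]
  congr 1
  split_ifs <;> simp

/-- Partial summation against the lower bound `15 W(t) ≥ 4 t - 10` of `wheel_bounds`, started
at `T`. -/
lemma wheelInv_ge {T R : ℕ} (hT : 1 ≤ T) (hR : T ≤ R) (K : ℝ)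
    (hK : K + wheel T / T + 4 / 15 * Real.log (T + 1) + 2 / 3 / T ≤ wheelInv T) :
    K + wheel R / R + 4 / 15 * Real.log (R + 1) + 2 / 3 / R ≤ wheelInv R := by
  induction R, hR using Nat.le_induction with
  | base => exact hK
  | succ R hR ih =>
    have hR0 : (0 : ℝ) < R := by exact_mod_cast (by omega : 0 < R)
    have h1 := sum_coprime_succ (fun m => 1 / (m : ℝ)) R
    rw [wheelInv] at ih ⊢
    rw [h1]
    have h2 : (wheel (R + 1) : ℝ) = wheel R + if Nat.Coprime (R + 1) 30 then 1 else 0 := by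
      rw [wheel_succ]; push_cast; rfl
    have h3 : (4 : ℝ) * (R + 1) ≤ 15 * wheel R + 14 := by exact_mod_cast (wheel_bounds R).2
    have h4 : Real.log (R + 1 + 1) ≤ Real.log (R + 1) + 1 / (R + 1) := by
      have h5 : Real.log ((R + 1 + 1) / (R + 1)) ≤ (R + 1 + 1) / (R + 1) - 1 :=
        Real.log_le_sub_one_of_pos (by positivity)
      rw [Real.log_div (by positivity) (by positivity)] at h5
      have : ((R : ℝ) + 1 + 1) / (R + 1) - 1 = 1 / (R + 1) := by field_simp; ring
      linarith
    rw [h2]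
    push_cast
    generalize (if Nat.Coprime (R + 1) 30 then (1 : ℝ) else 0) = δ
    have h6 : (wheel R : ℝ) / (R + 1) + 4 / 15 * (1 / (R + 1)) + 2 / 3 / (R + 1) ≤
        wheel R / R + 2 / 3 / R := by
      have e1 : (wheel R : ℝ) / (R + 1) + 4 / 15 * (1 / (R + 1)) + 2 / 3 / (R + 1) =
          (wheel R + 14 / 15) / (R + 1) := by ring
      rw [e1, ← add_div, div_le_div_iff₀ (by positivity) (by positivity)]
      linarith
    have h8 : (wheel R + δ) / ((R : ℝ) + 1) = wheel R / (R + 1) + δ * (1 / (R + 1)) := by ring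
    rw [h8]
    linarith

lemma selL_ge_of {T R : ℕ} (hT : 1 ≤ T) (hR : T ≤ R) (K : ℝ)
    (hK : K + wheel T / T + 4 / 15 * Real.log (T + 1) + 2 / 3 / T ≤ wheelInv T) :
    4 / 15 * (Real.log (R + 1) + 1 + 15 / 4 * K) ≤ selL R := by
  have h1 := wheelInv_ge hT hR K hK
  have h2 : wheelInv R ≤ selL R := sum_inv_le_selL R
  have hR0 : (0 : ℝ) < R := by exact_mod_cast (by omega : 0 < R)
  have h3 : (4 : ℝ) * (R + 1) ≤ 15 * wheel R + 14 := by exact_mod_cast (wheel_bounds R).2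
  have h4 : 4 / 15 ≤ (wheel R : ℝ) / R + 2 / 3 / R := by
    rw [← add_div, le_div_iff₀ hR0]
    linarith
  linarith

/-- A decimal lower bound for `wheelInv`, by rounding down each term. -/
lemma wheelInv_ge_div (t : ℕ) :
    ((∑ m ∈ Ioc 0 t, if Nat.gcd m 30 = 1 then 10 ^ 9 / m else 0 : ℕ) : ℝ) / 10 ^ 9 ≤
      wheelInv t := by
  rw [wheelInv, div_le_iff₀ (by positivity), sum_filter, sum_mul]
  push_cast
  refine sum_le_sum fun m hm => ?_
  simp only [Nat.coprime_iff_gcd_eq_one]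
  split_ifs
  · have := Nat.cast_div_le (α := ℝ) (m := 10 ^ 9) (n := m)
    push_cast at this
    rw [one_div_mul_eq_div]
    exact this.trans_eq (by norm_num)
  · simp

lemma selL_ge_80 {R : ℕ} (hR : 80 ≤ R) : 4 / 15 * (Real.log (R + 1) + 2.177) ≤ selL R := by
  have h := wheelInv_ge_div 80
  have h1 : ∑ m ∈ Ioc 0 80, (if Nat.gcd m 30 = 1 then 10 ^ 9 / m else 0) = 1769285605 := by
    decide +kernel
  have h2 : wheel 80 = 22 := by unfold wheel; decide +kernel
  rw [h1] at h
  have h3 : Real.log ((80 : ℕ) + 1) = 4 * Real.log 3 := by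
    rw [← Real.log_rpow (by norm_num)]; norm_num
  have h4 := Real.log_three_lt_d9
  refine le_trans ?_ (selL_ge_of (T := 80) (by norm_num) hR (1.177 * 4 / 15) ?_)
  · apply le_of_eq; ring
  · refine le_trans ?_ h
    rw [h2, h3]
    norm_num
    linarith

lemma selL_ge_239 {R : ℕ} (hR : 239 ≤ R) : 4 / 15 * (Real.log (R + 1) + 2.207) ≤ selL R := by
  have h := wheelInv_ge_div 239
  have h1 : ∑ m ∈ Ioc 0 239, (if Nat.gcd m 30 = 1 then 10 ^ 9 / m else 0) = 2054056119 := by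
    decide +kernel
  have h2 : wheel 239 = 64 := by unfold wheel; decide +kernel
  rw [h1] at h
  have h3 : Real.log ((239 : ℕ) + 1) = 4 * Real.log 2 + Real.log 3 + Real.log 5 := by
    rw [← Real.log_rpow (by norm_num), ← Real.log_mul (by norm_num) (by norm_num),
      ← Real.log_mul (by norm_num) (by norm_num)]; norm_num
  have h4 := Real.log_three_lt_d9
  have h5 := Real.log_two_lt_d9
  have h6 := Real.log_five_lt_d9
  refine le_trans ?_ (selL_ge_of (T := 239) (by norm_num) hR (1.207 * 4 / 15) ?_)
  · apply le_of_eq; ring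
  · refine le_trans ?_ h
    rw [h2, h3]
    norm_num
    linarith

lemma selB_eq (R : ℕ) : selB R =
    ∑ d ∈ sieveRange R, (∏ p ∈ d.primeFactors, 2 / ((p : ℝ) - 1)) *
      #{r ∈ sieveRange R | d ∣ r} := by
  have h1 : ∀ r ∈ sieveRange R, (∑ d ∈ r.divisors, (d : ℝ)) / (φ r : ℝ) =
      ∑ d ∈ sieveRange R, if d ∣ r then ∏ p ∈ d.primeFactors, 2 / ((p : ℝ) - 1) else 0 := by
    intro r hr
    have hsq := (mem_sieveRange.1 hr).2.1
    have h3 : {d ∈ sieveRange R | d ∣ r} = r.divisors := by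
      ext d
      simp only [mem_filter, Nat.mem_divisors]
      constructor
      · rintro ⟨_, h⟩
        exact ⟨h, by have := (mem_sieveRange.1 hr).1.1; omega⟩
      · rintro ⟨h, _⟩
        exact ⟨sieveRange_of_dvd hr h, h⟩
    rw [← sum_filter, h3, sum_divisors_prod_primeFactors hsq, totient_eq_prod hsq]
    have h4 : ∑ d ∈ r.divisors, (d : ℝ) = ∑ d ∈ r.divisors, ∏ p ∈ d.primeFactors, (p : ℝ) :=
      sum_congr rfl fun d hd =>
        cast_eq_prod (hsq.squarefree_of_dvd (Nat.dvd_of_mem_divisors hd))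
    rw [h4, sum_divisors_prod_primeFactors hsq, ← prod_div_distrib]
    refine prod_congr rfl fun p hp => ?_
    have hp2 : (1 : ℝ) < p := by exact_mod_cast (Nat.prime_of_mem_primeFactors hp).one_lt
    have : (p : ℝ) - 1 ≠ 0 := by linarith
    field_simp
    ring
  rw [selB, sum_congr rfl h1, sum_comm]
  refine sum_congr rfl fun d _ => ?_
  rw [← sum_filter, sum_const, nsmul_eq_mul, mul_comm]

lemma sum_inv_sqrt_le (R : ℕ) (hR : 1 ≤ R) :
    ∑ m ∈ Ioc 0 R with Nat.Coprime m 30, 1 / √(m : ℝ) ≤ 8 / 15 * √(R : ℝ) + 14 / 15 := by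
  have key : ∑ m ∈ Ioc 0 R with Nat.Coprime m 30, 1 / √(m : ℝ) ≤
      (wheel R - (4 * R + 14) / 15) / √(R : ℝ) + 8 / 15 * √(R : ℝ) + 14 / 15 := by
    induction R, hR using Nat.le_induction with
    | base =>
      have h2 : wheel 1 = 1 := by unfold wheel; decide +kernel
      have h3 : {m ∈ Ioc 0 1 | Nat.Coprime m 30} = {1} := by decide +kernel
      rw [h2, h3]
      norm_num
    | succ R hR ih =>
      have hR0 : (0 : ℝ) < R := by exact_mod_cast (by omega : 0 < R)
      rw [sum_coprime_succ]
      have h2 : (wheel (R + 1) : ℝ) = wheel R + if Nat.Coprime (R + 1) 30 then 1 else 0 := by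
        rw [wheel_succ]; push_cast; rfl
      have h3 : (15 : ℝ) * wheel R ≤ 4 * R + 14 := by exact_mod_cast (wheel_bounds R).1
      rw [h2]
      push_cast
      generalize (if Nat.Coprime (R + 1) 30 then (1 : ℝ) else 0) = δ
      set s := √(R : ℝ) with hs
      set t := √((R : ℝ) + 1) with ht
      have hs0 : 0 < s := Real.sqrt_pos.2 hR0
      have ht0 : 0 < t := Real.sqrt_pos.2 (by positivity)
      have hst : s ≤ t := Real.sqrt_le_sqrt (by linarith)
      have hs2 : s ^ 2 = R := Real.sq_sqrt hR0.le
      have ht2 : t ^ 2 = R + 1 := Real.sq_sqrt (by positivity)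
      have e1 : (wheel R + δ - (4 * (R + 1) + 14) / 15) / t =
          (wheel R - (4 * R + 14) / 15) * (1 / t) - 4 / 15 * (1 / t) + δ * (1 / t) := by ring
      have e2 : (wheel R - (4 * R + 14) / 15) / s =
          (wheel R - (4 * (R : ℝ) + 14) / 15) * (1 / s) := by ring
      rw [e1]
      rw [e2] at ih
      have h5 : (wheel R - (4 * (R : ℝ) + 14) / 15) * (1 / s) ≤
          (wheel R - (4 * (R : ℝ) + 14) / 15) * (1 / t) := by
        apply mul_le_mul_of_nonpos_left
        · gcongr
        · linarith
      have h6 : 1 / t ≤ 2 * (t - s) := by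
        rw [div_le_iff₀ ht0]
        nlinarith
      linarith
  have h3 : (15 : ℝ) * wheel R ≤ 4 * R + 14 := by exact_mod_cast (wheel_bounds R).1
  have h4 : (wheel R - (4 * (R : ℝ) + 14) / 15) / √(R : ℝ) ≤ 0 :=
    div_nonpos_of_nonpos_of_nonneg (by linarith) (Real.sqrt_nonneg _)
  linarith

lemma seven_le_of_mem_primeFactors {R d p : ℕ} (hd : d ∈ sieveRange R) (hp : p ∈ d.primeFactors) :
    7 ≤ p := by
  have := primeFactors_subset hd hp
  simp only [sievePrimes, mem_filter, mem_Icc] at this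
  exact this.1.1

lemma prod_two_div_le {R d : ℕ} (hd : d ∈ sieveRange R) :
    ∏ p ∈ d.primeFactors, 2 / ((p : ℝ) - 1) ≤ 1 / √(d : ℝ) := by
  have hsq := (mem_sieveRange.1 hd).2.1
  have h1 : 1 / √(d : ℝ) = ∏ p ∈ d.primeFactors, 1 / √(p : ℝ) := by
    rw [prod_div_distrib, prod_const_one, cast_eq_prod hsq, Real.sqrt_prod]
    exact fun p _ => Nat.cast_nonneg p
  rw [h1]
  refine prod_le_prod (fun p hp => ?_) fun p hp => ?_
  · have h7 : (7 : ℝ) ≤ p := by exact_mod_cast seven_le_of_mem_primeFactors hd hp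
    exact div_nonneg (by norm_num) (by linarith)
  · have h7 : (7 : ℝ) ≤ p := by exact_mod_cast seven_le_of_mem_primeFactors hd hp
    rw [div_le_div_iff₀ (by linarith) (Real.sqrt_pos.2 (by linarith)), one_mul]
    have h2 : 2 * √(p : ℝ) = √(4 * p) := by
      rw [Real.sqrt_mul (by norm_num)]
      congr 1
      rw [show (4 : ℝ) = 2 ^ 2 by norm_num, Real.sqrt_sq (by norm_num)]
    rw [h2]
    apply Real.sqrt_le_iff.2 ⟨by linarith, by nlinarith⟩

/-- The primes beyond `31` are treated as if they were all the odd numbers. -/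
lemma prod_sievePrimes_le (R : ℕ) :
    ∏ p ∈ sievePrimes R, (1 + 2 / ((p : ℝ) * (p - 1))) ≤ 1.137 := by
  have hnn : ∀ p ∈ sievePrimes R, (0 : ℝ) ≤ 2 / ((p : ℝ) * (p - 1)) := by
    intro p hp
    simp only [sievePrimes, mem_filter, mem_Icc] at hp
    have h7 : (7 : ℝ) ≤ p := by exact_mod_cast hp.1.1
    have : (0 : ℝ) ≤ p - 1 := by linarith
    positivity
  rw [← prod_filter_mul_prod_filter_not (sievePrimes R) (fun p => p ≤ 36)]
  have h1 : ∏ p ∈ sievePrimes R with p ≤ 36, (1 + 2 / ((p : ℝ) * (p - 1))) ≤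
      ∏ p ∈ ({7, 11, 13, 17, 19, 23, 29, 31} : Finset ℕ), (1 + 2 / ((p : ℝ) * (p - 1))) := by
    apply prod_le_prod_of_subset_of_one_le
    · intro p hp
      simp only [sievePrimes, mem_filter, mem_Icc] at hp
      obtain ⟨⟨⟨h1, _⟩, h2⟩, h3⟩ := hp
      interval_cases p <;> first | decide | (revert h2; decide)
    · intro p hp
      simp only [sievePrimes, mem_filter, mem_Icc] at hp
      have h7 : (7 : ℝ) ≤ p := by exact_mod_cast hp.1.1.1
      have h0 : (0 : ℝ) ≤ p - 1 := by linarith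
      positivity
    · intro p hp _
      have h7 : (7 : ℝ) ≤ p := by
        have : 7 ≤ p := by clear * - hp; revert p; decide
        exact_mod_cast this
      have h0 : (0 : ℝ) ≤ p - 1 := by linarith
      have : 0 ≤ 2 / ((p : ℝ) * (p - 1)) := by positivity
      linarith
  have htel : ∀ N : ℕ, 18 ≤ N → ∑ k ∈ Ico 18 N, 2 / ((2 * (k : ℝ) + 1) * (2 * k)) ≤
      1 / 35 - 1 / (2 * N - 1) := by
    intro N hN
    induction N, hN using Nat.le_induction with
    | base => norm_num
    | succ N hN ih =>
      have hN' : (18 : ℝ) ≤ N := by exact_mod_cast hN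
      rw [sum_Ico_succ_top hN]
      push_cast
      have h0 : (0 : ℝ) < 2 * N - 1 := by linarith
      have e : 1 / (2 * (N : ℝ) - 1) - 1 / (2 * (N + 1) - 1) =
          2 / ((2 * N + 1) * (2 * N - 1)) := by
        have : (2 : ℝ) * (N + 1) - 1 ≠ 0 := by linarith
        have h0' := h0.ne'
        field_simp
        ring
      have h2 : 2 / ((2 * (N : ℝ) + 1) * (2 * N)) ≤ 2 / ((2 * N + 1) * (2 * N - 1)) := by
        gcongr
        linarith
      linarith
  have h2 : ∏ p ∈ sievePrimes R with ¬ p ≤ 36, (1 + 2 / ((p : ℝ) * (p - 1))) ≤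
      Real.exp (1 / 35) := by
    calc _ ≤ ∏ p ∈ sievePrimes R with ¬ p ≤ 36, Real.exp (2 / ((p : ℝ) * (p - 1))) := by
          refine prod_le_prod (fun p hp => ?_) fun p hp => ?_
          · have := hnn p (mem_filter.1 hp).1
            linarith
          · rw [add_comm]; exact Real.add_one_le_exp _
      _ = Real.exp (∑ p ∈ sievePrimes R with ¬ p ≤ 36, 2 / ((p : ℝ) * (p - 1))) :=
          (Real.exp_sum _ _).symm
      _ ≤ _ := by
          apply Real.exp_le_exp.2
          have hodd : ∀ p ∈ {p ∈ sievePrimes R | ¬ p ≤ 36}, 37 ≤ p ∧ p ≤ R ∧ p = 2 * (p / 2) + 1 := by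
            intro p hp
            simp only [sievePrimes, mem_filter, mem_Icc] at hp
            have := hp.1.2.eq_two_or_odd
            omega
          have hinj : Set.InjOn (fun p => p / 2) ({p ∈ sievePrimes R | ¬ p ≤ 36} : Finset ℕ) := by
            intro a ha b hb hab
            have h1 := hodd a ha
            have h2 := hodd b hb
            simp only at hab
            omega
          have h3 : ∑ p ∈ sievePrimes R with ¬ p ≤ 36, 2 / ((p : ℝ) * (p - 1)) =
              ∑ k ∈ image (fun p : ℕ => (p / 2 : ℕ)) {p ∈ sievePrimes R | ¬ p ≤ 36},
                2 / ((2 * (k : ℝ) + 1) * (2 * k)) := by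
            rw [sum_image hinj]
            refine sum_congr rfl fun p hp => ?_
            have h1 : (p : ℝ) = 2 * (p / 2 : ℕ) + 1 := by exact_mod_cast (hodd p hp).2.2
            rw [h1]
            ring_nf
          rw [h3]
          have h4 := htel (R + 18) (by omega)
          have h5 : (0 : ℝ) ≤ 1 / (2 * (R + 18 : ℕ) - 1) := by
            push_cast
            have : (0 : ℝ) ≤ 2 * (R + 18) - 1 := by
              have : (0 : ℝ) ≤ R := Nat.cast_nonneg R
              linarith
            positivity
          refine (sum_le_sum_of_subset_of_nonneg ?_ fun k _ _ => by positivity).trans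
            (h4.trans (by linarith))
          intro k hk
          obtain ⟨p, hp, rfl⟩ := mem_image.1 hk
          have := hodd p hp
          simp only [mem_Ico]
          omega
  have h3 : Real.exp (1 / 35) ≤ 1.029 := by
    have := Real.exp_bound' (x := 1 / 35) (by norm_num) (by norm_num) (n := 3) (by norm_num)
    refine this.trans ?_
    norm_num [Finset.sum_range_succ, Nat.factorial]
  calc _ ≤ (∏ p ∈ ({7, 11, 13, 17, 19, 23, 29, 31} : Finset ℕ), (1 + 2 / ((p : ℝ) * (p - 1))))
        * 1.029 := by
        refine mul_le_mul h1 (h2.trans h3) (prod_nonneg fun p hp => ?_) (prod_nonneg fun p hp => ?_)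
        · have := hnn p (mem_filter.1 hp).1
          linarith
        · have h7 : (7 : ℝ) ≤ p := by
            have : 7 ≤ p := by revert p; decide
            exact_mod_cast this
          have h0 : (0 : ℝ) ≤ p - 1 := by linarith
          positivity
    _ ≤ 1.137 := by norm_num

/-- The main term comes from `σ(r) / φ(r) = ∑_{d ∣ r} ∏_{p ∣ d} 2 / (p - 1)` and the count of the
multiples of `d` coprime to `30`, the other two from the discrepancy of that count. -/
lemma selB_le {R : ℕ} (hR : 1 ≤ R) : selB R ≤ 0.3032 * R + 0.498 * √(R : ℝ) + 0.872 := by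
  have hpos : ∀ d ∈ sieveRange R, 0 ≤ ∏ p ∈ d.primeFactors, 2 / ((p : ℝ) - 1) := by
    intro d hd
    refine prod_nonneg fun p hp => ?_
    have h7 : (7 : ℝ) ≤ p := by exact_mod_cast seven_le_of_mem_primeFactors hd hp
    exact div_nonneg (by norm_num) (by linarith)
  have h1 : ∀ d ∈ sieveRange R, (#{r ∈ sieveRange R | d ∣ r} : ℝ) ≤ 4 / 15 * (R / d) + 14 / 15 := by
    intro d hd
    have hdd := mem_sieveRange.1 hd
    have h2 := (abs_le.1 (wheel_div_bounds d R hdd.1.1)).2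
    rw [← card_multiples_le d R hdd.1.1 hdd.2.2] at h2
    have h3 : #{r ∈ sieveRange R | d ∣ r} ≤ #{m ∈ Ioc 0 R | d ∣ m ∧ Nat.Coprime m 30} := by
      apply card_le_card
      intro m hm
      simp only [mem_filter, mem_sieveRange, mem_Ioc] at hm ⊢
      exact ⟨⟨hm.1.1.1, hm.1.1.2⟩, hm.2, hm.1.2.2⟩
    have h4 : (#{r ∈ sieveRange R | d ∣ r} : ℝ) ≤
      #{m ∈ Ioc 0 R | d ∣ m ∧ Nat.Coprime m 30} := by exact_mod_cast h3
    linarith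
  have h2 : ∑ d ∈ sieveRange R, (∏ p ∈ d.primeFactors, 2 / ((p : ℝ) - 1)) * (1 / d) ≤ 1.137 := by
    refine le_trans (le_trans (le_of_eq ?_)
      (sum_sieveRange_le_prod R (fun p => 2 / ((p : ℝ) * (p - 1))) ?_)) (prod_sievePrimes_le R)
    · refine sum_congr rfl fun d hd => ?_
      have e : 1 / (d : ℝ) = ∏ p ∈ d.primeFactors, 1 / (p : ℝ) := by
        rw [prod_div_distrib, prod_const_one, ← cast_eq_prod (mem_sieveRange.1 hd).2.1]
      rw [e, ← prod_mul_distrib]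
      refine prod_congr rfl fun p _ => ?_
      rw [div_mul_div_comm, mul_one, mul_comm (p : ℝ)]
    · intro p
      rcases Nat.eq_zero_or_pos p with rfl | h
      · simp
      · have h0 : (1 : ℝ) ≤ p := by exact_mod_cast h
        have : (0 : ℝ) ≤ p - 1 := by linarith
        positivity
  have h3 : ∑ d ∈ sieveRange R, ∏ p ∈ d.primeFactors, 2 / ((p : ℝ) - 1) ≤
      8 / 15 * √(R : ℝ) + 14 / 15 := by
    refine le_trans (le_trans (sum_le_sum fun d hd => prod_two_div_le hd) ?_)
      (sum_inv_sqrt_le R hR)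
    refine sum_le_sum_of_subset_of_nonneg ?_ fun _ _ _ => by positivity
    intro d hd
    have := mem_sieveRange.1 hd
    simp only [mem_filter, mem_Ioc]
    exact ⟨⟨this.1.1, this.1.2⟩, this.2.2⟩
  rw [selB_eq]
  calc _ ≤ ∑ d ∈ sieveRange R, (∏ p ∈ d.primeFactors, 2 / ((p : ℝ) - 1)) *
        (4 / 15 * (R / d) + 14 / 15) :=
        sum_le_sum fun d hd => mul_le_mul_of_nonneg_left (h1 d hd) (hpos d hd)
    _ = 4 / 15 * R * ∑ d ∈ sieveRange R, (∏ p ∈ d.primeFactors, 2 / ((p : ℝ) - 1)) * (1 / d) +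
        14 / 15 * ∑ d ∈ sieveRange R, ∏ p ∈ d.primeFactors, 2 / ((p : ℝ) - 1) := by
        rw [mul_sum, mul_sum, ← sum_add_distrib]
        refine sum_congr rfl fun d _ => ?_
        ring
    _ ≤ 4 / 15 * R * 1.137 + 14 / 15 * (8 / 15 * √(R : ℝ) + 14 / 15) := by gcongr
    _ ≤ _ := by
        have : (0 : ℝ) ≤ R := Nat.cast_nonneg R
        have := Real.sqrt_nonneg (R : ℝ)
        linarith

lemma sieveRange_one : sieveRange 1 = {1} := by decide +kernel

lemma selL_one : selL 1 = 1 := by simp [selL, sieveRange_one]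

lemma selB_one : selB 1 = 1 := by simp [selB, sieveRange_one]

lemma sieveRange_thirtyone : sieveRange 31 = {1, 7, 11, 13, 17, 19, 23, 29, 31} := by
  ext d
  rw [mem_sieveRange]
  constructor
  · rintro ⟨⟨h1, h2⟩, -, h3⟩
    interval_cases d <;> revert h3 <;> decide +kernel
  · intro h
    simp only [mem_insert, mem_singleton] at h
    rcases h with rfl | rfl | rfl | rfl | rfl | rfl | rfl | rfl | rfl <;>
      exact ⟨by norm_num, by first | exact squarefree_one | (apply Irreducible.squarefree; apply Nat.Prime.prime _ |>.irreducible; norm_num),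
        by norm_num⟩

lemma selL_thirtyone : selL 31 ≥ 1.5825 := by
  rw [selL, sieveRange_thirtyone]
  repeat rw [sum_insert (by decide)]
  rw [sum_singleton]
  simp only [Nat.totient_one, Nat.totient_prime (show Nat.Prime 7 by norm_num),
    Nat.totient_prime (show Nat.Prime 11 by norm_num),
    Nat.totient_prime (show Nat.Prime 13 by norm_num),
    Nat.totient_prime (show Nat.Prime 17 by norm_num),
    Nat.totient_prime (show Nat.Prime 19 by norm_num),
    Nat.totient_prime (show Nat.Prime 23 by norm_num),
    Nat.totient_prime (show Nat.Prime 29 by norm_num),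
    Nat.totient_prime (show Nat.Prime 31 by norm_num)]
  norm_num

lemma selB_thirtyone : selB 31 ≤ 10.166 := by
  rw [selB, sieveRange_thirtyone]
  repeat rw [sum_insert (by decide)]
  rw [sum_singleton]
  simp only [Nat.totient_one, Nat.divisors_one, sum_singleton,
    Nat.totient_prime (show Nat.Prime 7 by norm_num),
    Nat.totient_prime (show Nat.Prime 11 by norm_num),
    Nat.totient_prime (show Nat.Prime 13 by norm_num),
    Nat.totient_prime (show Nat.Prime 17 by norm_num),
    Nat.totient_prime (show Nat.Prime 19 by norm_num),
    Nat.totient_prime (show Nat.Prime 23 by norm_num),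
    Nat.totient_prime (show Nat.Prime 29 by norm_num),
    Nat.totient_prime (show Nat.Prime 31 by norm_num),
    Nat.Prime.sum_divisors (show Nat.Prime 7 by norm_num),
    Nat.Prime.sum_divisors (show Nat.Prime 11 by norm_num),
    Nat.Prime.sum_divisors (show Nat.Prime 13 by norm_num),
    Nat.Prime.sum_divisors (show Nat.Prime 17 by norm_num),
    Nat.Prime.sum_divisors (show Nat.Prime 19 by norm_num),
    Nat.Prime.sum_divisors (show Nat.Prime 23 by norm_num),
    Nat.Prime.sum_divisors (show Nat.Prime 29 by norm_num),
    Nat.Prime.sum_divisors (show Nat.Prime 31 by norm_num)]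
  norm_num

/-! ### Chebyshev's method -/

lemma log_factorial_eq (N : ℕ) :
    Real.log (N !) = ∑ m ∈ Ioc 0 N, vonMangoldt m * ((N / m : ℕ) : ℝ) := by
  have h1 : Real.log (N !) = ∑ k ∈ Ioc 0 N, Real.log k := by
    rw [← Finset.prod_Ico_id_eq_factorial, Nat.cast_prod, Real.log_prod]
    · refine sum_congr ?_ fun _ _ => rfl
      ext k; simp only [mem_Ico, mem_Ioc]; omega
    · intro k hk
      simp only [mem_Ico] at hk
      exact_mod_cast (by omega : k ≠ 0)
  have h2 : ∀ k ∈ Ioc 0 N, Real.log k = ∑ m ∈ Ioc 0 N, if m ∣ k then vonMangoldt m else 0 := by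
    intro k hk
    simp only [mem_Ioc] at hk
    rw [← vonMangoldt_sum, ← sum_filter]
    refine sum_congr ?_ fun _ _ => rfl
    ext m
    simp only [mem_filter, Nat.mem_divisors, mem_Ioc]
    constructor
    · rintro ⟨h, _⟩
      exact ⟨⟨Nat.pos_of_dvd_of_pos h hk.1, (Nat.le_of_dvd hk.1 h).trans hk.2⟩, h⟩
    · rintro ⟨_, h⟩
      exact ⟨h, by omega⟩
  rw [h1, sum_congr rfl h2, sum_comm]
  refine sum_congr rfl fun m _ => ?_
  rw [← sum_filter, sum_const, nsmul_eq_mul, Nat.Ioc_filter_dvd_card_eq_div, mul_comm]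

/-- The same expansion with a longer range and the floor written relative to `x`. -/
lemma log_factorial_div_eq (x d : ℕ) :
    Real.log ((x / d)!) = ∑ m ∈ Ioc 0 x, vonMangoldt m * ((x / m / d : ℕ) : ℝ) := by
  rw [log_factorial_eq]
  have h1 : ∀ m, x / d / m = x / m / d := fun m => by
    rw [Nat.div_div_eq_div_mul, Nat.div_div_eq_div_mul, mul_comm]
  simp only [h1]
  apply sum_subset
  · intro m hm
    simp only [mem_Ioc] at hm ⊢
    exact ⟨hm.1, hm.2.trans (Nat.div_le_self _ _)⟩
  · intro m hm hm'
    simp only [mem_Ioc] at hm hm'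
    rw [← h1, Nat.div_eq_of_lt (by omega)]
    simp

lemma stirling_bounds {N : ℕ} (hN : 1 ≤ N) :
    N * Real.log N - N + 1 ≤ Real.log (N !) ∧
      Real.log (N !) ≤ N * Real.log N - N + 1 + Real.log N := by
  induction N, hN using Nat.le_induction with
  | base => norm_num
  | succ N hN ih =>
    have hN0 : (0 : ℝ) < N := by exact_mod_cast hN
    have hf : (0 : ℝ) < (N ! : ℝ) := by exact_mod_cast Nat.factorial_pos N
    have h1 : Real.log ((N + 1)! : ℕ) = Real.log (N + 1) + Real.log (N !) := by
      rw [Nat.factorial_succ, Nat.cast_mul, Real.log_mul (by positivity) hf.ne']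
      push_cast; rfl
    have h2 : Real.log (N + 1) - Real.log N ≤ 1 / N := by
      rw [← Real.log_div (by positivity) (by positivity)]
      refine (Real.log_le_sub_one_of_pos (by positivity)).trans (le_of_eq ?_)
      field_simp
      ring
    have h3 : 1 / (N + 1 : ℝ) ≤ Real.log (N + 1) - Real.log N := by
      have h4 : Real.log (N / (N + 1)) ≤ N / (N + 1) - 1 :=
        Real.log_le_sub_one_of_pos (by positivity)
      rw [Real.log_div (by positivity) (by positivity)] at h4
      have : (N : ℝ) / (N + 1) - 1 = - (1 / (N + 1)) := by field_simp; ring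
      linarith
    rw [div_le_iff₀ (by positivity)] at h3
    rw [le_div_iff₀ hN0] at h2
    rw [h1]
    push_cast
    constructor <;> nlinarith [ih.1, ih.2]

lemma log_factorial_div_le {x d : ℕ} (hd : 1 ≤ d) (hx : d ≤ x) :
    Real.log ((x / d)!) ≤ (x / d : ℝ) * Real.log (x / d) - x / d + 1 + Real.log (x / d) := by
  have hd0 : (0 : ℝ) < d := by exact_mod_cast hd
  have h1 : 1 ≤ x / d := (Nat.one_le_div_iff hd).2 hx
  have h2 := (stirling_bounds h1).2
  have h3 : ((x / d : ℕ) : ℝ) ≤ x / d := Nat.cast_div_le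
  have h4 : (1 : ℝ) ≤ (x / d : ℕ) := by exact_mod_cast h1
  set M : ℝ := ((x / d : ℕ) : ℝ)
  set y : ℝ := (x / d : ℝ)
  have hM0 : 0 < M := by linarith
  have hy0 : 0 < y := by linarith
  have h5 : Real.log M ≤ Real.log y := Real.log_le_log (by linarith) h3
  -- tangent line of the convex function `t log t - t` at `M`
  have h6 : M * Real.log M - M ≤ y * Real.log y - y := by
    have h7 : Real.log (M / y) ≤ M / y - 1 := Real.log_le_sub_one_of_pos (div_pos hM0 hy0)
    rw [Real.log_div hM0.ne' hy0.ne'] at h7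
    have h8 : y * (Real.log M - Real.log y) ≤ M - y := by
      calc y * (Real.log M - Real.log y) ≤ y * (M / y - 1) := by gcongr
        _ = M - y := by field_simp
    have h9 : 0 ≤ Real.log M := Real.log_nonneg h4
    nlinarith
  linarith

lemma le_log_factorial_div {x d : ℕ} (hd : 1 ≤ d) (hx : d ≤ x) :
    (x / d : ℝ) * Real.log (x / d) - x / d + 1 - Real.log (x / d) ≤ Real.log ((x / d)!) := by
  have hd0 : (0 : ℝ) < d := by exact_mod_cast hd
  have h1 : 1 ≤ x / d := (Nat.one_le_div_iff hd).2 hx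
  have h2 := (stirling_bounds h1).1
  have h3 : ((x / d : ℕ) : ℝ) ≤ x / d := Nat.cast_div_le
  have h3' : (x / d : ℝ) ≤ (x / d : ℕ) + 1 := by
    rw [div_le_iff₀ hd0]
    have := Nat.lt_mul_div_succ x (show 0 < d by omega)
    have h : x ≤ (x / d + 1) * d := by rw [mul_comm]; exact this.le
    exact_mod_cast h
  have h4 : (1 : ℝ) ≤ (x / d : ℕ) := by exact_mod_cast h1
  set M : ℝ := ((x / d : ℕ) : ℝ)
  set y : ℝ := (x / d : ℝ)
  have hM0 : 0 < M := by linarith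
  have hy0 : 0 < y := by linarith
  -- tangent line of the convex function `t log t - t` at `y`
  have h7 : Real.log (y / M) ≤ y / M - 1 := Real.log_le_sub_one_of_pos (div_pos hy0 hM0)
  rw [Real.log_div hy0.ne' hM0.ne'] at h7
  have h8 : M * (Real.log y - Real.log M) ≤ y - M := by
    calc M * (Real.log y - Real.log M) ≤ M * (y / M - 1) := by gcongr
      _ = y - M := by field_simp
  have h9 : 0 ≤ Real.log y := Real.log_nonneg (by linarith)
  nlinarith

lemma psi_natCast (x : ℕ) : Chebyshev.psi x = ∑ m ∈ Ioc 0 x, vonMangoldt m := by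
  rw [Chebyshev.psi, Nat.floor_natCast]

lemma chebyshev_floor_le (u : ℕ) : u + u / 30 ≤ 1 + u / 2 + u / 3 + u / 5 := by omega

lemma log_numerics : (0.92129 : ℝ) ≤
    Real.log 2 / 2 + Real.log 3 / 3 + Real.log 5 / 5 -
      (Real.log 2 + Real.log 3 + Real.log 5) / 30 := by
  have := Real.log_two_gt_d9
  have := Real.log_three_gt_d9
  have := Real.log_five_gt_d9
  linarith

/-- Chebyshev's lower bound, from the integrality of `(30 n)! n! / ((15 n)! (10 n)! (6 n)!)`. -/
lemma psi_ge_chebyshev {x : ℕ} (hx : 30 ≤ x) :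
    0.92129 * x - 4 * Real.log x + 5.8 ≤ Chebyshev.psi x := by
  have hx0 : (30 : ℝ) ≤ x := by exact_mod_cast hx
  have h1 : Real.log ((x / 1)!) + Real.log ((x / 30)!) ≤ Chebyshev.psi x + Real.log ((x / 2)!)
      + Real.log ((x / 3)!) + Real.log ((x / 5)!) := by
    simp only [log_factorial_div_eq]
    rw [psi_natCast, ← sum_add_distrib, ← sum_add_distrib, ← sum_add_distrib, ← sum_add_distrib]
    refine sum_le_sum fun m _ => ?_
    have h2 : ((x / m / 1 : ℕ) : ℝ) + ((x / m / 30 : ℕ) : ℝ) ≤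
        1 + (x / m / 2 : ℕ) + (x / m / 3 : ℕ) + (x / m / 5 : ℕ) := by
      have := chebyshev_floor_le (x / m)
      rw [Nat.div_one]
      exact_mod_cast this
    have h3 : 0 ≤ vonMangoldt m := vonMangoldt_nonneg
    nlinarith [mul_le_mul_of_nonneg_left h2 h3]
  have a1 := (stirling_bounds (N := x) (by omega)).1
  have a2 := log_factorial_div_le (x := x) (d := 2) (by norm_num) (by omega)
  have a3 := log_factorial_div_le (x := x) (d := 3) (by norm_num) (by omega)
  have a5 := log_factorial_div_le (x := x) (d := 5) (by norm_num) (by omega)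
  have a30 := le_log_factorial_div (x := x) (d := 30) (by norm_num) (by omega)
  push_cast at a2 a3 a5 a30
  have l30 : Real.log 30 = Real.log 2 + Real.log 3 + Real.log 5 := by
    rw [← Real.log_mul (by norm_num) (by norm_num), ← Real.log_mul (by norm_num) (by norm_num)]
    norm_num
  rw [Real.log_div (by positivity) (by norm_num)] at a2 a3 a5 a30
  rw [l30] at a30
  rw [Nat.div_one] at h1
  have h4 := log_numerics
  have := Real.log_two_gt_d9
  have := Real.log_three_gt_d9
  have := Real.log_five_gt_d9
  have h5 := mul_le_mul_of_nonneg_right h4 (show (0 : ℝ) ≤ x by linarith)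
  nlinarith

/-! ### Rows of the Sierpiński matrix -/

/-- A Brun–Titchmarsh inequality with sieve level `R ≈ √(N / 5)`. -/
lemma card_primes_interval_le_of {N R : ℕ} {κ β c : ℝ} (hN : 5 ≤ N) (hR : R = Nat.sqrt (N / 5))
    (hL : 4 / 15 * (Real.log (R + 1) + κ) ≤ selL R) (hB : selB R ≤ β * R) (hβ : 0 ≤ β)
    (hc : 5.25 * β ^ 2 ≤ c) (hκ : 0.80472 ≤ κ) (a : ℕ) :
    (#{p ∈ Ioc a (a + N) | p.Prime ∧ R < p ∧ 5 < p} : ℝ) ≤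
      N / (Real.log N / 2 + (κ - 0.80472)) + c * N / (Real.log N / 2 + (κ - 0.80472)) ^ 2 := by
  have hN0 : (5 : ℝ) ≤ N := by exact_mod_cast hN
  have hR1 : 1 ≤ R := by
    rw [hR, Nat.le_sqrt]
    omega
  have hRR : (R : ℝ) ^ 2 * 5 ≤ N := by
    have : R * R ≤ N / 5 := by rw [hR]; exact Nat.sqrt_le _
    have : R ^ 2 * 5 ≤ N := by nlinarith [Nat.div_mul_le_self N 5]
    exact_mod_cast this
  have hRN : (N : ℝ) ≤ 5 * (R + 1) ^ 2 := by
    have h1 : N / 5 < (R + 1) * (R + 1) := by rw [hR]; exact Nat.lt_succ_sqrt _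
    have : N ≤ 5 * (R + 1) ^ 2 := by nlinarith [Nat.div_add_mod N 5, Nat.mod_lt N (show 5 > 0 by norm_num)]
    exact_mod_cast this
  have hlog : Real.log N / 2 - 0.80472 ≤ Real.log (R + 1) := by
    have h2 : Real.log N ≤ Real.log (5 * (R + 1) ^ 2) := Real.log_le_log (by linarith) hRN
    rw [Real.log_mul (by norm_num) (by positivity), Real.log_pow] at h2
    have := Real.log_five_lt_d9
    push_cast at h2
    linarith
  have hlN : 0 < Real.log N := Real.log_pos (by linarith)
  set V := Real.log N / 2 + (κ - 0.80472) with hV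
  have hV0 : 0 < V := by linarith
  have hLV : 4 / 15 * V ≤ selL R := by linarith
  have hB0 : 0 ≤ selB R := by
    rw [selB]
    positivity
  have h1 := card_primes_interval_le hR1 a N
  refine h1.trans ?_
  have h3 : 4 / 15 * (N : ℝ) / selL R ≤ N / V := by
    rw [div_le_div_iff₀ (by linarith) hV0]
    nlinarith
  have h4 : selB R / selL R ≤ β * R / (4 / 15 * V) := by
    apply div_le_div₀ (by positivity) hB (by positivity) hLV
  have h5 : (selB R / selL R) ^ 2 ≤ (β * R / (4 / 15 * V)) ^ 2 := by
    apply pow_le_pow_left₀ (div_nonneg hB0 (by linarith)) h4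
  have h6 : 28 / 15 * (β * R / (4 / 15 * V)) ^ 2 ≤ c * N / V ^ 2 := by
    have : 28 / 15 * (β * R / (4 / 15 * V)) ^ 2 = (26.25 * β ^ 2 * R ^ 2) / V ^ 2 := by
      field_simp
      ring
    rw [this]
    refine div_le_div_of_nonneg_right ?_ (by positivity)
    nlinarith [sq_nonneg β]
  linarith

lemma selB_le_mul {R s : ℕ} {β : ℝ} (hs : 1 ≤ s) (hR : s ^ 2 ≤ R)
    (hβ : 0.3032 + 0.498 / s + 0.872 / (s : ℝ) ^ 2 ≤ β) : selB R ≤ β * R := by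
  have hs0 : (0 : ℝ) < s := by exact_mod_cast hs
  have hR0 : (s : ℝ) ^ 2 ≤ R := by exact_mod_cast hR
  have h1 := selB_le (R := R) (by nlinarith)
  have h2 : √(R : ℝ) * s ≤ R := by
    have : (s : ℝ) ≤ √R := Real.le_sqrt_of_sq_le hR0
    nlinarith [Real.mul_self_sqrt (show (0 : ℝ) ≤ R by positivity), Real.sqrt_nonneg (R : ℝ)]
  have h3 : √(R : ℝ) ≤ 1 / s * R := by
    rw [one_div, inv_mul_eq_div, le_div_iff₀ hs0]; exact h2
  have h4 : (1 : ℝ) ≤ 1 / (s : ℝ) ^ 2 * R := by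
    rw [one_div, inv_mul_eq_div, le_div_iff₀ (by positivity)]; linarith
  calc selB R ≤ (0.3032 + 0.498 / s + 0.872 / (s : ℝ) ^ 2) * R := by
        have : (0.3032 + 0.498 / s + 0.872 / (s : ℝ) ^ 2) * R =
          0.3032 * R + 0.498 * (1 / s * R) + 0.872 * (1 / (s : ℝ) ^ 2 * R) := by ring
        rw [this]
        linarith
    _ ≤ β * R := by gcongr

lemma card_primes_interval_le_small {N : ℕ} (hN : 50000 ≤ N) (a : ℕ) :
    (#{p ∈ Ioc a (a + N) | p.Prime ∧ Nat.sqrt (N / 5) < p ∧ 5 < p} : ℝ) ≤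
      N / (Real.log N / 2 + 1.37228) + 0.71 * N / (Real.log N / 2 + 1.37228) ^ 2 := by
  have hR : 100 ≤ Nat.sqrt (N / 5) := by rw [Nat.le_sqrt]; omega
  have h := card_primes_interval_le_of (N := N) (κ := 2.177) (β := 0.36172) (c := 0.71) (by omega)
    rfl (selL_ge_80 (by omega)) (selB_le_mul (s := 10) (by norm_num) (by omega) (by norm_num))
    (by norm_num) (by norm_num) (by norm_num) a
  norm_num at h ⊢
  exact h

lemma card_primes_interval_le_large {N : ℕ} (hN : 6570000 ≤ N) (a : ℕ) :
    (#{p ∈ Ioc a (a + N) | p.Prime ∧ Nat.sqrt (N / 5) < p ∧ 5 < p} : ℝ) ≤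
      N / (Real.log N / 2 + 1.40228) + 0.54 * N / (Real.log N / 2 + 1.40228) ^ 2 := by
  have hR : 1146 ≤ Nat.sqrt (N / 5) := by rw [Nat.le_sqrt]; omega
  have h := card_primes_interval_le_of (N := N) (κ := 2.207) (β := 0.3191) (c := 0.54) (by omega)
    rfl (selL_ge_239 (by omega)) (selB_le_mul (s := 33) (by norm_num) (by omega) (by norm_num))
    (by norm_num) (by norm_num) (by norm_num) a
  norm_num at h ⊢
  exact h

open Classical in
/-- The indices of the rows of the `n`-th Sierpiński matrix that contain a prime. -/
noncomputable def primeRows (n : ℕ) : Finset ℕ :=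
  {k ∈ Icc 1 n | ∃ p : ℕ, p.Prime ∧ (k - 1) * n < p ∧ p ≤ k * n}

lemma ncard_eq (n : ℕ) : {k : ℕ | 1 ≤ k ∧ k ≤ n ∧
      ∃ p : ℕ, p.Prime ∧ (k - 1) * n < p ∧ p ≤ k * n}.ncard = #(primeRows n) := by
  rw [← Set.ncard_coe_finset]
  congr 1
  ext k
  simp [primeRows, and_assoc]

/-- Every prime up to `n ^ 2` lies in some row counted by `primeRows`. -/
lemma exists_row {n p : ℕ} (hn : 1 ≤ n) (hp : p.Prime) (h : p ≤ n ^ 2) :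
    ∃ k ∈ primeRows n, p ∈ Ioc ((k - 1) * n) ((k - 1) * n + n) := by
  have hp1 := hp.one_lt
  have h1 : (p - 1) / n * n ≤ p - 1 := Nat.div_mul_le_self _ _
  have h2 : p - 1 < ((p - 1) / n + 1) * n := by
    rw [mul_comm]; exact Nat.lt_mul_div_succ _ (by omega)
  have h3 : (p - 1) / n < n := by
    rw [Nat.div_lt_iff_lt_mul (by omega)]
    have : n ^ 2 = n * n := sq n
    omega
  have h4 : ((p - 1) / n + 1) * n = (p - 1) / n * n + n := by ring
  refine ⟨(p - 1) / n + 1, ?_, ?_⟩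
  · simp only [primeRows, mem_filter, mem_Icc, Nat.add_sub_cancel]
    exact ⟨⟨Nat.le_add_left _ _, h3⟩, p, hp, by omega, by omega⟩
  · simp only [mem_Ioc, Nat.add_sub_cancel]
    omega

/-- The `R + 5` allows for the primes that the sieve does not see. -/
lemma primeCounting_le_of_rows {n R : ℕ} {M : ℝ} (hn : 1 ≤ n)
    (hM : ∀ a, (#{p ∈ Ioc a (a + n) | p.Prime ∧ R < p ∧ 5 < p} : ℝ) ≤ M) :
    (Nat.primeCounting (n ^ 2) : ℝ) ≤ R + 5 + #(primeRows n) * M := by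
  have h1 : Nat.primesLE (n ^ 2) ⊆ Ioc 0 (R + 5) ∪ (primeRows n).biUnion (fun k =>
      {p ∈ Ioc ((k - 1) * n) ((k - 1) * n + n) | p.Prime ∧ R < p ∧ 5 < p}) := by
    intro p hp
    rw [Nat.mem_primesLE] at hp
    simp only [mem_union, mem_Ioc, mem_biUnion, mem_filter]
    by_cases h : p ≤ R + 5
    · exact Or.inl ⟨hp.2.pos, h⟩
    · obtain ⟨k, hk, hk'⟩ := exists_row hn hp.2 hp.1
      exact Or.inr ⟨k, hk, by simpa using hk', hp.2, by omega, by omega⟩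
  have h2 := (card_le_card h1).trans ((card_union_le _ _).trans
    (Nat.add_le_add_left card_biUnion_le _))
  rw [Nat.primesLE_card_eq_primeCounting, Nat.card_Ioc] at h2
  calc (Nat.primeCounting (n ^ 2) : ℝ) ≤ ((R + 5 - 0 + ∑ k ∈ primeRows n,
        #{p ∈ Ioc ((k - 1) * n) ((k - 1) * n + n) | p.Prime ∧ R < p ∧ 5 < p} : ℕ) : ℝ) := by
        exact_mod_cast h2
    _ ≤ R + 5 + ∑ k ∈ primeRows n, M := by
        rw [Nat.sub_zero]
        push_cast
        gcongr with k hk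
        exact hM _
    _ = _ := by simp

/-- If too few rows contain primes, the sieve bound for a row bounds `ψ(n ^ 2)`. -/
lemma psi_le_of_rows {n R : ℕ} {M : ℝ} (hn : 1 ≤ n) (hA : 4 * #(primeRows n) < n)
    (hM : ∀ a, (#{p ∈ Ioc a (a + n) | p.Prime ∧ R < p ∧ 5 < p} : ℝ) ≤ M) :
    Chebyshev.psi ((n ^ 2 : ℕ) : ℝ) ≤ 2 * Real.log n * (R + 5 + n / 4 * M) := by
  have h1 := Chebyshev.psi_le_primeCounting_mul_log (n ^ 2)
  have h2 := primeCounting_le_of_rows hn hM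
  have hM0 : 0 ≤ M := (Nat.cast_nonneg _).trans (hM 0)
  have h3 : (#(primeRows n) : ℝ) ≤ n / 4 := by
    have : (4 * #(primeRows n) : ℝ) < n := by exact_mod_cast hA
    linarith
  have h4 : Real.log ((n ^ 2 : ℕ) : ℝ) = 2 * Real.log n := by
    push_cast; rw [Real.log_pow]; norm_num
  have h5 : 0 ≤ Real.log n := Real.log_natCast_nonneg n
  rw [h4] at h1
  have h6 : (#(primeRows n) : ℝ) * M ≤ n / 4 * M := by gcongr
  nlinarith

/-- Chebyshev's bound against the row bound, with the constant loss left explicit. -/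
lemma false_of_rows {n R : ℕ} {M : ℝ} (hn : 6 ≤ n) (hA : 4 * #(primeRows n) < n)
    (hM : ∀ a, (#{p ∈ Ioc a (a + n) | p.Prime ∧ R < p ∧ 5 < p} : ℝ) ≤ M)
    (h : 2 * Real.log n * (R + 9 + n / 4 * M) < 0.92129 * (n : ℝ) ^ 2 + 5.8) : False := by
  have h1 := psi_le_of_rows (by omega) hA hM
  have h2 := psi_ge_chebyshev (x := n ^ 2) (by nlinarith)
  have h4 : Real.log ((n ^ 2 : ℕ) : ℝ) = 2 * Real.log n := by
    push_cast; rw [Real.log_pow]; norm_num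
  rw [h4] at h2
  push_cast at h1 h2
  linarith

/-! ### The range n ≤ e ^ 20 -/

lemma rows_tiny {n : ℕ} (hn : 2 ≤ n) (hn' : n ≤ 10) : n ≤ 4 * #(primeRows n) := by
  classical
  have h1 : 1 ∈ primeRows n := by
    simp only [primeRows, mem_filter, mem_Icc]
    exact ⟨⟨le_rfl, by omega⟩, 2, Nat.prime_two, by omega, by omega⟩
  have h2 : 2 ∈ primeRows n := by
    obtain ⟨p, hp, h3, h4⟩ := Nat.exists_prime_lt_and_le_two_mul n (by omega)
    simp only [primeRows, mem_filter, mem_Icc]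
    exact ⟨⟨by omega, by omega⟩, p, hp, by omega, by omega⟩
  rcases Nat.lt_or_ge n 9 with h | h
  · have : ({1, 2} : Finset ℕ) ⊆ primeRows n := by
      intro k hk
      simp only [mem_insert, mem_singleton] at hk
      rcases hk with rfl | rfl <;> assumption
    have := card_le_card this
    simp at this
    omega
  · have h3 : 3 ∈ primeRows n := by
      simp only [primeRows, mem_filter, mem_Icc]
      exact ⟨⟨by omega, by omega⟩, 23, by norm_num, by omega, by omega⟩
    have : ({1, 2, 3} : Finset ℕ) ⊆ primeRows n := by
      intro k hk
      simp only [mem_insert, mem_singleton] at hk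
      rcases hk with rfl | rfl | rfl <;> assumption
    have := card_le_card this
    simp at this
    omega

lemma log_le_of_le {n : ℕ} {hi c : ℝ} (hn : 1 ≤ n) (h : (n : ℝ) ≤ hi) (hc : Real.log hi ≤ c) :
    Real.log n ≤ c :=
  (Real.log_le_log (by exact_mod_cast hn) h).trans hc

lemma log_smooth (a b c : ℕ) : Real.log (2 ^ a * 3 ^ b * 5 ^ c) ≤
    a * 0.6931471808 + b * 1.098612289 + c * 1.609437913 := by
  rw [Real.log_mul (by positivity) (by positivity), Real.log_mul (by positivity) (by positivity),
    Real.log_pow, Real.log_pow, Real.log_pow]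
  have h2 : Real.log 2 ≤ 0.6931471808 := Real.log_two_lt_d9.le
  have h3 : Real.log 3 ≤ 1.098612289 := by have := Real.log_three_lt_d9; linarith
  have h5 : Real.log 5 ≤ 1.609437913 := by have := Real.log_five_lt_d9; linarith
  gcongr

/-- Rows sieved by the primes `2, 3, 5` only. -/
lemma false_of_wheel {n : ℕ} {c : ℝ} (hn : 6 ≤ n) (hA : 4 * #(primeRows n) < n)
    (hc : Real.log n ≤ c)
    (h : 2 * c * (10 + (n : ℝ) ^ 2 / 15 + 7 * n / 15) < 0.92129 * (n : ℝ) ^ 2 + 5.8) : False := by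
  refine false_of_rows (R := 1) hn hA (fun a => card_primes_interval_le le_rfl a n) ?_
  rw [selL_one, selB_one]
  refine lt_of_le_of_lt ?_ h
  have : (((1 : ℕ) : ℝ) + 9 + (n : ℝ) / 4 * (4 / 15 * n / 1 + 28 / 15 * (1 / 1) ^ 2)) =
    10 + (n : ℝ) ^ 2 / 15 + 7 * n / 15 := by push_cast; ring
  rw [this]
  gcongr

/-- Rows sieved by the primes up to `31`. -/
lemma false_of_thirtyone {n : ℕ} {c : ℝ} (hn : 6 ≤ n) (hA : 4 * #(primeRows n) < n)
    (hc : Real.log n ≤ c)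
    (h : 2 * c * (40 + 0.0421275 * (n : ℝ) ^ 2 + 19.2588 * n) < 0.92129 * (n : ℝ) ^ 2 + 5.8) :
    False := by
  refine false_of_rows (R := 31) hn hA (fun a => card_primes_interval_le (by norm_num) a n) ?_
  refine lt_of_le_of_lt ?_ h
  have hL := selL_thirtyone
  have hB := selB_thirtyone
  have hB0 : 0 ≤ selB 31 := by rw [selB]; positivity
  have h1 : selB 31 / selL 31 ≤ 10.166 / 1.5825 := div_le_div₀ (by norm_num) hB (by norm_num) hL
  have h2 : (selB 31 / selL 31) ^ 2 ≤ (10.166 / 1.5825) ^ 2 :=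
    pow_le_pow_left₀ (div_nonneg hB0 (by linarith)) h1 2
  have h3 : 4 / 15 * (n : ℝ) / selL 31 ≤ 4 / 15 * n / 1.5825 :=
    div_le_div_of_nonneg_left (by positivity) (by norm_num) hL
  have hn0 : (0 : ℝ) ≤ n := Nat.cast_nonneg n
  have hL0 : 0 ≤ Real.log n := Real.log_natCast_nonneg n
  have h4 : (((31 : ℕ) : ℝ) + 9 + (n : ℝ) / 4 * (4 / 15 * n / selL 31 +
      28 / 15 * (selB 31 / selL 31) ^ 2)) ≤ 40 + 0.0421275 * (n : ℝ) ^ 2 + 19.2588 * n := by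
    have h5 : (n : ℝ) / 4 * (4 / 15 * n / selL 31 + 28 / 15 * (selB 31 / selL 31) ^ 2) ≤
      n / 4 * (4 / 15 * n / 1.5825 + 28 / 15 * (10.166 / 1.5825) ^ 2) := by gcongr
    have h6 : (n : ℝ) / 4 * (4 / 15 * n / 1.5825 + 28 / 15 * (10.166 / 1.5825) ^ 2) =
      4 / 60 / 1.5825 * (n : ℝ) ^ 2 + 28 / 60 * (10.166 / 1.5825) ^ 2 * n := by ring
    have h7 : 4 / 60 / 1.5825 * (n : ℝ) ^ 2 ≤ 0.0421275 * (n : ℝ) ^ 2 := by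
      gcongr
      norm_num
    have h8 : 28 / 60 * (10.166 / 1.5825) ^ 2 * (n : ℝ) ≤ 19.2588 * n := by
      gcongr
      norm_num
    push_cast
    linarith
  have hc0 : 0 ≤ c := hL0.trans hc
  gcongr

/-- On each of a few ranges of `n`, `log n` is replaced by its value at the upper end, a number of the
form `2 ^ a * 3 ^ b * 5 ^ c`. -/
lemma rows_small {n : ℕ} (hn : 11 ≤ n) (hn' : n ≤ 50000) (hA : 4 * #(primeRows n) < n) :
    False := by
  have hn0 : (11 : ℝ) ≤ n := by exact_mod_cast hn
  have key : ∀ a b c : ℕ, n ≤ 2 ^ a * 3 ^ b * 5 ^ c → Real.log n ≤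
      a * 0.6931471808 + b * 1.098612289 + c * 1.609437913 := fun a b c h =>
    log_le_of_le (by omega) (by exact_mod_cast h) (log_smooth a b c)
  rcases Nat.lt_or_ge 12 n with h12 | h12
  swap
  · have := key 2 1 0 (by norm_num; omega)
    norm_num at this
    exact false_of_wheel (c := 2.5) (by omega) hA (by linarith) (by nlinarith)
  rcases Nat.lt_or_ge 15 n with h15 | h15
  swap
  · have := key 0 1 1 (by norm_num; omega)
    norm_num at this
    have hl : (13 : ℝ) ≤ n := by exact_mod_cast h12
    exact false_of_wheel (c := 2.709) (by omega) hA (by linarith) (by nlinarith)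
  rcases Nat.lt_or_ge 27 n with h27 | h27
  swap
  · have := key 0 3 0 (by norm_num; omega)
    norm_num at this
    have hl : (16 : ℝ) ≤ n := by exact_mod_cast h15
    exact false_of_wheel (c := 3.3) (by omega) hA (by linarith) (by nlinarith)
  rcases Nat.lt_or_ge 100 n with h100 | h100
  swap
  · have := key 2 0 2 (by norm_num; omega)
    norm_num at this
    have hl : (28 : ℝ) ≤ n := by exact_mod_cast h27
    exact false_of_wheel (c := 4.61) (by omega) hA (by linarith) (by nlinarith)
  rcases Nat.lt_or_ge 512 n with h512 | h512
  swap
  · have := key 9 0 0 (by norm_num; omega)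
    norm_num at this
    have hl : (101 : ℝ) ≤ n := by exact_mod_cast h100
    exact false_of_wheel (c := 6.24) (by omega) hA (by linarith) (by nlinarith)
  rcases Nat.lt_or_ge 900 n with h900 | h900
  swap
  · have := key 2 2 2 (by norm_num; omega)
    norm_num at this
    have hl : (513 : ℝ) ≤ n := by exact_mod_cast h512
    exact false_of_wheel (c := 6.803) (by omega) hA (by linarith) (by nlinarith)
  rcases Nat.lt_or_ge 1350 n with h1350 | h1350
  swap
  · have := key 1 3 2 (by norm_num; omega)
    norm_num at this
    have hl : (901 : ℝ) ≤ n := by exact_mod_cast h900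
    exact false_of_thirtyone (c := 7.21) (by omega) hA (by linarith) (by nlinarith)
  rcases Nat.lt_or_ge 3375 n with h3375 | h3375
  swap
  · have := key 0 3 3 (by norm_num; omega)
    norm_num at this
    have hl : (1351 : ℝ) ≤ n := by exact_mod_cast h1350
    exact false_of_thirtyone (c := 8.13) (by omega) hA (by linarith) (by nlinarith)
  rcases Nat.lt_or_ge 15000 n with h15000 | h15000
  swap
  · have := key 3 1 4 (by norm_num; omega)
    norm_num at this
    have hl : (3376 : ℝ) ≤ n := by exact_mod_cast h3375
    exact false_of_thirtyone (c := 9.617) (by omega) hA (by linarith) (by nlinarith)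
  rcases Nat.lt_or_ge 40000 n with h40000 | h40000
  swap
  · have := key 6 0 4 (by norm_num; omega)
    norm_num at this
    have hl : (15001 : ℝ) ≤ n := by exact_mod_cast h15000
    exact false_of_thirtyone (c := 10.598) (by omega) hA (by linarith) (by nlinarith)
  rcases Nat.lt_or_ge 45000 n with h45000 | h45000
  swap
  · have := key 3 2 4 (by norm_num; omega)
    norm_num at this
    have hl : (40001 : ℝ) ≤ n := by exact_mod_cast h40000
    exact false_of_thirtyone (c := 10.716) (by omega) hA (by linarith) (by nlinarith)
  · have := key 4 0 5 (by norm_num; omega)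
    norm_num at this
    have hl : (45001 : ℝ) ≤ n := by exact_mod_cast h45000
    exact false_of_thirtyone (c := 10.82) (by omega) hA (by linarith) (by nlinarith)

lemma sqrt_div_five_le {n : ℕ} (hn : 50000 ≤ n) : ((Nat.sqrt (n / 5) : ℕ) : ℝ) ≤ n / 500 := by
  have hR : 100 ≤ Nat.sqrt (n / 5) := by rw [Nat.le_sqrt]; omega
  have h : Nat.sqrt (n / 5) * Nat.sqrt (n / 5) ≤ n / 5 := Nat.sqrt_le _
  have h2 : Nat.sqrt (n / 5) * 500 ≤ n := by nlinarith [Nat.div_mul_le_self n 5]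
  rw [le_div_iff₀ (by norm_num)]
  exact_mod_cast h2

/-- The Brun–Titchmarsh row bound against a Chebyshev lower bound with constant `α`, both taken
relative to `n ^ 2`. -/
lemma bt_main_le {n l κ c α : ℝ} (hl : 0 < l) (hκ : 0 ≤ κ)
    (h : l * (l / 2 + κ + c) ≤ 2 * α * (l / 2 + κ) ^ 2) :
    2 * l * (n / 4 * (n / (l / 2 + κ) + c * n / (l / 2 + κ) ^ 2)) ≤ α * n ^ 2 := by
  have hV : 0 < l / 2 + κ := by linarith
  set V := l / 2 + κ
  have h1 : 2 * l * (n / 4 * (n / V + c * n / V ^ 2)) = n ^ 2 * (l * (V + c) / (2 * V ^ 2)) := by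
    field_simp
    ring
  have h2 : l * (V + c) / (2 * V ^ 2) ≤ α := by
    rw [div_le_iff₀ (by positivity)]
    linarith
  rw [h1]
  nlinarith [sq_nonneg n]

lemma rows_medium {n : ℕ} (hn : 50000 ≤ n) (hl : Real.log n ≤ 16.2)
    (hA : 4 * #(primeRows n) < n) : False := by
  have hn0 : (50000 : ℝ) ≤ n := by exact_mod_cast hn
  have hl0 : 0 < Real.log n := Real.log_pos (by linarith)
  refine false_of_rows (by omega) hA (card_primes_interval_le_small hn) ?_
  have h1 := bt_main_le (n := n) (κ := 1.37228) (c := 0.71) (α := 0.9212) hl0 (by norm_num)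
    (by nlinarith)
  have h2 := sqrt_div_five_le hn
  have h3 : 2 * Real.log n * ((Nat.sqrt (n / 5) : ℕ) + 9) ≤ 2 * 16.2 * (n / 500 + 9) := by
    gcongr
  nlinarith

lemma rows_large {n : ℕ} (hn : 6570000 ≤ n) (hl : Real.log n ≤ 20)
    (hA : 4 * #(primeRows n) < n) : False := by
  have hn0 : (6570000 : ℝ) ≤ n := by exact_mod_cast hn
  have hl0 : 0 < Real.log n := Real.log_pos (by linarith)
  refine false_of_rows (by omega) hA (card_primes_interval_le_large hn) ?_
  have h1 := bt_main_le (n := n) (κ := 1.40228) (c := 0.54) (α := 0.9212) hl0 (by norm_num)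
    (by nlinarith)
  have h2 := sqrt_div_five_le (n := n) (by omega)
  have h3 : 2 * Real.log n * ((Nat.sqrt (n / 5) : ℕ) + 9) ≤ 2 * 20 * (n / 500 + 9) := by
    gcongr
  nlinarith

lemma exp_sixteen_ge : (6570000 : ℝ) ≤ Real.exp 16 := by
  have h := Real.exp_one_gt_d9
  have : Real.exp 16 = Real.exp 1 ^ 16 := by rw [← Real.exp_nat_mul]; norm_num
  rw [this]
  calc (6570000 : ℝ) ≤ 2.7182818283 ^ 16 := by norm_num
    _ ≤ _ := by gcongr

/-- The rows claim for every `n ≤ e ^ 20`. -/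
lemma rows_of_log_le_twenty {n : ℕ} (hn : 2 ≤ n) (hl : Real.log n ≤ 20) :
    n ≤ 4 * #(primeRows n) := by
  by_contra hA
  push Not at hA
  rcases Nat.lt_or_ge 10 n with h | h
  swap
  · exact absurd (rows_tiny hn h) (by omega)
  rcases Nat.lt_or_ge 50000 n with h5 | h5
  swap
  · exact rows_small h h5 hA
  rcases le_or_gt (Real.log n) 16.2 with h6 | h6
  · exact rows_medium h5.le h6 hA
  · refine rows_large ?_ hl hA
    have h7 : Real.exp 16 ≤ n := by
      rw [← Real.le_log_iff_exp_le (by positivity)]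
      linarith
    exact_mod_cast exp_sixteen_ge.trans h7

/-! ### A sharper lower bound for ψ -/

/-- Passing from prime powers to primes costs `O(√x log x)`. -/
lemma sum_vonMangoldt_interval_le {a N : ℕ} {x : ℝ} (h1 : 1 ≤ a + N) (hx : ((a + N : ℕ) : ℝ) ≤ x) :
    ∑ m ∈ Ioc a (a + N), vonMangoldt m ≤
      #{p ∈ Ioc a (a + N) | p.Prime} * Real.log (a + N) + 2 * (√x * Real.log x) := by
  have hψ : ∀ b : ℕ, Chebyshev.psi b = ∑ m ∈ Ioc 0 b, vonMangoldt m := psi_natCast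
  have hθ : ∀ b : ℕ, Chebyshev.theta b = ∑ p ∈ Ioc 0 b with p.Prime, Real.log p := fun b => by
    rw [Chebyshev.theta, Nat.floor_natCast]
  have hx1 : (1 : ℝ) ≤ ((a + N : ℕ) : ℝ) := by exact_mod_cast h1
  have e1 := Chebyshev.abs_psi_sub_theta_le_sqrt_mul_log hx1
  have e2 := Chebyshev.theta_le_psi (a : ℝ)
  have s1 : Ioc 0 (a + N) = Ioc 0 a ∪ Ioc a (a + N) :=
    (Ioc_union_Ioc_eq_Ioc (Nat.zero_le _) (Nat.le_add_right _ _)).symm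
  have d1 : Disjoint (Ioc 0 a) (Ioc a (a + N)) := by
    rw [Finset.disjoint_left]
    intro m hm hm'
    simp only [mem_Ioc] at hm hm'
    omega
  have e3 : Chebyshev.psi ((a + N : ℕ) : ℝ) = Chebyshev.psi a + ∑ m ∈ Ioc a (a + N), vonMangoldt m := by
    rw [hψ, hψ, s1, sum_union d1]
  have e4 : Chebyshev.theta ((a + N : ℕ) : ℝ) = Chebyshev.theta a +
      ∑ p ∈ Ioc a (a + N) with p.Prime, Real.log p := by
    rw [hθ, hθ, s1, filter_union, sum_union (disjoint_filter_filter d1)]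
  have e5 : ∑ p ∈ Ioc a (a + N) with p.Prime, Real.log p ≤
      #{p ∈ Ioc a (a + N) | p.Prime} * Real.log (a + N) := by
    rw [← nsmul_eq_mul]
    refine sum_le_card_nsmul _ _ _ fun p hp => ?_
    simp only [mem_filter, mem_Ioc] at hp
    refine Real.log_le_log (by exact_mod_cast hp.2.pos) (by exact_mod_cast hp.1.2)
  have e6 : 2 * √((a + N : ℕ) : ℝ) * Real.log ((a + N : ℕ) : ℝ) ≤ 2 * (√x * Real.log x) := by
    rw [mul_assoc]
    have : 0 ≤ Real.log ((a + N : ℕ) : ℝ) := Real.log_nonneg hx1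
    gcongr
  have e7 := (abs_le.1 e1).2
  linarith

/-- Numbers `u < 400` with
`u - ⌊u/2⌋ - ⌊u/3⌋ - ⌊u/5⌋ + ⌊u/6⌋ - ⌊u/7⌋ + ⌊u/10⌋ - ⌊u/11⌋ + ⌊u/2310⌋ = 2`. -/
def exceptional : Finset ℕ :=
  {u ∈ range 400 | u + u / 6 + u / 10 + u / 2310 = 2 + u / 2 + u / 3 + u / 5 + u / 7 + u / 11}

/-- The combination is periodic modulo `2310`, since its coefficients `c_d` satisfy `∑ c_d / d = 0`. -/
lemma floor_sum_le_two (u : ℕ) :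
    u + u / 6 + u / 10 + u / 2310 ≤ 2 + u / 2 + u / 3 + u / 5 + u / 7 + u / 11 := by
  have h : ∀ r < 2310, r + r / 6 + r / 10 ≤ 2 + r / 2 + r / 3 + r / 5 + r / 7 + r / 11 := by
    decide +kernel
  have h1 := h (u % 2310) (Nat.mod_lt _ (by norm_num))
  have hu : u = u % 2310 + 2310 * (u / 2310) := (Nat.mod_add_div u 2310).symm
  have hr : u % 2310 < 2310 := Nat.mod_lt _ (by norm_num)
  generalize u / 2310 = q at *
  generalize u % 2310 = r at *
  subst hu
  have e : ∀ d c : ℕ, 0 < d → (r + d * c * q) / d = r / d + c * q := fun d c hd => by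
    rw [mul_assoc, Nat.add_mul_div_left _ _ hd]
  rw [e 6 385 (by norm_num), e 10 231 (by norm_num), e 2 1155 (by norm_num),
    e 3 770 (by norm_num), e 5 462 (by norm_num), e 7 330 (by norm_num), e 11 210 (by norm_num)]
  linarith

/-- The combination of floors is at most `1` except on `exceptional` and possibly from `400` on. -/
lemma floor_sum_le (u : ℕ) : u + u / 6 + u / 10 + u / 2310 ≤
    1 + (if 400 ≤ u then 1 else 0) + (if u ∈ exceptional then 1 else 0) +
      u / 2 + u / 3 + u / 5 + u / 7 + u / 11 := by
  have h := floor_sum_le_two u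
  by_cases h1 : 400 ≤ u
  · rw [if_pos h1]
    linarith [Nat.zero_le (if u ∈ exceptional then 1 else 0)]
  · by_cases h2 : u ∈ exceptional
    · rw [if_neg h1, if_pos h2]
      linarith
    · rw [if_neg h1, if_neg h2]
      simp only [exceptional, mem_filter, mem_range, not_and] at h2
      have h3 := Nat.lt_of_le_of_ne h (h2 (by omega))
      linarith

lemma exceptional_bounds : ∀ u ∈ exceptional, 12 ≤ u ∧ u ≤ 399 := by
  decide +kernel

lemma card_exceptional : #exceptional = 51 := by decide +kernel

lemma sum_exceptional_low :
    ∑ u ∈ exceptional with u < 60, (1 / (u * (u + 1)) : ℝ) ≤ 0.014258 := by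
  have h : ∑ u ∈ exceptional with u < 60, (10 ^ 9 / (u * (u + 1)) + 1) ≤ 14258000 := by
    decide +kernel
  have h2 : ∀ u ∈ exceptional.filter (· < 60), (1 / (u * (u + 1)) : ℝ) ≤
      ((10 ^ 9 / (u * (u + 1)) + 1 : ℕ) : ℝ) / 10 ^ 9 := by
    intro u hu
    have hu0 := (exceptional_bounds u (mem_filter.1 hu).1).1
    have := Nat.lt_mul_div_succ (10 ^ 9) (show 0 < u * (u + 1) by nlinarith)
    rw [div_le_div_iff₀ (by have : (12 : ℝ) ≤ u := by exact_mod_cast hu0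
                            nlinarith) (by norm_num)]
    have h3 : 1 * 10 ^ 9 ≤ (10 ^ 9 / (u * (u + 1)) + 1) * (u * (u + 1)) := by
      rw [mul_comm _ (u * (u + 1)), one_mul]; exact this.le
    exact_mod_cast h3
  refine (sum_le_sum h2).trans ?_
  rw [← sum_div, ← Nat.cast_sum, div_le_iff₀ (by norm_num)]
  refine (Nat.cast_le.2 h).trans (by norm_num)

lemma sum_exceptional_high :
    ∑ u ∈ exceptional with ¬ u < 60, (1 / (u * (u + 1)) : ℝ) ≤ 0.002116 := by
  have h : ∑ u ∈ exceptional with ¬ u < 60, (10 ^ 9 / (u * (u + 1)) + 1) ≤ 2116000 := by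
    decide +kernel
  have h2 : ∀ u ∈ exceptional.filter (¬ · < 60), (1 / (u * (u + 1)) : ℝ) ≤
      ((10 ^ 9 / (u * (u + 1)) + 1 : ℕ) : ℝ) / 10 ^ 9 := by
    intro u hu
    have hu0 := (exceptional_bounds u (mem_filter.1 hu).1).1
    have := Nat.lt_mul_div_succ (10 ^ 9) (show 0 < u * (u + 1) by nlinarith)
    rw [div_le_div_iff₀ (by have : (12 : ℝ) ≤ u := by exact_mod_cast hu0
                            nlinarith) (by norm_num)]
    have h3 : 1 * 10 ^ 9 ≤ (10 ^ 9 / (u * (u + 1)) + 1) * (u * (u + 1)) := by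
      rw [mul_comm _ (u * (u + 1)), one_mul]; exact this.le
    exact_mod_cast h3
  refine (sum_le_sum h2).trans ?_
  rw [← sum_div, ← Nat.cast_sum, div_le_iff₀ (by norm_num)]
  refine (Nat.cast_le.2 h).trans (by norm_num)

/-- The constant of the Chebyshev bound before the exceptional places are subtracted. -/
lemma log_constants : (0.9982 : ℝ) ≤ Real.log 2 / 2 + Real.log 3 / 3 + Real.log 5 / 5 -
    Real.log 6 / 6 + Real.log 7 / 7 - Real.log 10 / 10 + Real.log 11 / 11
    - Real.log 2310 / 2310 := by
  have l2 := Real.log_two_gt_d9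
  have l3 := Real.log_three_gt_d9
  have l5 := Real.log_five_gt_d9
  have l6 : Real.log 6 = Real.log 2 + Real.log 3 := by
    rw [← Real.log_mul (by norm_num) (by norm_num)]; norm_num
  have l10 : Real.log 10 = Real.log 2 + Real.log 5 := by
    rw [← Real.log_mul (by norm_num) (by norm_num)]; norm_num
  have l2310 : Real.log 2310 = Real.log 2 + Real.log 3 + Real.log 5 + Real.log 7 + Real.log 11 := by
    rw [← Real.log_mul (by norm_num) (by norm_num), ← Real.log_mul (by norm_num) (by norm_num),
      ← Real.log_mul (by norm_num) (by norm_num), ← Real.log_mul (by norm_num) (by norm_num)]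
    norm_num
  have l7 : 5 * Real.log 2 + Real.log 3 + 2 * Real.log 5 ≤ 4 * Real.log 7 := by
    have h : Real.log (2 ^ 5 * 3 * 5 ^ 2) ≤ Real.log (7 ^ 4) :=
      Real.log_le_log (by norm_num) (by norm_num)
    rw [Real.log_mul (by norm_num) (by norm_num), Real.log_mul (by norm_num) (by norm_num),
      Real.log_pow, Real.log_pow, Real.log_pow] at h
    push_cast at h
    exact h
  have l11 : 2 * Real.log 2 + 6 * Real.log 3 + Real.log 5 ≤ 4 * Real.log 11 := by
    have h : Real.log (2 ^ 2 * 3 ^ 6 * 5) ≤ Real.log (11 ^ 4) :=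
      Real.log_le_log (by norm_num) (by norm_num)
    rw [Real.log_mul (by norm_num) (by norm_num), Real.log_mul (by norm_num) (by norm_num),
      Real.log_pow, Real.log_pow, Real.log_pow] at h
    push_cast at h
    exact h
  have l2' := Real.log_two_lt_d9
  have l3' := Real.log_three_lt_d9
  have l5' := Real.log_five_lt_d9
  rw [l6, l10, l2310]
  linarith

lemma exp_twenty_ge : (400000000 : ℝ) ≤ Real.exp 20 := by
  have h := Real.exp_one_gt_d9
  have : Real.exp 20 = Real.exp 1 ^ 20 := by rw [← Real.exp_nat_mul]; norm_num
  rw [this]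
  calc (400000000 : ℝ) ≤ 2.718 ^ 20 := by norm_num
    _ ≤ _ := by gcongr; linarith

lemma sqrt_mul_log_le {x : ℝ} (hx0 : 0 < x) (hx : 40 ≤ Real.log x) :
    √x * Real.log x ≤ x / 10 ^ 7 := by
  have h1 : √x = Real.exp 20 * Real.exp (Real.log x / 2 - 20) := by
    rw [← Real.exp_add, Real.sqrt_eq_iff_mul_self_eq hx0.le (Real.exp_nonneg _), ← Real.exp_add]
    ring_nf
    exact (Real.exp_log hx0).symm
  have h2 := Real.add_one_le_exp (Real.log x / 2 - 20)
  have h3 := exp_twenty_ge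
  have h4 : Real.log x * 10 ^ 7 ≤ √x := by
    rw [h1]
    nlinarith [Real.exp_pos (Real.log x / 2 - 20)]
  have h5 : x = √x * √x := (Real.mul_self_sqrt hx0.le).symm
  rw [le_div_iff₀ (by norm_num)]
  nlinarith [Real.sqrt_nonneg x]

lemma exp_forty_ge {x : ℝ} (hx0 : 0 < x) (hx : 40 ≤ Real.log x) : (16 * 10 ^ 16 : ℝ) ≤ x := by
  have h1 : Real.exp 40 ≤ x := (Real.le_log_iff_exp_le hx0).1 hx
  have h2 : Real.exp 40 = Real.exp 20 ^ 2 := by rw [← Real.exp_nat_mul]; norm_num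
  have h3 := exp_twenty_ge
  nlinarith

/-- Brun–Titchmarsh on `(x / (v + 1), x / v]`. The numbers `lv`, `W₀`, `lw` bound `log v` from
below and `v (v + 1)`, `log W` from above; `W` exceeds `W₀` slightly, to absorb the rounding of the
ends of the interval. -/
lemma sum_vonMangoldt_block_le {x v : ℕ} {lv W₀ W lw K : ℝ} (hx : 40 ≤ Real.log x) (hv : 1 ≤ v)
    (hv' : v ≤ 399) (hlv : lv ≤ Real.log v) (hW₀ : ((v : ℝ) * (v + 1)) ≤ W₀)
    (hW : 1 / W + 1 / 10 ^ 10 ≤ 1 / W₀) (hW0 : 0 < W) (hW1 : W ≤ 10 ^ 6)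
    (hlw : Real.log W ≤ lw) (hlw' : lw ≤ 12)
    (hK : (Real.log x - lv) * ((Real.log x - lw) / 2 + 1.40228 + 0.54) ≤
      K * ((Real.log x - lw) / 2 + 1.40228) ^ 2) (hK0 : 0 ≤ K) :
    ∑ m ∈ Ioc (x / (v + 1)) (x / v), vonMangoldt m ≤
      K * (x * (1 / (v * (v + 1))) + 1) + 2 * (√x * Real.log x) := by
  have hx0 : (0 : ℝ) < x := by
    by_contra h
    have : x = 0 := by
      have : (x : ℝ) = 0 := le_antisymm (not_lt.1 h) (Nat.cast_nonneg _)
      exact_mod_cast this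
    subst this
    simp at hx
    linarith
  have hxbig := exp_forty_ge hx0 hx
  have hv0 : (1 : ℝ) ≤ v := by exact_mod_cast hv
  set a := x / (v + 1) with ha
  have hab : a ≤ x / v := Nat.div_le_div_left (by omega) (by omega)
  obtain ⟨N, hN⟩ := Nat.exists_eq_add_of_le hab
  rw [hN]
  have a1 : (a : ℝ) ≤ x / (v + 1) := by
    have := Nat.cast_div_le (α := ℝ) (m := x) (n := v + 1)
    push_cast at this
    exact this
  have a2 : (x : ℝ) / (v + 1) ≤ a + 1 := by
    rw [div_le_iff₀ (by positivity)]
    have := Nat.lt_mul_div_succ x (show 0 < v + 1 by omega)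
    have h : x ≤ (a + 1) * (v + 1) := by rw [mul_comm]; exact this.le
    exact_mod_cast h
  have b1 : ((a + N : ℕ) : ℝ) ≤ x / v := by
    rw [← hN]; exact Nat.cast_div_le
  have b2 : (x : ℝ) / v ≤ (a + N : ℕ) + 1 := by
    rw [div_le_iff₀ (by positivity), ← hN]
    have := Nat.lt_mul_div_succ x (show 0 < v by omega)
    have h : x ≤ (x / v + 1) * v := by rw [mul_comm]; exact this.le
    exact_mod_cast h
  have hdiff : (x : ℝ) / v - x / (v + 1) = x * (1 / (v * (v + 1))) := by
    field_simp
    ring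
  push_cast at b1 b2
  have hNle : (N : ℝ) ≤ x * (1 / (v * (v + 1))) + 1 := by linarith
  have hNge : (x : ℝ) / W ≤ N := by
    have h1 : (1 : ℝ) / W₀ ≤ 1 / (v * (v + 1)) :=
      one_div_le_one_div_of_le (by positivity) hW₀
    have h2 : (x : ℝ) / W = x * (1 / W) := by ring
    rw [h2]
    nlinarith
  have hlogN : Real.log x - lw ≤ Real.log N := by
    have h1 := Real.log_le_log (div_pos hx0 hW0) hNge
    rw [Real.log_div hx0.ne' hW0.ne'] at h1
    linarith
  have hNbig : 6570000 ≤ N := by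
    have h1 : (6570000 : ℝ) ≤ x / W := by
      rw [le_div_iff₀ hW0]
      nlinarith
    exact_mod_cast h1.trans hNge
  have hS := sum_vonMangoldt_interval_le (a := a) (N := N) (x := x)
    ((show 1 ≤ N by omega).trans (Nat.le_add_left _ _)) (by
    push_cast
    refine b1.trans (div_le_self hx0.le hv0))
  have hcard : #{p ∈ Ioc a (a + N) | p.Prime} =
      #{p ∈ Ioc a (a + N) | p.Prime ∧ Nat.sqrt (N / 5) < p ∧ 5 < p} := by
    congr 1
    apply filter_congr
    intro p hp
    simp only [mem_Ioc] at hp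
    -- every `p > a` exceeds `√N`, because `a ≥ x / 400 - 1` and `x` is huge
    have h1 : (N : ℝ) ≤ 400 * (a + 1) := by
      have h3 : (v : ℝ) ≤ 399 := by exact_mod_cast hv'
      have h2 : (x : ℝ) ≤ (a + 1) * (v + 1) := by
        rwa [div_le_iff₀ (by positivity)] at a2
      have h4 : (N : ℝ) ≤ x := by
        have := b1.trans (div_le_self hx0.le hv0)
        have : (0 : ℝ) ≤ a := Nat.cast_nonneg a
        linarith
      nlinarith [(Nat.cast_nonneg a : (0 : ℝ) ≤ a)]
    have h1' : N ≤ 400 * (a + 1) := by exact_mod_cast h1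
    have h2 : Nat.sqrt (N / 5) ≤ a := by
      rw [← Nat.lt_succ_iff, Nat.sqrt_lt]
      have : 5 * (N / 5) ≤ N := Nat.mul_div_le N 5
      nlinarith
    constructor
    · intro h
      exact ⟨h, by omega, by omega⟩
    · exact fun h => h.1
  have hBT := card_primes_interval_le_large hNbig a
  rw [← hcard] at hBT
  set V := (Real.log x - lw) / 2 + 1.40228
  have hV0 : 0 < V := by simp only [V]; linarith
  have hVV : V ≤ Real.log N / 2 + 1.40228 := by simp only [V]; linarith
  have hBT2 : (#{p ∈ Ioc a (a + N) | p.Prime} : ℝ) ≤ N * ((V + 0.54) / V ^ 2) := by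
    refine hBT.trans ?_
    have : (N : ℝ) * ((V + 0.54) / V ^ 2) = N / V + 0.54 * N / V ^ 2 := by
      field_simp
    rw [this]
    gcongr
  have hlogb : Real.log (a + N) ≤ Real.log x - lv := by
    have h1 := Real.log_le_log (by positivity) b1
    rw [Real.log_div hx0.ne' (by positivity)] at h1
    linarith
  have hlogb0 : 0 ≤ Real.log (a + N) := by
    refine Real.log_nonneg ?_
    have : (6570000 : ℝ) ≤ N := by exact_mod_cast hNbig
    have : (0 : ℝ) ≤ a := Nat.cast_nonneg a
    linarith
  have hlv0 : 0 ≤ Real.log x - lv := hlogb0.trans hlogb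
  have hfin : (#{p ∈ Ioc a (a + N) | p.Prime} : ℝ) * Real.log (a + N) ≤ K * N := by
    calc (#{p ∈ Ioc a (a + N) | p.Prime} : ℝ) * Real.log (a + N)
        ≤ (N * ((V + 0.54) / V ^ 2)) * (Real.log x - lv) := by
          gcongr
      _ = N * ((Real.log x - lv) * (V + 0.54) / V ^ 2) := by ring
      _ ≤ N * K := by
          gcongr
          rw [div_le_iff₀ (by positivity)]
          exact hK
      _ = K * N := mul_comm _ _
  have : K * N ≤ K * (x * (1 / (v * (v + 1))) + 1) := by gcongr
  linarith

/-- The exceptional blocks are split at `60`, with one rounded set of logarithms for each part. -/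
lemma sum_exceptional_psi_le {x : ℕ} (hx : 40 ≤ Real.log x) :
    ∑ v ∈ exceptional, ∑ m ∈ Ioc (x / (v + 1)) (x / v), vonMangoldt m ≤ 0.03702 * x := by
  have hx0 : (0 : ℝ) < x := by
    by_contra h
    have : x = 0 := by
      have : (x : ℝ) = 0 := le_antisymm (not_lt.1 h) (Nat.cast_nonneg _)
      exact_mod_cast this
    subst this
    simp at hx
    linarith
  have l2 := Real.log_two_gt_d9
  have l3 := Real.log_three_gt_d9
  have l5 := Real.log_five_gt_d9
  have hlog12 : (2.4849 : ℝ) ≤ Real.log 12 := by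
    have : Real.log 12 = Real.log 2 + Real.log 2 + Real.log 3 := by
      rw [← Real.log_mul (by norm_num) (by norm_num), ← Real.log_mul (by norm_num) (by norm_num)]
      norm_num
    rw [this]; linarith
  have hlog60 : (4.0943 : ℝ) ≤ Real.log 60 := by
    have : Real.log 60 = Real.log 12 + Real.log 5 := by
      rw [← Real.log_mul (by norm_num) (by norm_num)]
      norm_num
    rw [this]; linarith
  have h3600 : Real.log 3600 ≤ 8.1887 := by
    have := log_smooth 4 2 2
    norm_num at this
    linarith
  have h160000 : Real.log 160000 ≤ 11.9830 := by
    have := log_smooth 8 0 4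
    norm_num at this
    linarith
  have hA : ∀ v ∈ exceptional.filter (· < 60), ∑ m ∈ Ioc (x / (v + 1)) (x / v), vonMangoldt m ≤
      2.236 * x * (1 / (v * (v + 1))) + (3 + 2 * (√x * Real.log x)) := by
    intro v hv
    rw [mem_filter] at hv
    have hb := exceptional_bounds v hv.1
    have hv1 : (12 : ℝ) ≤ v := by exact_mod_cast hb.1
    have hv2 : (v : ℝ) ≤ 59 := by
      have : v ≤ 59 := by omega
      exact_mod_cast this
    have := sum_vonMangoldt_block_le (x := x) (v := v) (lv := 2.4849) (W₀ := 3540) (W := 3600)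
      (lw := 8.1887) (K := 2.236) hx (by omega) (by omega)
      (hlog12.trans (Real.log_le_log (by norm_num) hv1)) (by nlinarith) (by norm_num) (by norm_num)
      (by norm_num) h3600 (by norm_num) (by nlinarith) (by norm_num)
    linarith
  have hB : ∀ v ∈ exceptional.filter (¬ · < 60), ∑ m ∈ Ioc (x / (v + 1)) (x / v), vonMangoldt m ≤
      2.414 * x * (1 / (v * (v + 1))) + (3 + 2 * (√x * Real.log x)) := by
    intro v hv
    rw [mem_filter] at hv
    have hb := exceptional_bounds v hv.1
    have hv1 : (60 : ℝ) ≤ v := by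
      have : 60 ≤ v := by omega
      exact_mod_cast this
    have hv2 : (v : ℝ) ≤ 399 := by exact_mod_cast hb.2
    have := sum_vonMangoldt_block_le (x := x) (v := v) (lv := 4.0943) (W₀ := 159600) (W := 160000)
      (lw := 11.9830) (K := 2.414) hx (by omega) (by omega)
      (hlog60.trans (Real.log_le_log (by norm_num) hv1)) (by nlinarith) (by norm_num) (by norm_num)
      (by norm_num) h160000 (by norm_num) (by nlinarith) (by norm_num)
    linarith
  have hE := sqrt_mul_log_le hx0 hx
  have hxbig := exp_forty_ge hx0 hx
  rw [← sum_filter_add_sum_filter_not exceptional (· < 60)]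
  have h1 := sum_le_sum hA
  have h2 := sum_le_sum hB
  rw [sum_add_distrib, ← mul_sum, sum_const, nsmul_eq_mul] at h1 h2
  have h3 := sum_exceptional_low
  have h4 := sum_exceptional_high
  have c1 : (#(exceptional.filter (· < 60)) : ℝ) ≤ 51 := by
    have := card_le_card (filter_subset (· < 60) exceptional)
    rw [card_exceptional] at this
    exact_mod_cast this
  have c2 : (#(exceptional.filter (¬ · < 60)) : ℝ) ≤ 51 := by
    have := card_le_card (filter_subset (¬ · < 60) exceptional)
    rw [card_exceptional] at this
    exact_mod_cast this
  have hE0 : 0 ≤ 3 + 2 * (√x * Real.log x) := by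
    have : 0 ≤ Real.log x := by linarith
    positivity
  have h5 := mul_le_mul_of_nonneg_left h3 (show 0 ≤ 2.236 * (x : ℝ) by positivity)
  have h6 := mul_le_mul_of_nonneg_left h4 (show 0 ≤ 2.414 * (x : ℝ) by positivity)
  have h7 := mul_le_mul_of_nonneg_right c1 hE0
  have h8 := mul_le_mul_of_nonneg_right c2 hE0
  linarith

/-- A Chebyshev bound with constant close to `1`; the places where the floor combination takes the
value `2` are paid for with the Brun–Titchmarsh inequality. -/
lemma psi_ge_large {x : ℕ} (hx : 40 ≤ Real.log x) : 0.957 * x ≤ Chebyshev.psi x := by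
  have hx0 : (0 : ℝ) < x := by
    by_contra h
    have : x = 0 := by
      have : (x : ℝ) = 0 := le_antisymm (not_lt.1 h) (Nat.cast_nonneg _)
      exact_mod_cast this
    subst this
    simp at hx
    linarith
  have hxbig := exp_forty_ge hx0 hx
  have hxN : 2310 ≤ x := by
    have : (2310 : ℝ) ≤ x := by linarith
    exact_mod_cast this
  have hE := sqrt_mul_log_le hx0 hx
  have hψ4 : ∑ m ∈ Ioc 0 x, vonMangoldt m * (if 400 ≤ x / m then 1 else 0) =
      Chebyshev.psi ((x / 400 : ℕ) : ℝ) := by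
    rw [psi_natCast]
    simp only [mul_ite, mul_one, mul_zero]
    rw [← sum_filter]
    apply sum_congr _ fun _ _ => rfl
    ext m
    simp only [mem_filter, mem_Ioc]
    constructor
    · rintro ⟨⟨h1, h2⟩, h3⟩
      refine ⟨h1, ?_⟩
      rw [Nat.le_div_iff_mul_le h1] at h3
      rw [Nat.le_div_iff_mul_le (by norm_num)]
      linarith
    · rintro ⟨h1, h2⟩
      rw [Nat.le_div_iff_mul_le (by norm_num)] at h2
      refine ⟨⟨h1, by linarith⟩, ?_⟩
      rw [Nat.le_div_iff_mul_le h1]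
      linarith
  have hexc : ∑ m ∈ Ioc 0 x, vonMangoldt m * (if x / m ∈ exceptional then 1 else 0) =
      ∑ v ∈ exceptional, ∑ m ∈ Ioc (x / (v + 1)) (x / v), vonMangoldt m := by
    have h1 : ∀ m ∈ Ioc 0 x, vonMangoldt m * (if x / m ∈ exceptional then (1 : ℝ) else 0) =
        ∑ v ∈ exceptional, if x / m = v then vonMangoldt m else 0 := by
      intro m _
      rw [sum_ite_eq]
      split_ifs <;> simp
    rw [sum_congr rfl h1, sum_comm]
    refine sum_congr rfl fun v hv => ?_
    have hv1 := (exceptional_bounds v hv).1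
    rw [← sum_filter]
    apply sum_congr _ fun _ _ => rfl
    ext m
    simp only [mem_filter, mem_Ioc]
    constructor
    · rintro ⟨⟨h1, h2⟩, rfl⟩
      refine ⟨?_, ?_⟩
      · rw [Nat.div_lt_iff_lt_mul (by omega)]
        exact Nat.lt_mul_div_succ x h1
      · rw [Nat.le_div_iff_mul_le (by omega)]
        exact Nat.mul_div_le x m
    · rintro ⟨h1, h2⟩
      have hm : 0 < m := lt_of_le_of_lt (Nat.zero_le _) h1
      rw [Nat.div_lt_iff_lt_mul (by omega)] at h1
      rw [Nat.le_div_iff_mul_le (by omega)] at h2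
      refine ⟨⟨hm, by nlinarith⟩, ?_⟩
      apply le_antisymm
      · rw [← Nat.lt_succ_iff, Nat.div_lt_iff_lt_mul hm]
        linarith
      · rw [Nat.le_div_iff_mul_le hm]
        linarith
  have h1 : Real.log ((x / 1)!) + Real.log ((x / 6)!) + Real.log ((x / 10)!) +
      Real.log ((x / 2310)!) ≤ Chebyshev.psi x + Chebyshev.psi ((x / 400 : ℕ) : ℝ) +
      (∑ v ∈ exceptional, ∑ m ∈ Ioc (x / (v + 1)) (x / v), vonMangoldt m) + Real.log ((x / 2)!)
      + Real.log ((x / 3)!) + Real.log ((x / 5)!) + Real.log ((x / 7)!) + Real.log ((x / 11)!) := by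
    simp only [log_factorial_div_eq]
    rw [← hψ4, ← hexc, psi_natCast]
    simp only [← sum_add_distrib]
    refine sum_le_sum fun m _ => ?_
    have h2 : ((x / m / 1 : ℕ) : ℝ) + ((x / m / 6 : ℕ) : ℝ) + ((x / m / 10 : ℕ) : ℝ) +
        ((x / m / 2310 : ℕ) : ℝ) ≤
        1 + (if 400 ≤ x / m then 1 else 0) + (if x / m ∈ exceptional then 1 else 0) +
        (x / m / 2 : ℕ) + (x / m / 3 : ℕ) + (x / m / 5 : ℕ) + (x / m / 7 : ℕ)
        + (x / m / 11 : ℕ) := by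
      have := floor_sum_le (x / m)
      rw [Nat.div_one]
      exact_mod_cast this
    have h3 : 0 ≤ vonMangoldt m := vonMangoldt_nonneg
    have := mul_le_mul_of_nonneg_left h2 h3
    linarith
  have a1 := (stirling_bounds (N := x) (by omega)).1
  have a2 := log_factorial_div_le (x := x) (d := 2) (by norm_num) (by omega)
  have a3 := log_factorial_div_le (x := x) (d := 3) (by norm_num) (by omega)
  have a5 := log_factorial_div_le (x := x) (d := 5) (by norm_num) (by omega)
  have a7 := log_factorial_div_le (x := x) (d := 7) (by norm_num) (by omega)
  have a11 := log_factorial_div_le (x := x) (d := 11) (by norm_num) (by omega)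
  have a6 := le_log_factorial_div (x := x) (d := 6) (by norm_num) (by omega)
  have a10 := le_log_factorial_div (x := x) (d := 10) (by norm_num) (by omega)
  have a2310 := le_log_factorial_div (x := x) (d := 2310) (by norm_num) (by omega)
  push_cast at a2 a3 a5 a6 a7 a10 a11 a2310
  rw [Real.log_div (by positivity) (by norm_num)] at a2 a3 a5 a6 a7 a10 a11 a2310
  rw [Nat.div_one] at h1
  have h4 := mul_le_mul_of_nonneg_right log_constants hx0.le
  have h5 := sum_exceptional_psi_le hx
  have p2 : (0 : ℝ) ≤ Real.log 2 := Real.log_nonneg (by norm_num)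
  have p3 : (0 : ℝ) ≤ Real.log 3 := Real.log_nonneg (by norm_num)
  have p5 : (0 : ℝ) ≤ Real.log 5 := Real.log_nonneg (by norm_num)
  have p6 : (0 : ℝ) ≤ Real.log 6 := Real.log_nonneg (by norm_num)
  have p7 : (0 : ℝ) ≤ Real.log 7 := Real.log_nonneg (by norm_num)
  have p10 : (0 : ℝ) ≤ Real.log 10 := Real.log_nonneg (by norm_num)
  have p11 : (0 : ℝ) ≤ Real.log 11 := Real.log_nonneg (by norm_num)
  have p2310 : (0 : ℝ) ≤ Real.log 2310 := Real.log_nonneg (by norm_num)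
  have hlogx : Real.log x ≤ x / 10 ^ 7 := by
    have : 1 ≤ √(x : ℝ) := Real.one_le_sqrt.2 (by linarith)
    nlinarith
  have h6 : Chebyshev.psi ((x / 400 : ℕ) : ℝ) ≤ 0.003467 * x := by
    have b1 : (1 : ℝ) ≤ ((x / 400 : ℕ) : ℝ) := by
      have : 1 ≤ x / 400 := by omega
      exact_mod_cast this
    have b2 : ((x / 400 : ℕ) : ℝ) ≤ x / 400 := by
      have := Nat.cast_div_le (α := ℝ) (m := x) (n := 400)
      push_cast at this
      exact this
    have b3 := Chebyshev.psi_le b1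
    have b4 : √((x / 400 : ℕ) : ℝ) * Real.log ((x / 400 : ℕ) : ℝ) ≤ √x * Real.log x := by
      have : 0 ≤ Real.log ((x / 400 : ℕ) : ℝ) := Real.log_nonneg b1
      have : ((x / 400 : ℕ) : ℝ) ≤ x := by linarith
      gcongr
    have b5 : Real.log 4 ≤ 1.3863 := by
      have : Real.log 4 = Real.log 2 + Real.log 2 := by
        rw [← Real.log_mul (by norm_num) (by norm_num)]; norm_num
      have := Real.log_two_lt_d9
      linarith
    have b6 : Real.log 4 * ((x / 400 : ℕ) : ℝ) ≤ 1.3863 * (x / 400) := by gcongr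
    linarith
  have e : ∀ d : ℝ, (x : ℝ) / d * (Real.log x - Real.log d) =
      1 / d * (x * Real.log x) - x * (Real.log d / d) := fun d => by ring
  rw [e] at a2 a3 a5 a6 a7 a10 a11 a2310
  generalize (x : ℝ) * Real.log x = T at *
  linarith

/-! ### The range n ≤ e ^ 36 -/

lemma psi_sq_ge {n : ℕ} (hl : 20 ≤ Real.log n) :
    0.957 * (n : ℝ) ^ 2 ≤ Chebyshev.psi ((n ^ 2 : ℕ) : ℝ) := by
  have h := psi_ge_large (x := n ^ 2) (by push_cast; rw [Real.log_pow]; push_cast; linarith)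
  push_cast at h ⊢
  exact h

/-- The rows claim for every `n ≤ e ^ 36`. -/
lemma rows_of_log_le_thirtysix {n : ℕ} (hn : 2 ≤ n) (hl : Real.log n ≤ 36) :
    n ≤ 4 * #(primeRows n) := by
  rcases le_or_gt (Real.log n) 20 with h20 | h20
  · exact rows_of_log_le_twenty hn h20
  by_contra hA
  push Not at hA
  have hn0 : (0 : ℝ) < n := by positivity
  have hbig : (400000000 : ℝ) ≤ n :=
    exp_twenty_ge.trans ((Real.le_log_iff_exp_le hn0).1 h20.le)
  have hbig' : 400000000 ≤ n := by exact_mod_cast hbig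
  have h0 := psi_le_of_rows (by omega) hA (card_primes_interval_le_large (N := n) (by omega))
  have h1 := bt_main_le (n := n) (l := Real.log n) (κ := 1.40228) (c := 0.54) (α := 0.9569)
    (by linarith) (by norm_num) (by nlinarith)
  have h2 := sqrt_div_five_le (n := n) (by omega)
  have h3 : 2 * Real.log n * ((Nat.sqrt (n / 5) : ℕ) + 5) ≤ 2 * 36 * (n / 500 + 5) := by
    gcongr
  have h4 := psi_sq_ge h20.le
  nlinarith

/-! ### Exponential sums -/

/-- The additive character `t ↦ exp (2 π i t)`. -/
noncomputable def ee (t : ℝ) : ℂ := Complex.exp ((2 * Real.pi * t : ℝ) * Complex.I)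

lemma ee_add (s t : ℝ) : ee (s + t) = ee s * ee t := by
  unfold ee
  rw [← Complex.exp_add]
  congr 1
  push_cast
  ring

lemma norm_ee (t : ℝ) : ‖ee t‖ = 1 := Complex.norm_exp_ofReal_mul_I _

lemma ee_zero : ee 0 = 1 := by simp [ee]

lemma ee_neg (t : ℝ) : ee (-t) = (starRingEnd ℂ) (ee t) := by
  unfold ee
  rw [← Complex.exp_conj, map_mul, Complex.conj_ofReal, Complex.conj_I]
  congr 1
  push_cast
  ring

lemma ee_int (m : ℤ) : ee m = 1 := by
  unfold ee
  rw [Complex.exp_eq_one_iff]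
  exact ⟨m, by push_cast; ring⟩

lemma ee_eq_one {t : ℝ} (h : ee t = 1) : ∃ m : ℤ, t = m := by
  unfold ee at h
  rw [Complex.exp_eq_one_iff] at h
  obtain ⟨m, hm⟩ := h
  refine ⟨m, ?_⟩
  have h1 : ((2 * Real.pi * t : ℝ) : ℂ) * Complex.I
      = ((2 * Real.pi * m : ℝ) : ℂ) * Complex.I := by
    rw [hm]; push_cast; ring
  have h2 := mul_right_cancel₀ Complex.I_ne_zero h1
  have h3 : 2 * Real.pi * t = 2 * Real.pi * m := by exact_mod_cast h2
  exact mul_left_cancel₀ (by positivity) h3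

lemma ee_nat_mul (x : ℕ) (t : ℝ) : ee (x * t) = ee t ^ x := by
  unfold ee
  rw [← Complex.exp_nat_mul]
  congr 1
  push_cast
  ring

/-- Orthogonality of the additive characters modulo `Q`. -/
lemma sum_ee {Q : ℕ} (hQ : 0 < Q) (m : ℤ) :
    ∑ x ∈ range Q, ee (x * ((m : ℝ) / Q)) = if (Q : ℤ) ∣ m then (Q : ℂ) else 0 := by
  have hQ' : (Q : ℝ) ≠ 0 := by positivity
  simp only [ee_nat_mul]
  split_ifs with h
  · obtain ⟨c, rfl⟩ := h
    have : ee (((Q * c : ℤ) : ℝ) / Q) = 1 := by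
      rw [show (((Q * c : ℤ) : ℝ) / Q) = ((c : ℤ) : ℝ) by push_cast; field_simp]
      exact ee_int c
    rw [this]; simp
  · have hne : ee ((m : ℝ) / Q) ≠ 1 := by
      intro h1
      obtain ⟨c, hc⟩ := ee_eq_one h1
      apply h
      refine ⟨c, ?_⟩
      have : (m : ℝ) = Q * c := by rw [← hc]; field_simp
      exact_mod_cast this
    rw [geom_sum_eq hne, ← ee_nat_mul, mul_div_cancel₀ _ hQ', ee_int]
    simp

/-- Parseval's identity modulo `Q` for frequencies that need not be distinct. -/
lemma parseval {ι : Type*} (s : Finset ι) (a : ι → ℂ) (r : ι → ℤ) {Q : ℕ} (hQ : 0 < Q) :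
    ∑ x ∈ range Q, ((‖∑ i ∈ s, a i * ee (x * ((r i : ℝ) / Q))‖ ^ 2 : ℝ) : ℂ)
      = Q * ∑ i ∈ s, ∑ j ∈ s,
        if (Q : ℤ) ∣ r i - r j then a i * (starRingEnd ℂ) (a j) else 0 := by
  have hterm : ∀ x : ℕ, ((‖∑ i ∈ s, a i * ee (x * ((r i : ℝ) / Q))‖ ^ 2 : ℝ) : ℂ)
      = ∑ i ∈ s, ∑ j ∈ s, a i * (starRingEnd ℂ) (a j)
          * ee (x * (((r i - r j : ℤ) : ℝ) / Q)) := by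
    intro x
    push_cast
    rw [← Complex.mul_conj', map_sum, sum_mul_sum]
    refine sum_congr rfl fun i _ => sum_congr rfl fun j _ => ?_
    rw [map_mul, ← ee_neg, show (x : ℝ) * (((r i : ℝ) - (r j : ℝ)) / Q)
      = x * ((r i : ℝ) / Q) + -(x * ((r j : ℝ) / Q)) by ring, ee_add]
    ring
  simp only [hterm]
  rw [sum_comm, mul_sum]
  refine sum_congr rfl fun i _ => ?_
  rw [sum_comm, mul_sum]
  refine sum_congr rfl fun j _ => ?_
  rw [← mul_sum, sum_ee hQ]
  split_ifs <;> ring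

lemma parseval_inj {ι : Type*} (s : Finset ι) (a : ι → ℂ) (r : ι → ℤ) {Q : ℕ} (hQ : 0 < Q)
    (hr : ∀ i ∈ s, ∀ j ∈ s, (Q : ℤ) ∣ r i - r j → i = j) :
    ∑ x ∈ range Q, ‖∑ i ∈ s, a i * ee (x * ((r i : ℝ) / Q))‖ ^ 2
      = Q * ∑ i ∈ s, ‖a i‖ ^ 2 := by
  classical
  have h := parseval s a r hQ
  have h2 : ∑ i ∈ s, ∑ j ∈ s,
        (if (Q : ℤ) ∣ r i - r j then a i * (starRingEnd ℂ) (a j) else 0)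
      = ∑ i ∈ s, ((‖a i‖ ^ 2 : ℝ) : ℂ) := by
    refine sum_congr rfl fun i hi => ?_
    rw [sum_eq_single_of_mem i hi]
    · rw [if_pos (by simp), Complex.mul_conj']; push_cast; rfl
    · intro j hj hji
      exact if_neg fun hd => hji (hr i hi j hj hd).symm
  rw [h2] at h
  exact_mod_cast h

lemma card_modEq_interval_le (q H : ℕ) (hq : 0 < q) (i : ℕ) :
    #{j ∈ range H | (q : ℤ) ∣ (i : ℤ) - (j : ℕ)} ≤ H / q + 1 := by
  have h1 : ({j ∈ range H | (q : ℤ) ∣ (i : ℤ) - (j : ℕ)} : Finset ℕ)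
      = {j ∈ range H | j ≡ i [MOD q]} := by
    refine filter_congr fun j _ => ?_
    exact (Nat.modEq_iff_dvd).symm
  rw [h1, ← Nat.count_eq_card_filter_range, Nat.count_modEq_card _ hq]
  split_ifs <;> omega

/-- Mean square over the nonzero residues modulo `q` of a sum of `H` consecutive values of
a character; removing the zero residue removes the main term `H ^ 2`. -/
lemma sum_consecutive_sq_le {q : ℕ} (hq : 0 < q) (c H : ℕ) (hc : Nat.Coprime c q) :
    ∑ x ∈ (range q).erase 0, ‖∑ i ∈ range H, ee (x * (((c * (i + 1) : ℕ) : ℝ) / q))‖ ^ 2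
      ≤ q * H := by
  have h := parseval (range H) (fun _ => (1 : ℂ)) (fun i => ((c * (i + 1) : ℕ) : ℤ)) hq
  have h2 : ∑ i ∈ range H, ∑ j ∈ range H,
        (if (q : ℤ) ∣ ((c * (i + 1) : ℕ) : ℤ) - ((c * (j + 1) : ℕ) : ℤ)
          then (1 : ℂ) * (starRingEnd ℂ) 1 else 0)
      = ((∑ i ∈ range H, #{j ∈ range H | (q : ℤ) ∣ (i : ℤ) - (j : ℕ)} : ℕ) : ℂ) := by
    push_cast
    refine sum_congr rfl fun i _ => ?_
    rw [← sum_filter]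
    simp only [map_one, mul_one, sum_const, nsmul_eq_mul]
    congr 2
    refine filter_congr fun j _ => ?_
    rw [show (c : ℤ) * (i + 1) - c * (j + 1) = c * (i - j) by ring]
    exact ⟨fun hd => (Nat.isCoprime_iff_coprime.2 hc.symm).dvd_of_dvd_mul_left hd,
      fun hd => hd.mul_left _⟩
  rw [h2] at h
  have h3 : ∑ x ∈ range q, ‖∑ i ∈ range H, ee (x * (((c * (i + 1) : ℕ) : ℝ) / q))‖ ^ 2
      = q * ((∑ i ∈ range H, #{j ∈ range H | (q : ℤ) ∣ (i : ℤ) - (j : ℕ)} : ℕ) : ℝ) := by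
    have h' := h
    simp only [one_mul, Int.cast_natCast] at h'
    exact_mod_cast h'
  have h4 : (∑ i ∈ range H, #{j ∈ range H | (q : ℤ) ∣ (i : ℤ) - (j : ℕ)}) ≤ H * (H / q + 1) := by
    refine (sum_le_sum fun i _ => card_modEq_interval_le q H hq i).trans ?_
    simp
  have h5 : (((∑ i ∈ range H, #{j ∈ range H | (q : ℤ) ∣ (i : ℤ) - (j : ℕ)}) : ℕ) : ℝ)
      ≤ H * ((H : ℝ) / q + 1) := by
    refine (Nat.cast_le.2 h4).trans ?_
    push_cast
    gcongr
    exact Nat.cast_div_le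
  rw [← add_sum_erase _ _ (mem_range.2 hq)] at h3
  have h6 : ‖∑ i ∈ range H, ee (((0 : ℕ) : ℝ) * (((c * (i + 1) : ℕ) : ℝ) / q))‖ ^ 2
      = (H : ℝ) ^ 2 := by
    simp [ee_zero]
  rw [h6] at h3
  have hq' : (0 : ℝ) < q := by exact_mod_cast hq
  have h7 : (q : ℝ) * (((∑ i ∈ range H, #{j ∈ range H | (q : ℤ) ∣ (i : ℤ) - (j : ℕ)}) : ℕ) : ℝ)
      ≤ (H : ℝ) ^ 2 + q * H := by
    refine (mul_le_mul_of_nonneg_left h5 hq'.le).trans (le_of_eq ?_)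
    field_simp
  linarith

/-! ### Fourier expansion of the sieve majorant -/

/-- The product of the primes `7 ≤ p ≤ R`, a common period of all the sieve weights. -/
def sieveP (R : ℕ) : ℕ := ∏ p ∈ sievePrimes R, p

lemma prime_of_mem_sievePrimes {R p : ℕ} (hp : p ∈ sievePrimes R) : p.Prime ∧ 7 ≤ p ∧ p ≤ R := by
  simp only [sievePrimes, mem_filter, mem_Icc] at hp
  exact ⟨hp.2, hp.1⟩

lemma sieveP_pos (R : ℕ) : 0 < sieveP R :=
  prod_pos fun _ hp => (prime_of_mem_sievePrimes hp).1.pos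

lemma squarefree_sieveP (R : ℕ) : Squarefree (sieveP R) := by
  refine squarefree_prod_of_pairwise_isCoprime ?_ fun p hp =>
    (prime_of_mem_sievePrimes hp).1.prime.squarefree
  intro p hp q hq hpq
  exact (Nat.coprime_iff_isRelPrime).1 ((Nat.coprime_primes (prime_of_mem_sievePrimes hp).1
    (prime_of_mem_sievePrimes hq).1).2 hpq)

lemma coprime_sieveP (R : ℕ) : Nat.Coprime (sieveP R) 30 := by
  refine Nat.Coprime.prod_left fun p hp => ?_
  obtain ⟨h1, h2, -⟩ := prime_of_mem_sievePrimes hp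
  exact coprime_thirty_of_prime h1 (by omega)

lemma dvd_sieveP {R d : ℕ} (hd : d ∈ sieveRange R) : d ∣ sieveP R := by
  have h := (mem_sieveRange.1 hd).2.1
  rw [← Nat.prod_primeFactors_of_squarefree h]
  exact prod_dvd_prod_of_subset _ _ _ (primeFactors_subset hd)

/-- The reduced denominator of the fraction `h / P`, where `P = sieveP R`. -/
def den (R h : ℕ) : ℕ := sieveP R / (h.gcd (sieveP R))

lemma den_mul_gcd (R h : ℕ) : den R h * h.gcd (sieveP R) = sieveP R :=
  Nat.div_mul_cancel (Nat.gcd_dvd_right _ _)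

lemma den_dvd (R h : ℕ) : den R h ∣ sieveP R := ⟨_, (den_mul_gcd R h).symm⟩

lemma den_pos (R h : ℕ) : 0 < den R h := Nat.pos_of_dvd_of_pos (den_dvd R h) (sieveP_pos R)

lemma sieveP_dvd_den_mul (R h : ℕ) : sieveP R ∣ den R h * h := by
  conv_lhs => rw [← den_mul_gcd R h]
  exact mul_dvd_mul_left _ (Nat.gcd_dvd_left _ _)

lemma div_dvd_iff_den_dvd {R e h : ℕ} (he : e ∣ sieveP R) :
    sieveP R / e ∣ h ↔ den R h ∣ e := by
  have hP := sieveP_pos R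
  obtain ⟨e', he'⟩ := he
  have he0 : 0 < e := Nat.pos_of_ne_zero (by rintro rfl; simp at he'; omega)
  have he0' : 0 < e' := Nat.pos_of_ne_zero (by rintro rfl; simp at he'; omega)
  have hq := den_mul_gcd R h
  have hq0 := den_pos R h
  have h1 : sieveP R / e = e' := by rw [he']; exact Nat.mul_div_cancel_left _ he0
  have h2 : e' ∣ h ↔ e' ∣ h.gcd (sieveP R) :=
    ⟨fun hd => Nat.dvd_gcd hd (he' ▸ dvd_mul_left _ _), fun hd => hd.trans (Nat.gcd_dvd_left _ _)⟩
  rw [h1, h2]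
  generalize h.gcd (sieveP R) = g at *
  generalize den R h = q at *
  constructor
  · rintro ⟨t, rfl⟩
    refine ⟨t, ?_⟩
    have : e' * (q * t) = e' * e := by rw [mul_comm e' e, ← he', ← hq]; ring
    exact (Nat.eq_of_mul_eq_mul_left he0' this).symm
  · rintro ⟨t, rfl⟩
    refine ⟨t, ?_⟩
    have : q * g = q * (e' * t) := by rw [hq, he']; ring
    exact Nat.eq_of_mul_eq_mul_left hq0 this

lemma den_eq_one {R h : ℕ} (hh : h < sieveP R) : den R h = 1 ↔ h = 0 := by
  rw [← Nat.dvd_one, ← div_dvd_iff_den_dvd (one_dvd _), Nat.div_one]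
  exact ⟨fun hd => Nat.eq_zero_of_dvd_of_lt hd hh, fun h0 => h0 ▸ dvd_zero _⟩

/-- The multiples of `P / e` in `[0, P)` correspond to `[0, e)`. -/
lemma sum_multiples {M : Type*} [AddCommMonoid M] {R e : ℕ} (he : e ∣ sieveP R) (f : ℕ → M) :
    ∑ h ∈ range (sieveP R) with den R h ∣ e, f h = ∑ j ∈ range e, f (sieveP R / e * j) := by
  have hP := sieveP_pos R
  have he0 : 0 < e := Nat.pos_of_dvd_of_pos he hP
  have hc0 : 0 < sieveP R / e := Nat.div_pos (Nat.le_of_dvd hP he) he0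
  have hce : sieveP R / e * e = sieveP R := Nat.div_mul_cancel he
  symm
  refine sum_nbij (fun j => sieveP R / e * j) ?_ ?_ ?_ (fun _ _ => rfl)
  · intro j hj
    simp only [mem_filter, mem_range] at hj ⊢
    refine ⟨?_, (div_dvd_iff_den_dvd he).1 (dvd_mul_right _ _)⟩
    calc _ < sieveP R / e * e := Nat.mul_lt_mul_of_pos_left hj hc0
      _ = _ := hce
  · intro j _ j' _ hjj
    exact Nat.eq_of_mul_eq_mul_left hc0 hjj
  · intro h hh
    simp only [coe_filter, mem_range, Set.mem_ofPred_eq] at hh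
    obtain ⟨j, rfl⟩ := (div_dvd_iff_den_dvd he).2 hh.2
    refine ⟨j, ?_, rfl⟩
    simp only [coe_range, Set.mem_Iio]
    exact Nat.lt_of_mul_lt_mul_left (a := sieveP R / e) (by rw [hce]; exact hh.1)

/-- The indicator function of the multiples of `e` as an average of characters. -/
lemma sum_den_dvd {R e : ℕ} (he : e ∣ sieveP R) (m : ℕ) :
    ∑ h ∈ range (sieveP R) with den R h ∣ e, ee (h * ((m : ℝ) / sieveP R))
      = if e ∣ m then (e : ℂ) else 0 := by
  have hP := sieveP_pos R
  have he0 : 0 < e := Nat.pos_of_dvd_of_pos he hP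
  have hce : ((sieveP R / e : ℕ) : ℝ) * e = sieveP R := by
    exact_mod_cast Nat.div_mul_cancel he
  rw [sum_multiples he]
  have h := sum_ee he0 (m : ℤ)
  simp only [Int.natCast_dvd_natCast] at h
  rw [← h]
  refine sum_congr rfl fun j _ => ?_
  congr 1
  have hc0 : ((sieveP R / e : ℕ) : ℝ) ≠ 0 := by
    intro h0; rw [h0, zero_mul] at hce
    exact absurd hce.symm (by positivity)
  have he1 : (e : ℝ) ≠ 0 := by positivity
  rw [← hce]
  push_cast
  field_simp

/-- Fourier expansion of the sieve majorant. -/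
lemma selNu_fourier (R m : ℕ) :
    (selNu R m : ℂ) = ∑ h ∈ range (sieveP R),
      (selW R (den R h) : ℂ) * ee (h * ((m : ℝ) / sieveP R)) := by
  have hP := sieveP_pos R
  rw [selNu_eq]
  simp only [selW]
  push_cast
  simp only [sum_mul]
  conv_rhs => rw [sum_comm]
  refine sum_congr rfl fun d hd => ?_
  conv_rhs => rw [sum_comm]
  refine sum_congr rfl fun d' hd' => ?_
  have he : d.lcm d' ∣ sieveP R := Nat.lcm_dvd (dvd_sieveP hd) (dvd_sieveP hd')
  have he0 : ((d.lcm d' : ℕ) : ℂ) ≠ 0 := by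
    exact_mod_cast (Nat.pos_of_dvd_of_pos he hP).ne'
  have h1 := sum_den_dvd he m
  have h2 : ∀ h : ℕ, (((if den R h ∣ d.lcm d' then lam R d * lam R d' / (d.lcm d' : ℕ) else 0 : ℝ)) : ℂ)
      * ee (h * ((m : ℝ) / sieveP R)) = if den R h ∣ d.lcm d' then
        ((lam R d * lam R d' / (d.lcm d' : ℕ) : ℝ) : ℂ) * ee (h * ((m : ℝ) / sieveP R)) else 0 := by
    intro h; split_ifs <;> simp
  simp only [h2]
  rw [← sum_filter, ← mul_sum, h1]
  split_ifs
  · push_cast; field_simp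
  · simp

/-- The Fourier coefficients are supported on denominators up to `R ^ 2`. -/
lemma selW_eq_zero {R q : ℕ} (hq : R ^ 2 < q) : selW R q = 0 := by
  refine sum_eq_zero fun d hd => sum_eq_zero fun d' hd' => if_neg fun hdv => ?_
  have h1 := (mem_sieveRange.1 hd).1
  have h2 := (mem_sieveRange.1 hd').1
  have h3 : 0 < d.lcm d' := Nat.lcm_pos h1.1 h2.1
  have h4 : d.lcm d' ≤ d * d' := Nat.le_of_dvd (Nat.mul_pos h1.1 h2.1) (Nat.lcm_dvd_mul d d')
  have h5 : d * d' ≤ R * R := Nat.mul_le_mul h1.2 h2.2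
  have h6 := Nat.le_of_dvd h3 hdv
  nlinarith

/-! ### A large sieve inequality -/

/-- Numerators `h` of the nonzero fractions `h / P` in `[0, 1)` with reduced denominator at
most `D`. -/
def freqs (R D : ℕ) : Finset ℕ := {h ∈ range (sieveP R) | h ≠ 0 ∧ den R h ≤ D}

/-- Two such fractions, multiplied by `30`, are `1 / D ^ 2` apart modulo `1`, so the
frequencies `k / (P D²) + 30 h / P` with `k < P` are pairwise distinct modulo `1`. -/
lemma freqs_separated {R D : ℕ} (hD : 0 < D) {h h' k k' : ℕ}
    (hh : h ∈ freqs R D) (hh' : h' ∈ freqs R D) (hk : k < sieveP R) (hk' : k' < sieveP R)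
    (hdvd : ((sieveP R * D ^ 2 : ℕ) : ℤ) ∣
      ((k : ℤ) + 30 * h * D ^ 2) - ((k' : ℤ) + 30 * h' * D ^ 2)) :
    k = k' ∧ h = h' := by
  have hP := sieveP_pos R
  simp only [freqs, mem_filter, mem_range] at hh hh'
  obtain ⟨a, ha⟩ := sieveP_dvd_den_mul R h
  obtain ⟨a', ha'⟩ := sieveP_dvd_den_mul R h'
  have hcop := coprime_sieveP R
  obtain ⟨hh1, -, hq⟩ := hh
  obtain ⟨hh2, -, hq'⟩ := hh'
  have hq0 := den_pos R h
  have hq0' := den_pos R h'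
  generalize den R h = q at *
  generalize den R h' = q' at *
  generalize sieveP R = P at *
  have hk_eq : (k : ℤ) = k' := by
    have h1 : ((P * D ^ 2 : ℕ) : ℤ) ∣ q * q' * ((k : ℤ) - k') := by
      have h2 := hdvd.mul_left ((q : ℤ) * q')
      have h3 : (q : ℤ) * q' * (((k : ℤ) + 30 * h * D ^ 2) - ((k' : ℤ) + 30 * h' * D ^ 2))
          = q * q' * ((k : ℤ) - k') + ((P * D ^ 2 : ℕ) : ℤ) * (30 * (q' * a - q * a')) := by
        have e1 : (q : ℤ) * h = P * a := by exact_mod_cast ha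
        have e2 : (q' : ℤ) * h' = P * a' := by exact_mod_cast ha'
        push_cast
        linear_combination (30 * D ^ 2 * q' : ℤ) * e1 - (30 * D ^ 2 * q : ℤ) * e2
      rw [h3] at h2
      exact (dvd_add_left (dvd_mul_right _ _)).1 h2
    have h4 : |(q : ℤ) * q' * ((k : ℤ) - k')| < ((P * D ^ 2 : ℕ) : ℤ) := by
      rw [abs_mul]
      have h5 : |(k : ℤ) - k'| < P := by rw [abs_lt]; constructor <;> omega
      have h6 : |(q : ℤ) * q'| ≤ D ^ 2 := by
        rw [abs_of_nonneg (by positivity), pow_two]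
        exact_mod_cast Nat.mul_le_mul hq hq'
      have h7 : (0 : ℤ) < D ^ 2 := by positivity
      push_cast
      nlinarith [abs_nonneg ((k : ℤ) - k')]
    have h8 := Int.eq_zero_of_abs_lt_dvd h1 h4
    have h9 : (q : ℤ) * q' ≠ 0 := by positivity
    have := (mul_eq_zero.1 h8).resolve_left h9
    linarith
  refine ⟨by exact_mod_cast hk_eq, ?_⟩
  rw [hk_eq, show ((k' : ℤ) + 30 * h * D ^ 2) - ((k' : ℤ) + 30 * h' * D ^ 2)
    = (30 * ((h : ℤ) - h')) * D ^ 2 by ring] at hdvd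
  push_cast at hdvd
  have h1 : (P : ℤ) ∣ 30 * ((h : ℤ) - h') :=
    (mul_dvd_mul_iff_right (by positivity : ((D : ℤ) ^ 2) ≠ 0)).1 hdvd
  have h2 : (P : ℤ) ∣ (h : ℤ) - h' :=
    (Nat.isCoprime_iff_coprime.2 hcop).dvd_of_dvd_mul_left (by exact_mod_cast h1)
  have h3 := Int.eq_zero_of_abs_lt_dvd h2 (by rw [abs_lt]; constructor <;> omega)
  omega

/-- A geometric sum whose phases stay within a quarter turn has size comparable with its
length. -/
lemma geom_lower {M : ℕ} (t : ℝ) (h0 : 0 ≤ t) (h1 : t * M ≤ 1 / 4) :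
    (M : ℝ) ^ 2 / 2 ≤ ‖∑ k ∈ range M, ee (t * k)‖ ^ 2 := by
  have h2 : ‖∑ k ∈ range M, ee (t * k)‖ = ‖∑ k ∈ range M, ee (t * k - 1 / 8)‖ := by
    have : ∑ k ∈ range M, ee (t * k - 1 / 8) = (∑ k ∈ range M, ee (t * k)) * ee (-(1 / 8)) := by
      rw [sum_mul]
      refine sum_congr rfl fun k _ => ?_
      rw [← ee_add, sub_eq_add_neg]
    rw [this, norm_mul, norm_ee, mul_one]
  have h3 : ∀ k ∈ range M, √2 / 2 ≤ (ee (t * k - 1 / 8)).re := by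
    intro k hk
    have hk' : (k : ℝ) ≤ M := by exact_mod_cast (mem_range.1 hk).le
    have h4 : 0 ≤ t * k := by positivity
    have h5 : t * k ≤ 1 / 4 := (mul_le_mul_of_nonneg_left hk' h0).trans h1
    unfold ee
    rw [Complex.exp_ofReal_mul_I_re, ← Real.cos_pi_div_four,
      ← Real.cos_abs (2 * Real.pi * (t * k - 1 / 8))]
    have hpi := Real.pi_pos
    refine Real.cos_le_cos_of_nonneg_of_le_pi (abs_nonneg _) (by linarith) ?_
    rw [abs_le]
    constructor <;> nlinarith
  have h6 : (M : ℝ) * (√2 / 2) ≤ ‖∑ k ∈ range M, ee (t * k)‖ := by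
    rw [h2]
    refine le_trans ?_ (Complex.re_le_norm _)
    rw [Complex.re_sum]
    refine le_trans (le_of_eq ?_) (sum_le_sum h3)
    simp
  calc (M : ℝ) ^ 2 / 2 = ((M : ℝ) * (√2 / 2)) ^ 2 := by
        rw [mul_pow, div_pow, Real.sq_sqrt (by norm_num)]; ring
    _ ≤ _ := by gcongr

/-- A large sieve inequality at the fractions `30 h / P`. -/
lemma large_sieve {R D X : ℕ} (hD : 0 < D) (hX : 4 * X ≤ D ^ 2) (c : ℕ → ℂ) :
    ∑ x ∈ range X, ‖∑ h ∈ freqs R D, c h * ee (x * ((30 * h : ℕ) / (sieveP R : ℝ)))‖ ^ 2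
      ≤ 2 * (D : ℝ) ^ 2 * ∑ h ∈ freqs R D, ‖c h‖ ^ 2 := by
  have hP := sieveP_pos R
  have hP' : (0 : ℝ) < sieveP R := by exact_mod_cast hP
  have hD' : (0 : ℝ) < D := by exact_mod_cast hD
  set P := sieveP R with hPdef
  have hQ : 0 < P * D ^ 2 := by positivity
  set S : ℕ → ℂ := fun x => ∑ h ∈ freqs R D, c h * ee (x * ((30 * h : ℕ) / (P : ℝ))) with hS
  have hpar := parseval_inj (range P ×ˢ freqs R D) (fun i => c i.2)
    (fun i => (i.1 : ℤ) + 30 * i.2 * D ^ 2) hQ (by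
      rintro ⟨k, h⟩ hi ⟨k', h'⟩ hi' hd
      simp only [mem_product, mem_range] at hi hi'
      obtain ⟨e1, e2⟩ := freqs_separated hD hi.2 hi'.2 hi.1 hi'.1 hd
      rw [e1, e2])
  have hprod : ∀ x : ℕ, ∑ i ∈ range P ×ˢ freqs R D,
        c i.2 * ee (x * ((((i.1 : ℤ) + 30 * i.2 * D ^ 2 : ℤ) : ℝ) / ((P * D ^ 2 : ℕ) : ℝ)))
      = (∑ k ∈ range P, ee ((x / ((P * D ^ 2 : ℕ) : ℝ)) * k)) * S x := by
    intro x
    rw [sum_product, hS, sum_mul_sum]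
    refine sum_congr rfl fun k _ => sum_congr rfl fun h _ => ?_
    rw [show (x : ℝ) * ((((k : ℤ) + 30 * h * D ^ 2 : ℤ) : ℝ) / ((P * D ^ 2 : ℕ) : ℝ))
      = (x / ((P * D ^ 2 : ℕ) : ℝ)) * k + x * ((30 * h : ℕ) / (P : ℝ)) by
        push_cast; field_simp, ee_add]
    ring
  simp only [hprod, norm_mul, mul_pow] at hpar
  rw [sum_product] at hpar
  simp only [sum_const, card_range, nsmul_eq_mul] at hpar
  have hXQ : X ≤ P * D ^ 2 := by nlinarith
  have hlow : ∑ x ∈ range X, (P : ℝ) ^ 2 / 2 * ‖S x‖ ^ 2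
      ≤ ((P * D ^ 2 : ℕ) : ℝ) * (P * ∑ h ∈ freqs R D, ‖c h‖ ^ 2) := by
    rw [← hpar]
    refine (sum_le_sum fun x hx => ?_).trans
      (sum_le_sum_of_subset_of_nonneg (range_subset_range.2 hXQ) fun x _ _ => by positivity)
    gcongr
    refine geom_lower _ (by positivity) ?_
    have hx' : (x : ℝ) ≤ X := by exact_mod_cast (mem_range.1 hx).le
    have hX' : 4 * (X : ℝ) ≤ (D : ℝ) ^ 2 := by exact_mod_cast hX
    push_cast
    rw [show (x : ℝ) / (P * (D : ℝ) ^ 2) * P = x / (D : ℝ) ^ 2 by field_simp,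
      div_le_iff₀ (by positivity)]
    linarith
  rw [← mul_sum] at hlow
  push_cast at hlow
  have hP2 : (0 : ℝ) < (P : ℝ) ^ 2 / 2 := by positivity
  refine le_of_mul_le_mul_left (hlow.trans (le_of_eq ?_)) hP2
  ring

/-! ### Variance of the majorant -/

/-- Mean square of the character sums of length `H` over the fractions with a given
denominator `q > 1`. -/
lemma sum_char_den_le {R q : ℕ} (hq : q ∣ sieveP R) (hq1 : q ≠ 1) (H : ℕ) :
    ∑ h ∈ range (sieveP R) with den R h = q,
      ‖∑ i ∈ range H, ee (h * (((30 * (i + 1) : ℕ) : ℝ) / sieveP R))‖ ^ 2 ≤ q * H := by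
  have hP := sieveP_pos R
  have hq0 : 0 < q := Nat.pos_of_dvd_of_pos hq hP
  have hc0 : 0 < sieveP R / q := Nat.div_pos (Nat.le_of_dvd hP hq) hq0
  have hcop : Nat.Coprime 30 q := ((coprime_sieveP R).coprime_dvd_left hq).symm
  set f : ℕ → ℝ := fun h => if h = 0 then 0 else
    ‖∑ i ∈ range H, ee (h * (((30 * (i + 1) : ℕ) : ℝ) / sieveP R))‖ ^ 2 with hf
  have hf0 : ∀ h, 0 ≤ f h := fun h => by simp only [hf]; split_ifs <;> positivity
  have h1 : ∑ h ∈ range (sieveP R) with den R h = q,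
      ‖∑ i ∈ range H, ee (h * (((30 * (i + 1) : ℕ) : ℝ) / sieveP R))‖ ^ 2
      ≤ ∑ h ∈ range (sieveP R) with den R h ∣ q, f h := by
    have : ∑ h ∈ range (sieveP R) with den R h = q,
      ‖∑ i ∈ range H, ee (h * (((30 * (i + 1) : ℕ) : ℝ) / sieveP R))‖ ^ 2
      = ∑ h ∈ range (sieveP R) with den R h = q, f h := by
      refine sum_congr rfl fun h hh => ?_
      simp only [mem_filter, mem_range] at hh
      simp only [hf]
      rw [if_neg]
      intro h0
      exact hq1 (hh.2 ▸ (den_eq_one hh.1).2 h0)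
    rw [this]
    refine sum_le_sum_of_subset_of_nonneg ?_ fun h _ _ => hf0 h
    intro h hh
    simp only [mem_filter] at hh ⊢
    exact ⟨hh.1, hh.2 ▸ dvd_rfl⟩
  refine h1.trans ?_
  rw [sum_multiples hq]
  refine le_trans (le_of_eq ?_) (sum_consecutive_sq_le hq0 30 H hcop)
  rw [← add_sum_erase _ _ (mem_range.2 hq0)]
  have hz : f (sieveP R / q * 0) = 0 := by simp [hf]
  rw [hz, zero_add]
  refine sum_congr rfl fun j hj => ?_
  have hj0 : j ≠ 0 := (mem_erase.1 hj).1
  simp only [hf]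
  rw [if_neg (by positivity)]
  congr 2
  refine sum_congr rfl fun i _ => ?_
  congr 1
  have hce : ((sieveP R / q : ℕ) : ℝ) * q = sieveP R := by
    exact_mod_cast Nat.div_mul_cancel hq
  have hc1 : ((sieveP R / q : ℕ) : ℝ) ≠ 0 := by positivity
  rw [← hce]
  push_cast
  field_simp

/-- The sum `∑ 9 ^ ω(q) q³ / φ(q)⁴` that bounds the variance of the majorant. -/
noncomputable def varT (D : ℕ) : ℝ :=
  ∑ q ∈ sieveRange D, 9 ^ ω q * (q : ℝ) ^ 3 / (φ q : ℝ) ^ 4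

lemma den_mem {R D h : ℕ} (hh : h ∈ freqs R D) : den R h ∈ sieveRange D ∧ den R h ≠ 1 := by
  simp only [freqs, mem_filter, mem_range] at hh
  refine ⟨mem_sieveRange.2 ⟨⟨den_pos R h, hh.2.2⟩,
    (squarefree_sieveP R).squarefree_of_dvd (den_dvd R h),
    (coprime_sieveP R).coprime_dvd_left (den_dvd R h)⟩, fun h1 => hh.2.1 ((den_eq_one hh.1).1 h1)⟩

lemma sum_coeff_sq_le {R D : ℕ} (hR : 1 ≤ R) (H : ℕ) :
    ∑ h ∈ freqs R D, (selW R (den R h)) ^ 2 *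
      ‖∑ i ∈ range H, ee (h * (((30 * (i + 1) : ℕ) : ℝ) / sieveP R))‖ ^ 2
      ≤ H * varT D / selL R ^ 2 := by
  have hL := selL_pos hR
  rw [← sum_fiberwise_of_maps_to (s := freqs R D) (t := sieveRange D) (g := den R)
    (fun h hh => (den_mem hh).1)]
  rw [varT, mul_sum, sum_div]
  refine sum_le_sum fun q hq => ?_
  have hsq := (mem_sieveRange.1 hq).2.1
  have hq0 : 0 < q := (mem_sieveRange.1 hq).1.1
  have hphi : (0 : ℝ) < φ q := by exact_mod_cast Nat.totient_pos.2 hq0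
  rcases (filter (fun h => den R h = q) (freqs R D)).eq_empty_or_nonempty with he | ⟨h0, hh0⟩
  · rw [he, sum_empty]; positivity
  obtain ⟨hh0, hq'⟩ := mem_filter.1 hh0
  have hdvd : q ∣ sieveP R := hq' ▸ den_dvd R h0
  have hne : q ≠ 1 := hq' ▸ (den_mem hh0).2
  have h1 : ∑ h ∈ freqs R D with den R h = q, (selW R (den R h)) ^ 2 *
      ‖∑ i ∈ range H, ee (h * (((30 * (i + 1) : ℕ) : ℝ) / sieveP R))‖ ^ 2
      = selW R q ^ 2 * ∑ h ∈ freqs R D with den R h = q,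
      ‖∑ i ∈ range H, ee (h * (((30 * (i + 1) : ℕ) : ℝ) / sieveP R))‖ ^ 2 := by
    rw [mul_sum]
    refine sum_congr rfl fun h hh => ?_
    rw [(mem_filter.1 hh).2]
  have h2 : ∑ h ∈ freqs R D with den R h = q,
      ‖∑ i ∈ range H, ee (h * (((30 * (i + 1) : ℕ) : ℝ) / sieveP R))‖ ^ 2 ≤ q * H := by
    refine le_trans (sum_le_sum_of_subset_of_nonneg ?_ fun h _ _ => by positivity)
      (sum_char_den_le hdvd hne H)
    intro h hh
    simp only [freqs, mem_filter] at hh ⊢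
    exact ⟨hh.1.1, hh.2⟩
  have h3 : selW R q ^ 2 ≤ (3 ^ ω q * q / ((φ q : ℝ) ^ 2 * selL R)) ^ 2 := by
    rw [← sq_abs]
    have := abs_selW_le hR hsq
    gcongr
  rw [h1]
  calc _ ≤ (3 ^ ω q * q / ((φ q : ℝ) ^ 2 * selL R)) ^ 2 * (q * H) := by gcongr
    _ = _ := by
      rw [show (9 : ℝ) = 3 ^ 2 by norm_num, ← pow_mul, mul_comm 2, pow_mul]
      field_simp

/-- Variance of the sieve majorant in short segments of the progression `b` modulo `30`. -/
lemma variance_le {R X : ℕ} (hR : 1 ≤ R) (b H : ℕ) (hX : 4 * X ≤ (R ^ 2) ^ 2) :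
    ∑ x ∈ range X, (∑ i ∈ range H, selNu R (30 * (x + (i + 1)) + b) - H / selL R) ^ 2
      ≤ 2 * ((R ^ 2 : ℕ) : ℝ) ^ 2 * (H * varT (R ^ 2) / selL R ^ 2) := by
  have hP := sieveP_pos R
  have hP' : (0 : ℝ) < sieveP R := by exact_mod_cast hP
  set K : ℕ → ℂ := fun h => ∑ i ∈ range H, ee (h * (((30 * (i + 1) : ℕ) : ℝ) / sieveP R)) with hK
  set c : ℕ → ℂ := fun h => (selW R (den R h) : ℂ) * ee (h * ((b : ℝ) / sieveP R)) * K h with hc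
  have hfour : ∀ x : ℕ, ((∑ i ∈ range H, selNu R (30 * (x + (i + 1)) + b) - H / selL R : ℝ) : ℂ)
      = ∑ h ∈ freqs R (R ^ 2), c h * ee (x * ((30 * h : ℕ) / (sieveP R : ℝ))) := by
    intro x
    have h1 : ((∑ i ∈ range H, selNu R (30 * (x + (i + 1)) + b) : ℝ) : ℂ)
        = ∑ h ∈ range (sieveP R), c h * ee (x * ((30 * h : ℕ) / (sieveP R : ℝ))) := by
      push_cast
      simp only [selNu_fourier]
      rw [sum_comm]
      refine sum_congr rfl fun h _ => ?_
      simp only [hc, hK, mul_sum, sum_mul]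
      refine sum_congr rfl fun i _ => ?_
      rw [show (h : ℝ) * (((30 * (x + (i + 1)) + b : ℕ) : ℝ) / sieveP R)
        = h * ((b : ℝ) / sieveP R) + h * (((30 * (i + 1) : ℕ) : ℝ) / sieveP R)
          + x * ((30 * h : ℕ) / (sieveP R : ℝ)) by push_cast; field_simp; ring, ee_add, ee_add]
      push_cast
      ring
    have h2 : ((H / selL R : ℝ) : ℂ) = c 0 * ee (x * ((30 * 0 : ℕ) / (sieveP R : ℝ))) := by
      have : den R 0 = 1 := (den_eq_one hP).2 rfl
      simp only [hc, hK, this, selW_one hR]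
      simp [ee_zero]
      ring
    rw [Complex.ofReal_sub, h1, h2, ← add_sum_erase _ _ (mem_range.2 hP), add_sub_cancel_left]
    symm
    refine sum_subset ?_ ?_
    · intro h hh
      simp only [freqs, mem_filter] at hh
      exact mem_erase.2 ⟨hh.2.1, hh.1⟩
    · intro h hh hn
      have hh' := mem_erase.1 hh
      have : R ^ 2 < den R h := by
        by_contra hle
        exact hn (mem_filter.2 ⟨hh'.2, hh'.1, not_lt.1 hle⟩)
      simp only [hc, selW_eq_zero this]
      simp
  have hsq : ∀ x : ℕ, (∑ i ∈ range H, selNu R (30 * (x + (i + 1)) + b) - H / selL R) ^ 2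
      = ‖∑ h ∈ freqs R (R ^ 2), c h * ee (x * ((30 * h : ℕ) / (sieveP R : ℝ)))‖ ^ 2 := by
    intro x
    rw [← hfour, Complex.norm_real, Real.norm_eq_abs, sq_abs]
  simp only [hsq]
  refine (large_sieve (by positivity) hX c).trans ?_
  gcongr
  refine le_trans (le_of_eq ?_) (sum_coeff_sq_le hR H)
  refine sum_congr rfl fun h _ => ?_
  simp only [hc, hK, norm_mul, norm_ee, mul_one, mul_pow, Complex.norm_real, Real.norm_eq_abs, sq_abs]

/-! ### The variance sum -/

/-- The fourth root. -/
noncomputable def rt4 (x : ℝ) : ℝ := √(√x)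

lemma rt4_nonneg (x : ℝ) : 0 ≤ rt4 x := Real.sqrt_nonneg _

lemma rt4_pos {x : ℝ} (hx : 0 < x) : 0 < rt4 x := Real.sqrt_pos.2 (Real.sqrt_pos.2 hx)

lemma rt4_pow {x : ℝ} (hx : 0 ≤ x) : rt4 x ^ 4 = x := by
  rw [rt4, show (4 : ℕ) = 2 * 2 by norm_num, pow_mul, Real.sq_sqrt (Real.sqrt_nonneg _),
    Real.sq_sqrt hx]

lemma rt4_mono {x y : ℝ} (h : x ≤ y) : rt4 x ≤ rt4 y := Real.sqrt_le_sqrt (Real.sqrt_le_sqrt h)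

lemma le_rt4 {c x : ℝ} (h : c ^ 4 ≤ x) : c ≤ rt4 x := by
  refine Real.le_sqrt_of_sq_le (Real.le_sqrt_of_sq_le ?_)
  rw [← pow_mul]; exact h

lemma rt4_prod (s : Finset ℕ) : rt4 (∏ p ∈ s, (p : ℝ)) = ∏ p ∈ s, rt4 p := by
  unfold rt4
  rw [Real.sqrt_prod, Real.sqrt_prod]
  · exact fun p _ => Real.sqrt_nonneg _
  · exact fun p _ => Nat.cast_nonneg _

/-- Partial summation against the wheel: a bound for `∑ m ^ (-5/4)` over `m > 36` coprime
to `30`. -/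
lemma sum_wheel_tail_le (N : ℕ) (hN : 36 ≤ N) :
    ∑ m ∈ Ioc 36 N with Nat.Coprime m 30, 1 / ((m : ℝ) * rt4 m) ≤ 0.4532 := by
  have key : ∑ m ∈ Ioc 36 N with Nat.Coprime m 30, 1 / ((m : ℝ) * rt4 m) ≤
      (wheel N - (4 * N + 14) / 15) * (1 / ((N : ℝ) * rt4 N)) + 0.4532 - 16 / 15 / rt4 N := by
    induction N, hN using Nat.le_induction with
    | base =>
      have h2 : wheel 36 = 9 := by unfold wheel; decide +kernel
      have h3 : (2.449 : ℝ) ≤ rt4 36 := le_rt4 (by norm_num)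
      rw [h2]
      simp only [Ioc_self, filter_empty, sum_empty]
      push_cast
      have h4 : 1 / rt4 36 ≤ 1 / 2.449 := by gcongr
      rw [show ((9 : ℝ) - (4 * 36 + 14) / 15) * (1 / (36 * rt4 36)) + 0.4532 - 16 / 15 / rt4 36
        = 0.4532 - (16 / 15 + 23 / 540) * (1 / rt4 36) by ring]
      linarith
    | succ N hN ih =>
      have hN0 : (0 : ℝ) < N := by exact_mod_cast (by omega : 0 < N)
      have hI : Ioc 36 (N + 1) = insert (N + 1) (Ioc 36 N) := by
        ext m; simp only [mem_Ioc, mem_insert]; omega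
      have hsum : ∑ m ∈ Ioc 36 (N + 1) with Nat.Coprime m 30, 1 / ((m : ℝ) * rt4 m)
          = ∑ m ∈ Ioc 36 N with Nat.Coprime m 30, 1 / ((m : ℝ) * rt4 m)
            + (if Nat.Coprime (N + 1) 30 then (1 : ℝ) else 0)
              * (1 / (((N : ℝ) + 1) * rt4 ((N : ℝ) + 1))) := by
        rw [hI, filter_insert]
        split_ifs with hc
        · rw [sum_insert (by simp)]
          push_cast; ring
        · simp
      rw [hsum]
      have h2 : (wheel (N + 1) : ℝ) = wheel N + if Nat.Coprime (N + 1) 30 then 1 else 0 := by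
        rw [wheel_succ]; push_cast; rfl
      have h3 : (15 : ℝ) * wheel N ≤ 4 * N + 14 := by exact_mod_cast (wheel_bounds N).1
      rw [h2]
      push_cast
      generalize (if Nat.Coprime (N + 1) 30 then (1 : ℝ) else 0) = δ
      set s := rt4 (N : ℝ) with hs
      set t := rt4 ((N : ℝ) + 1) with ht
      have hs0 : 0 < s := rt4_pos hN0
      have ht0 : 0 < t := rt4_pos (by positivity)
      have hst : s ≤ t := rt4_mono (by linarith)
      have hs4 : s ^ 4 = N := rt4_pow hN0.le
      have ht4 : t ^ 4 = N + 1 := rt4_pow (by positivity)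
      have h5 : (wheel N - (4 * (N : ℝ) + 14) / 15) * (1 / (N * s)) ≤
          (wheel N - (4 * (N : ℝ) + 14) / 15) * (1 / ((N + 1) * t)) := by
        apply mul_le_mul_of_nonpos_left
        · gcongr; linarith
        · linarith
      have h6 : 1 / (((N : ℝ) + 1) * t) ≤ 4 * (1 / s - 1 / t) := by
        rw [← ht4, div_sub_div _ _ hs0.ne' ht0.ne', one_mul, mul_one, mul_div_assoc',
          div_le_div_iff₀ (by positivity) (by positivity), one_mul]
        have h7 : 1 ≤ (t - s) * (4 * t ^ 3) := by
          have e : (t - s) * (t ^ 3 + t ^ 2 * s + t * s ^ 2 + s ^ 3) = 1 := by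
            have : t ^ 4 - s ^ 4 = 1 := by rw [hs4, ht4]; ring
            rw [← this]; ring
          have e2 : t ^ 3 + t ^ 2 * s + t * s ^ 2 + s ^ 3 ≤ 4 * t ^ 3 := by
            have a1 : t ^ 2 * s ≤ t ^ 2 * t := by gcongr
            have a2 : t * s ^ 2 ≤ t * t ^ 2 := by gcongr
            have a3 : s ^ 3 ≤ t ^ 3 := by gcongr
            nlinarith
          rw [← e]
          exact mul_le_mul_of_nonneg_left e2 (by linarith)
        calc s * t ≤ t * t := by gcongr
          _ = t ^ 2 * 1 := by ring
          _ ≤ t ^ 2 * ((t - s) * (4 * t ^ 3)) := by gcongr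
          _ = 4 * (t - s) * (t ^ 4 * t) := by ring
      rw [show (16 : ℝ) / 15 / t = 16 / 15 * (1 / t) by ring]
      rw [show (16 : ℝ) / 15 / s = 16 / 15 * (1 / s) by ring] at ih
      linear_combination ih + h5 + 4 / 15 * h6
  have h3 : (15 : ℝ) * wheel N ≤ 4 * N + 14 := by exact_mod_cast (wheel_bounds N).1
  have h4 : (wheel N - (4 * (N : ℝ) + 14) / 15) * (1 / ((N : ℝ) * rt4 N)) ≤ 0 :=
    mul_nonpos_of_nonpos_of_nonneg (by linarith)
      (by have := rt4_nonneg (N : ℝ); positivity)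
  have h5 : 0 ≤ 16 / 15 / rt4 (N : ℝ) := div_nonneg (by norm_num) (rt4_nonneg _)
  linarith

/-- The local factor of the Dirichlet series behind `varT`, at exponent `1 / 4`. -/
noncomputable def locT (p : ℕ) : ℝ := 9 * (p : ℝ) ^ 3 / ((p : ℝ) - 1) ^ 4 / rt4 p

lemma locT_nonneg (p : ℕ) : 0 ≤ locT p := by
  have := rt4_nonneg (p : ℝ)
  have h : 0 ≤ ((p : ℝ) - 1) ^ 4 := by positivity
  unfold locT
  positivity

lemma prod_locT_small_le :
    ∏ p ∈ ({7, 11, 13, 17, 19, 23, 29, 31} : Finset ℕ), (1 + locT p) ≤ 16.9 := by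
  have h : ∀ (p : ℕ) (c : ℝ), 0 < c → c ^ 4 ≤ p →
      1 + locT p ≤ 1 + 9 * (p : ℝ) ^ 3 / ((p : ℝ) - 1) ^ 4 / c := by
    intro p c hc hp
    unfold locT
    have := le_rt4 hp
    gcongr
  have h0 : ∀ p : ℕ, 0 ≤ 1 + locT p := fun p => by have := locT_nonneg p; linarith
  have e7 := h 7 1.626 (by norm_num) (by norm_num)
  have e11 := h 11 1.821 (by norm_num) (by norm_num)
  have e13 := h 13 1.898 (by norm_num) (by norm_num)
  have e17 := h 17 2.030 (by norm_num) (by norm_num)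
  have e19 := h 19 2.087 (by norm_num) (by norm_num)
  have e23 := h 23 2.189 (by norm_num) (by norm_num)
  have e29 := h 29 2.320 (by norm_num) (by norm_num)
  have e31 := h 31 2.359 (by norm_num) (by norm_num)
  have n7 := h0 7
  have n11 := h0 11
  have n13 := h0 13
  have n17 := h0 17
  have n19 := h0 19
  have n23 := h0 23
  have n29 := h0 29
  have n31 := h0 31
  rw [prod_insert (by decide), prod_insert (by decide), prod_insert (by decide),
    prod_insert (by decide), prod_insert (by decide), prod_insert (by decide),
    prod_insert (by decide), prod_singleton]
  calc _ ≤ _ := mul_le_mul e7 (mul_le_mul e11 (mul_le_mul e13 (mul_le_mul e17 (mul_le_mul e19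
        (mul_le_mul e23 (mul_le_mul e29 e31 n31 (n29.trans e29)) (by positivity) (n23.trans e23))
        (by positivity) (n19.trans e19)) (by positivity) (n17.trans e17)) (by positivity)
        (n13.trans e13)) (by positivity) (n11.trans e11)) (by positivity) (n7.trans e7)
    _ ≤ 16.9 := by norm_num

/-- The primes beyond `31` are treated as if they were all the integers coprime to `30`. -/
lemma prod_locT_le (R : ℕ) : ∏ p ∈ sievePrimes R, (1 + locT p) ≤ 1700 := by
  rw [← prod_filter_mul_prod_filter_not (sievePrimes R) (fun p => p ≤ 36)]
  have h1 : ∏ p ∈ sievePrimes R with p ≤ 36, (1 + locT p) ≤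
      ∏ p ∈ ({7, 11, 13, 17, 19, 23, 29, 31} : Finset ℕ), (1 + locT p) := by
    apply prod_le_prod_of_subset_of_one_le
    · intro p hp
      simp only [sievePrimes, mem_filter, mem_Icc] at hp
      obtain ⟨⟨⟨h1, _⟩, h2⟩, h3⟩ := hp
      interval_cases p <;> first | decide | (revert h2; decide)
    · intro p _
      have := locT_nonneg p
      linarith
    · intro p _ _
      have := locT_nonneg p
      linarith
  have h2 : ∏ p ∈ sievePrimes R with ¬ p ≤ 36, (1 + locT p) ≤ Real.exp 4.56 := by
    calc _ ≤ ∏ p ∈ sievePrimes R with ¬ p ≤ 36, Real.exp (locT p) := by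
          refine prod_le_prod (fun p _ => ?_) fun p _ => ?_
          · have := locT_nonneg p
            linarith
          · rw [add_comm]; exact Real.add_one_le_exp _
      _ = Real.exp (∑ p ∈ sievePrimes R with ¬ p ≤ 36, locT p) := (Real.exp_sum _ _).symm
      _ ≤ _ := by
          apply Real.exp_le_exp.2
          calc _ ≤ ∑ p ∈ sievePrimes R with ¬ p ≤ 36, 10.05 * (1 / ((p : ℝ) * rt4 p)) := by
                refine sum_le_sum fun p hp => ?_
                have h37 : (37 : ℝ) ≤ p := by
                  have := (mem_filter.1 hp).2
                  exact_mod_cast (by omega : 37 ≤ p)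
                have hr := rt4_pos (by linarith : (0 : ℝ) < p)
                unfold locT
                have h3 : 9 * (p : ℝ) ^ 3 / ((p : ℝ) - 1) ^ 4 ≤ 10.05 / p := by
                  rw [div_le_div_iff₀ (by have : (0 : ℝ) < p - 1 := by linarith
                                          positivity) (by linarith)]
                  have h4 : (36 * (p : ℝ)) ≤ 37 * (p - 1) := by linarith
                  have h5 : (36 * (p : ℝ)) ^ 4 ≤ (37 * (p - 1)) ^ 4 := by gcongr
                  have h6 : (0 : ℝ) ≤ ((p : ℝ) - 1) ^ 4 := by positivity
                  rw [mul_pow, mul_pow] at h5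
                  nlinarith
                rw [show 10.05 * (1 / ((p : ℝ) * rt4 p)) = 10.05 / p / rt4 p by field_simp]
                gcongr
            _ = 10.05 * ∑ p ∈ sievePrimes R with ¬ p ≤ 36, 1 / ((p : ℝ) * rt4 p) := by
                rw [mul_sum]
            _ ≤ 10.05 * ∑ m ∈ Ioc 36 (R + 36) with Nat.Coprime m 30, 1 / ((m : ℝ) * rt4 m) := by
                refine mul_le_mul_of_nonneg_left
                  (sum_le_sum_of_subset_of_nonneg ?_ fun m _ _ => ?_) (by norm_num)
                · intro p hp
                  simp only [sievePrimes, mem_filter, mem_Icc, mem_Ioc] at hp ⊢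
                  exact ⟨by omega, coprime_thirty_of_prime hp.1.2 (by omega)⟩
                · have := rt4_nonneg (m : ℝ)
                  positivity
            _ ≤ 10.05 * 0.4532 := by
                have := sum_wheel_tail_le (R + 36) (by omega)
                gcongr
            _ ≤ _ := by norm_num
  have h3 : Real.exp 4.56 ≤ 100 := by
    rw [show (4.56 : ℝ) = 5 * 0.912 by norm_num, show (5 : ℝ) = ((5 : ℕ) : ℝ) by norm_num,
      Real.exp_nat_mul]
    have := Real.exp_bound' (x := 0.912) (by norm_num) (by norm_num) (n := 6) (by norm_num)
    have h4 : Real.exp 0.912 ≤ 2.4905 := by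
      refine this.trans ?_
      norm_num [Finset.sum_range_succ, Nat.factorial]
    calc _ ≤ (2.4905 : ℝ) ^ 5 := by gcongr
      _ ≤ _ := by norm_num
  calc _ ≤ (16.9 : ℝ) * 100 := by
        refine mul_le_mul (h1.trans prod_locT_small_le) (h2.trans h3)
          (prod_nonneg fun p _ => ?_) (by norm_num)
        have := locT_nonneg p
        linarith
    _ ≤ 1700 := by norm_num

/-- Rankin's trick with exponent `1 / 4`. -/
lemma varT_le (D : ℕ) : varT D ≤ 1700 * rt4 D := by
  have h1 : varT D ≤ rt4 D * ∑ q ∈ sieveRange D, ∏ p ∈ q.primeFactors, locT p := by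
    rw [varT, mul_sum]
    refine sum_le_sum fun q hq => ?_
    obtain ⟨⟨hq1, hqD⟩, hsq, -⟩ := mem_sieveRange.1 hq
    have hq0 : (0 : ℝ) < q := by exact_mod_cast hq1
    have h2 : ∏ p ∈ q.primeFactors, locT p
        = 9 ^ ω q * (q : ℝ) ^ 3 / (φ q : ℝ) ^ 4 / rt4 q := by
      unfold locT
      rw [prod_div_distrib, prod_div_distrib, prod_mul_distrib, prod_pow, prod_pow, prod_const,
        ← totient_eq_prod hsq, ← cast_eq_prod hsq, ← rt4_prod, ← cast_eq_prod hsq]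
      rfl
    rw [h2, mul_div_assoc', le_div_iff₀ (rt4_pos hq0), mul_comm (rt4 (D : ℝ))]
    gcongr
    exact rt4_mono (by exact_mod_cast hqD)
  have h2 := sum_sieveRange_le_prod D locT locT_nonneg
  have h3 := h2.trans (prod_locT_le D)
  have := mul_le_mul_of_nonneg_left h3 (rt4_nonneg (D : ℝ))
  linarith

/-! ### Rows and the variance -/

/-- The primes of row `k` in the residue class `b` modulo `30`. -/
def rowClass (n k b : ℕ) : Finset ℕ :=
  {p ∈ Ioc ((k - 1) * n) ((k - 1) * n + n) | p.Prime ∧ p % 30 = b}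

/-- Every segment of the progression `b` modulo `30` that starts at most `s` steps before row
`k` and has `n / 30 + 1 + s` terms covers the primes of that row. -/
lemma card_rowClass_le {n R s k b x : ℕ} (hR : 1 ≤ R) (hRn : R ≤ n) (hk : 2 ≤ k)
    (hx1 : (k - 1) * n / 30 ≤ x + s) (hx2 : x < (k - 1) * n / 30) :
    (#(rowClass n k b) : ℝ) ≤
      ∑ i ∈ range (n / 30 + 1 + s), selNu R (30 * (x + (i + 1)) + b) := by
  have hkn : n ≤ (k - 1) * n := Nat.le_mul_of_pos_left n (by omega)
  have hmem : ∀ p ∈ rowClass n k b, (p.Prime ∧ R < p) ∧ x + 1 ≤ p / 30 ∧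
      p / 30 - (x + 1) < n / 30 + 1 + s ∧ 30 * (p / 30) + b = p := by
    intro p hp
    simp only [rowClass, mem_filter, mem_Ioc] at hp
    generalize (k - 1) * n = a at *
    exact ⟨⟨hp.2.1, by omega⟩, by omega, by omega, by omega⟩
  have h1 : (#(rowClass n k b) : ℝ) = ∑ p ∈ rowClass n k b, selNu R p := by
    rw [sum_congr rfl fun p hp => selNu_prime hR (hmem p hp).1.1 (hmem p hp).1.2]
    simp
  have hinj : Set.InjOn (fun p => p / 30 - (x + 1)) (rowClass n k b : Set ℕ) := by
    intro p hp p' hp' h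
    have e := hmem p hp
    have e' := hmem p' hp'
    simp only at h
    omega
  have h2 : ∑ p ∈ rowClass n k b, selNu R p
      = ∑ i ∈ (rowClass n k b).image (fun p => p / 30 - (x + 1)),
        selNu R (30 * (x + (i + 1)) + b) := by
    rw [sum_image hinj]
    refine sum_congr rfl fun p hp => ?_
    have e := hmem p hp
    congr 1
    omega
  rw [h1, h2]
  refine sum_le_sum_of_subset_of_nonneg ?_ fun i _ _ => selNu_nonneg _ _
  intro i hi
  obtain ⟨p, hp, rfl⟩ := mem_image.1 hi
  exact mem_range.2 (hmem p hp).2.2.1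

/-- The windows of starting points attached to different rows are disjoint, so the variance
bound controls the primes in all the rows at once. -/
lemma sum_rowClass_le {n R s : ℕ} {γ : ℝ} (hR : 1 ≤ R) (hRn : R ≤ n) (hs : 0 < s)
    (hsn : s ≤ n / 30) (hX : 4 * (n ^ 2 / 30) ≤ (R ^ 2) ^ 2) (hγ : 0 < γ) (b : ℕ)
    (A : Finset ℕ) (hA : ∀ k ∈ A, 2 ≤ k ∧ k ≤ n) :
    ∑ k ∈ A, (#(rowClass n k b) : ℝ) ≤ 1 / selL R * (#A * (1 + γ) * ((n / 30 + 1 + s : ℕ) : ℝ)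
      + ((R ^ 2 : ℕ) : ℝ) ^ 2 * varT (R ^ 2) / (2 * γ * s)) := by
  have hL := selL_pos hR
  set H := n / 30 + 1 + s with hH
  have hH0 : (0 : ℝ) < H := by exact_mod_cast (by omega : 0 < H)
  have hs0 : (0 : ℝ) < s := by exact_mod_cast hs
  set G : ℕ → ℝ := fun x =>
    ∑ i ∈ range H, selNu R (30 * (x + (i + 1)) + b) - H / selL R with hG
  set J : ℕ → ℕ := fun k => (k - 1) * n / 30 with hJ
  have hJs : ∀ k, 2 ≤ k → s ≤ J k := by
    intro k hk
    have hkn : n ≤ (k - 1) * n := Nat.le_mul_of_pos_left n (by omega)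
    exact hsn.trans (Nat.div_le_div_right hkn)
  have hJlt : ∀ k k', 1 ≤ k → k < k' → J k + s ≤ J k' := by
    intro k k' hk0 hk
    have hkn : (k - 1) * n + n ≤ (k' - 1) * n := by
      calc _ = (k - 1 + 1) * n := by ring
        _ ≤ _ := Nat.mul_le_mul_right _ (by omega)
    simp only [hJ]
    generalize (k - 1) * n = a at *
    generalize (k' - 1) * n = a' at *
    omega
  set c : ℝ := γ * (H / selL R) with hc
  have hc0 : 0 < c := by positivity
  -- the arithmetic-geometric mean inequality replaces Cauchy-Schwarz
  have hpt : ∀ k ∈ A, ∀ x ∈ Ico (J k - s) (J k),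
      (#(rowClass n k b) : ℝ) ≤ H / selL R + c + G x ^ 2 / (4 * c) := by
    intro k hk x hx
    have hk2 := (hA k hk).1
    rw [mem_Ico] at hx
    have h1 := card_rowClass_le (b := b) hR hRn hk2 (show J k ≤ x + s by omega) hx.2
    have h2 : G x ≤ c + G x ^ 2 / (4 * c) := by
      have : c + G x ^ 2 / (4 * c) - G x = (G x - 2 * c) ^ 2 / (4 * c) := by
        field_simp
        ring
      have h3 : 0 ≤ (G x - 2 * c) ^ 2 / (4 * c) := by positivity
      linarith
    have h4 : G x = ∑ i ∈ range (n / 30 + 1 + s), selNu R (30 * (x + (i + 1)) + b)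
      - H / selL R := rfl
    linarith
  have hcard : ∀ k ∈ A, #(Ico (J k - s) (J k)) = s := by
    intro k hk
    rw [Nat.card_Ico]
    have := hJs k (hA k hk).1
    omega
  have hsum : ∀ k ∈ A, s * (#(rowClass n k b) : ℝ) ≤
      s * (H / selL R + c) + (∑ x ∈ Ico (J k - s) (J k), G x ^ 2) / (4 * c) := by
    intro k hk
    have h1 := sum_le_sum (hpt k hk)
    rw [sum_add_distrib, ← sum_div] at h1
    simpa only [sum_const, hcard k hk, nsmul_eq_mul] using h1
  have hdisj : Set.PairwiseDisjoint (A : Set ℕ) (fun k => Ico (J k - s) (J k)) := by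
    intro k hk k' hk' hne
    simp only [Function.onFun]
    rw [disjoint_left]
    intro x hx hx'
    rw [mem_Ico] at hx hx'
    have h2 := hA k hk
    have h2' := hA k' hk'
    rcases lt_or_gt_of_ne hne with h | h
    · have := hJlt k k' (by omega) h
      omega
    · have := hJlt k' k (by omega) h
      omega
  have hall : ∑ k ∈ A, ∑ x ∈ Ico (J k - s) (J k), G x ^ 2
      ≤ 2 * ((R ^ 2 : ℕ) : ℝ) ^ 2 * (H * varT (R ^ 2) / selL R ^ 2) := by
    rw [← sum_biUnion hdisj]
    refine le_trans (sum_le_sum_of_subset_of_nonneg ?_ fun x _ _ => sq_nonneg _)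
      (variance_le hR b H hX)
    intro x hx
    obtain ⟨k, hk, hx⟩ := mem_biUnion.1 hx
    rw [mem_Ico] at hx
    refine mem_range.2 (lt_of_lt_of_le hx.2 (Nat.div_le_div_right ?_))
    rw [pow_two]
    exact Nat.mul_le_mul_right _ (by have := (hA k hk).2; omega)
  have htot := sum_le_sum hsum
  rw [sum_add_distrib, ← sum_div, ← mul_sum, sum_const, nsmul_eq_mul] at htot
  have h5 : (∑ k ∈ A, ∑ x ∈ Ico (J k - s) (J k), G x ^ 2) / (4 * c)
      ≤ 2 * ((R ^ 2 : ℕ) : ℝ) ^ 2 * (H * varT (R ^ 2) / selL R ^ 2) / (4 * c) := by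
    gcongr
  refine le_of_mul_le_mul_left ((htot.trans (add_le_add_right h5 _)).trans (le_of_eq ?_)) hs0
  rw [hc]
  field_simp
  ring

/-- The factor `8 = φ(30)` counts the residue classes; the first row is bounded trivially by `n`. -/
lemma primeCounting_le_of_variance {n R s : ℕ} {γ : ℝ} (hR : 1 ≤ R) (hRn : R ≤ n) (hs : 0 < s)
    (hsn : s ≤ n / 30) (hX : 4 * (n ^ 2 / 30) ≤ (R ^ 2) ^ 2) (hγ : 0 < γ) :
    (Nat.primeCounting (n ^ 2) : ℝ) ≤ n + 8 / selL R *
      (#(primeRows n) * (1 + γ) * ((n / 30 + 1 + s : ℕ) : ℝ)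
      + ((R ^ 2 : ℕ) : ℝ) ^ 2 * varT (R ^ 2) / (2 * γ * s)) := by
  have hL := selL_pos hR
  set B : Finset ℕ := {b ∈ range 30 | Nat.Coprime b 30} with hB
  have hBcard : #B = 8 := by rw [hB]; decide +kernel
  have h1 : Nat.primesLE (n ^ 2) ⊆ Ioc 0 n ∪ ((primeRows n).erase 1).biUnion (fun k =>
      B.biUnion fun b => rowClass n k b) := by
    intro p hp
    rw [Nat.mem_primesLE] at hp
    simp only [mem_union, mem_Ioc, mem_biUnion, mem_erase]
    by_cases h : p ≤ n
    · exact Or.inl ⟨hp.2.pos, h⟩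
    · obtain ⟨k, hk, hk'⟩ := exists_row (by omega) hp.2 hp.1
      have hcop := coprime_thirty_of_prime hp.2 (by omega)
      refine Or.inr ⟨k, ⟨?_, hk⟩, p % 30, ?_, ?_⟩
      · rintro rfl
        simp at hk'
        omega
      · rw [hB, mem_filter, mem_range]
        refine ⟨Nat.mod_lt _ (by norm_num), ?_⟩
        rw [Nat.Coprime, ← Nat.gcd_rec, Nat.gcd_comm]
        exact hcop
      · simp only [rowClass, mem_filter]
        exact ⟨hk', hp.2, trivial⟩
  have h2 := (card_le_card h1).trans ((card_union_le _ _).trans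
    (Nat.add_le_add_left (card_biUnion_le.trans (sum_le_sum fun k _ => card_biUnion_le)) _))
  rw [Nat.primesLE_card_eq_primeCounting, Nat.card_Ioc, Nat.sub_zero, sum_comm] at h2
  have hA : ∀ k ∈ (primeRows n).erase 1, 2 ≤ k ∧ k ≤ n := by
    intro k hk
    simp only [mem_erase, primeRows, mem_filter, mem_Icc] at hk
    omega
  have hAc : (#((primeRows n).erase 1) : ℝ) ≤ #(primeRows n) := by
    exact_mod_cast card_le_card (erase_subset _ _)
  calc (Nat.primeCounting (n ^ 2) : ℝ)
      ≤ ((n + ∑ b ∈ B, ∑ k ∈ (primeRows n).erase 1, #(rowClass n k b) : ℕ) : ℝ) := by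
        exact_mod_cast h2
    _ = n + ∑ b ∈ B, ∑ k ∈ (primeRows n).erase 1, (#(rowClass n k b) : ℝ) := by push_cast; rfl
    _ ≤ n + ∑ b ∈ B, 1 / selL R * (#(primeRows n) * (1 + γ) * ((n / 30 + 1 + s : ℕ) : ℝ)
          + ((R ^ 2 : ℕ) : ℝ) ^ 2 * varT (R ^ 2) / (2 * γ * s)) := by
        gcongr with b hb
        refine (sum_rowClass_le hR hRn hs hsn hX hγ b _ hA).trans ?_
        gcongr
    _ = _ := by
        rw [sum_const, hBcard]
        simp only [nsmul_eq_mul]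
        push_cast
        ring

/-! ### The range n > e ^ 36 -/

lemma exp_thirtysix_ge : (4000000000000000 : ℝ) ≤ Real.exp 36 := by
  have h1 := Real.exp_one_gt_d9
  rw [show (36 : ℝ) = ((36 : ℕ) : ℝ) * 1 by norm_num, Real.exp_nat_mul]
  calc (4000000000000000 : ℝ) ≤ 2.718 ^ 36 := by norm_num
    _ ≤ _ := by gcongr; linarith

/-- With sieve level `ρ = e ^ (0.55 ℓ - 2.25)`, `ℓ = log n`, the error term, once divided
by `2 γ s = n / 150000`, is smaller than the main term `n ^ 2 / 120` by a factor `0.008`. -/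
lemma variance_error_le {n R : ℕ} (hl : 36 ≤ Real.log n)
    (hR : (R : ℝ) ≤ Real.exp (0.55 * Real.log n - 2.25)) :
    ((R ^ 2 : ℕ) : ℝ) ^ 2 * varT (R ^ 2) ≤ 0.000000000436 * (n : ℝ) ^ 3 := by
  have hn0 : (0 : ℝ) < n := by
    by_contra h
    have : (n : ℝ) = 0 := le_antisymm (not_lt.1 h) (Nat.cast_nonneg n)
    rw [this, Real.log_zero] at hl
    norm_num at hl
  set l := Real.log n with hldef
  have hnl : Real.exp l = n := Real.exp_log hn0
  have hrt : rt4 ((R ^ 2 : ℕ) : ℝ) = √(R : ℝ) := by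
    unfold rt4
    push_cast
    rw [Real.sqrt_sq (Nat.cast_nonneg R)]
  have h1 : √(R : ℝ) ≤ Real.exp ((0.55 * l - 2.25) / 2) := by
    rw [Real.exp_half]
    exact Real.sqrt_le_sqrt hR
  have h2 : ((R ^ 2 : ℕ) : ℝ) ^ 2 ≤ Real.exp (4 * (0.55 * l - 2.25)) := by
    rw [show (4 : ℝ) * (0.55 * l - 2.25) = ((4 : ℕ) : ℝ) * (0.55 * l - 2.25) by norm_num,
      Real.exp_nat_mul]
    push_cast
    rw [← pow_mul]
    gcongr
  have h3 : varT (R ^ 2) ≤ 1700 * Real.exp ((0.55 * l - 2.25) / 2) := by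
    have := varT_le (R ^ 2)
    rw [hrt] at this
    linarith
  have h4 : Real.exp (4 * (0.55 * l - 2.25)) * Real.exp ((0.55 * l - 2.25) / 2)
      ≤ (n : ℝ) ^ 3 * Real.exp (-29) := by
    rw [← hnl, ← Real.exp_nat_mul, ← Real.exp_add, ← Real.exp_add]
    apply Real.exp_le_exp.2
    push_cast
    linarith
  have h5 : Real.exp (-29) ≤ 0.000000000000256 := by
    have h6 : (1 / 0.000000000000256 : ℝ) ≤ Real.exp 29 := by
      have h1 := Real.exp_one_gt_d9
      rw [show (29 : ℝ) = ((29 : ℕ) : ℝ) * 1 by norm_num, Real.exp_nat_mul]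
      calc (1 / 0.000000000000256 : ℝ) ≤ 2.718 ^ 29 := by norm_num
        _ ≤ _ := by gcongr; linarith
    rw [Real.exp_neg, inv_le_comm₀ (Real.exp_pos _) (by norm_num), ← one_div]
    exact h6
  calc ((R ^ 2 : ℕ) : ℝ) ^ 2 * varT (R ^ 2)
      ≤ Real.exp (4 * (0.55 * l - 2.25)) * (1700 * Real.exp ((0.55 * l - 2.25) / 2)) := by
        refine mul_le_mul h2 h3 ?_ (Real.exp_pos _).le
        exact sum_nonneg fun q _ => by positivity
    _ = 1700 * (Real.exp (4 * (0.55 * l - 2.25)) * Real.exp ((0.55 * l - 2.25) / 2)) := by ring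
    _ ≤ 1700 * ((n : ℝ) ^ 3 * 0.000000000000256) := by
        refine mul_le_mul_of_nonneg_left (h4.trans ?_) (by norm_num)
        gcongr
    _ ≤ _ := by
        have : (0 : ℝ) < (n : ℝ) ^ 3 := by positivity
        linarith

/-- The rows claim for `n > e ^ 36`. -/
lemma rows_of_log_gt_thirtysix {n : ℕ} (hl : 36 < Real.log n) :
    n ≤ 4 * #(primeRows n) := by
  by_contra hA
  push Not at hA
  have hn0 : (0 : ℝ) < n := by exact_mod_cast (by omega : 0 < n)
  set l := Real.log n with hldef
  have hnl : Real.exp l = n := Real.exp_log hn0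
  have hnbig : (4000000000000000 : ℝ) ≤ n := by
    rw [← hnl]; exact exp_thirtysix_ge.trans (Real.exp_le_exp.2 hl.le)
  set ρ := Real.exp (0.55 * l - 2.25) with hρ
  have hρbig : (10000000 : ℝ) ≤ ρ := by
    have h1 := Real.exp_one_gt_d9
    calc (10000000 : ℝ) ≤ 2.718 ^ 17 := by norm_num
      _ ≤ Real.exp 1 ^ 17 := by gcongr; linarith
      _ = Real.exp (((17 : ℕ) : ℝ) * 1) := (Real.exp_nat_mul _ _).symm
      _ ≤ ρ := Real.exp_le_exp.2 (by norm_num; linarith)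
  set R := ⌊ρ⌋₊ with hRdef
  have hRle : (R : ℝ) ≤ ρ := Nat.floor_le (by positivity)
  have hRgt : ρ < R + 1 := Nat.lt_floor_add_one ρ
  have hR239 : 239 ≤ R := Nat.le_floor (by push_cast; linarith)
  have hRn : R ≤ n := by
    have : (R : ℝ) ≤ n := by
      refine hRle.trans ?_
      rw [← hnl]
      exact Real.exp_le_exp.2 (by linarith)
    exact_mod_cast this
  have hX : 4 * (n ^ 2 / 30) ≤ (R ^ 2) ^ 2 := by
    have h1 : 0.999 * ρ ≤ R := by linarith
    have h2 : 0.16 * (n : ℝ) ^ 2 ≤ ρ ^ 4 := by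
      rw [hρ, ← hnl, ← Real.exp_nat_mul, ← Real.exp_nat_mul]
      have h3 : (0.16 : ℝ) ≤ Real.exp (-1.8) := by
        have h4 : Real.exp 0.9 ≤ 2.5 := by
          have := Real.exp_bound' (x := 0.9) (by norm_num) (by norm_num) (n := 5) (by norm_num)
          refine this.trans ?_
          norm_num [Finset.sum_range_succ, Nat.factorial]
        have h5 : Real.exp 1.8 ≤ 6.25 := by
          rw [show (1.8 : ℝ) = ((2 : ℕ) : ℝ) * 0.9 by norm_num, Real.exp_nat_mul]
          calc _ ≤ (2.5 : ℝ) ^ 2 := by gcongr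
            _ ≤ _ := by norm_num
        rw [Real.exp_neg, le_inv_comm₀ (by norm_num) (Real.exp_pos _)]
        exact h5.trans (by norm_num)
      calc _ ≤ Real.exp (-1.8) * Real.exp ((2 : ℕ) * l) := by gcongr
        _ = Real.exp (-1.8 + (2 : ℕ) * l) := (Real.exp_add _ _).symm
        _ ≤ _ := Real.exp_le_exp.2 (by push_cast; linarith)
    have h3 : (0.999 * ρ) ^ 4 ≤ (R : ℝ) ^ 4 := by gcongr
    have h4 : ((n ^ 2 / 30 : ℕ) : ℝ) ≤ (n : ℝ) ^ 2 / 30 := by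
      have := Nat.cast_div_le (α := ℝ) (m := n ^ 2) (n := 30)
      push_cast at this
      exact this
    have h5 : (4 * ((n ^ 2 / 30 : ℕ) : ℝ)) ≤ ((R : ℝ) ^ 2) ^ 2 := by
      rw [mul_pow] at h3
      rw [← pow_mul]
      nlinarith
    exact_mod_cast h5
  have hs1 : (n : ℝ) / 3000 - 1 ≤ (n / 3000 : ℕ) := by
    have h : n < 3000 * (n / 3000) + 3000 := by omega
    have h' : (n : ℝ) < 3000 * (n / 3000 : ℕ) + 3000 := by exact_mod_cast h
    linarith
  have hs2 : ((n / 3000 : ℕ) : ℝ) ≤ (n : ℝ) / 3000 := by exact_mod_cast Nat.cast_div_le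
  have hN2 : ((n / 30 : ℕ) : ℝ) ≤ (n : ℝ) / 30 := by exact_mod_cast Nat.cast_div_le
  have hn_nat : 3000 ≤ n := by
    have : (3000 : ℝ) ≤ n := by linarith
    exact_mod_cast this
  have hs0 : 0 < n / 3000 := by omega
  have hpi := primeCounting_le_of_variance (n := n) (R := R) (s := n / 3000) (γ := 0.01)
    (by omega) hRn hs0 (by omega) hX (by norm_num)
  have hE := variance_error_le hl.le hRle
  have hLlow : 4 / 15 * (0.55 * l - 0.043) ≤ selL R := by
    refine le_trans ?_ (selL_ge_239 hR239)
    have : 0.55 * l - 2.25 ≤ Real.log (R + 1) := by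
      rw [← Real.log_exp (0.55 * l - 2.25)]
      exact Real.log_le_log (Real.exp_pos _) hRgt.le
    linarith
  set E := ((R ^ 2 : ℕ) : ℝ) ^ 2 * varT (R ^ 2) with hEdef
  have hEs : E / (2 * 0.01 * (n / 3000 : ℕ)) ≤ 0.000066 * (n : ℝ) ^ 2 := by
    rw [div_le_iff₀ (by have : (0 : ℝ) < (n / 3000 : ℕ) := by exact_mod_cast hs0
                        linarith)]
    have h1 : 0.999 * (n / 3000 : ℝ) ≤ (n / 3000 : ℕ) := by linarith
    have h2 : 0.000066 * (n : ℝ) ^ 2 * (2 * 0.01 * (0.999 * (n / 3000 : ℝ)))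
        ≤ 0.000066 * (n : ℝ) ^ 2 * (2 * 0.01 * (n / 3000 : ℕ)) := by gcongr
    have h3 : (0 : ℝ) < (n : ℝ) ^ 3 := by positivity
    refine le_trans ?_ h2
    rw [show 0.000066 * (n : ℝ) ^ 2 * (2 * 0.01 * (0.999 * (n / 3000 : ℝ)))
      = (0.000066 * (2 * 0.01 * (0.999 / 3000))) * (n : ℝ) ^ 3 by ring]
    refine hE.trans ?_
    gcongr
    norm_num
  have hAr : (#(primeRows n) : ℝ) ≤ n / 4 := by
    have : (4 * #(primeRows n) : ℝ) < n := by exact_mod_cast hA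
    linarith
  have hH : ((n / 30 + 1 + n / 3000 : ℕ) : ℝ) ≤ 0.033667 * n := by
    push_cast
    linarith
  have hmain : #(primeRows n) * (1 + 0.01) * ((n / 30 + 1 + n / 3000 : ℕ) : ℝ)
      + E / (2 * 0.01 * (n / 3000 : ℕ)) ≤ 0.008568 * (n : ℝ) ^ 2 := by
    have h1 : #(primeRows n) * (1 + 0.01) * ((n / 30 + 1 + n / 3000 : ℕ) : ℝ)
        ≤ n / 4 * (1 + 0.01) * (0.033667 * n) := by gcongr
    have h2 : (n : ℝ) / 4 * (1 + 0.01) * (0.033667 * n)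
        = (1.01 / 4 * 0.033667) * (n : ℝ) ^ 2 := by ring
    have h3 : (0 : ℝ) < (n : ℝ) ^ 2 := by positivity
    linarith
  have hΛ : 0 < 0.55 * l - 0.043 := by linarith
  have hL0 : 0 < selL R := lt_of_lt_of_le (by positivity) hLlow
  have hpi2 : (Nat.primeCounting (n ^ 2) : ℝ) ≤
      n + 8 / (4 / 15 * (0.55 * l - 0.043)) * (0.008568 * (n : ℝ) ^ 2) := by
    refine hpi.trans ?_
    have h1 : 8 / selL R * (#(primeRows n) * (1 + 0.01) * ((n / 30 + 1 + n / 3000 : ℕ) : ℝ)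
      + E / (2 * 0.01 * (n / 3000 : ℕ))) ≤ 8 / selL R * (0.008568 * (n : ℝ) ^ 2) := by gcongr
    have h2 : 8 / selL R * (0.008568 * (n : ℝ) ^ 2)
        ≤ 8 / (4 / 15 * (0.55 * l - 0.043)) * (0.008568 * (n : ℝ) ^ 2) := by gcongr
    linarith
  have hpsi := psi_sq_ge (n := n) (by linarith)
  have hpsi2 := Chebyshev.psi_le_primeCounting_mul_log (n ^ 2)
  have hlog : Real.log ((n ^ 2 : ℕ) : ℝ) = 2 * l := by
    push_cast; rw [Real.log_pow]; norm_num [hldef]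
  rw [hlog] at hpsi2
  have hsmall : 2 * l ≤ 0.0011 * n := by
    have h1 := Real.pow_div_factorial_le_exp l (by linarith) 4
    rw [hnl] at h1
    norm_num [Nat.factorial] at h1
    have h2 : (36 : ℝ) ^ 3 ≤ l ^ 3 := by gcongr
    have h3 : 36 ^ 3 * l ≤ l ^ 3 * l := by gcongr
    rw [← pow_succ] at h3
    norm_num at h3
    linarith
  have hratio : 8 / (4 / 15 * (0.55 * l - 0.043)) * (0.008568 * (n : ℝ) ^ 2) * (2 * l)
      ≤ 0.94 * (n : ℝ) ^ 2 := by
    have h1 : 8 / (4 / 15 * (0.55 * l - 0.043)) * (2 * l) ≤ 109.5 := by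
      rw [div_mul_eq_mul_div, div_le_iff₀ (by positivity)]
      linarith
    have h3 : (0 : ℝ) < (n : ℝ) ^ 2 := by positivity
    nlinarith
  have hfin : (Nat.primeCounting (n ^ 2) : ℝ) * (2 * l) ≤ 0.9411 * (n : ℝ) ^ 2 := by
    calc _ ≤ (n + 8 / (4 / 15 * (0.55 * l - 0.043)) * (0.008568 * (n : ℝ) ^ 2)) * (2 * l) := by
          gcongr
      _ = n * (2 * l) + 8 / (4 / 15 * (0.55 * l - 0.043)) * (0.008568 * (n : ℝ) ^ 2) * (2 * l) := by
          ring
      _ ≤ n * (0.0011 * n) + 0.94 * (n : ℝ) ^ 2 := by gcongr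
      _ = _ := by ring
  have h3 : (0 : ℝ) < (n : ℝ) ^ 2 := by positivity
  push_cast at hpsi hpsi2
  linarith

end SierpinskiRows

theorem quarter_of_rows_contain_primes (n : ℕ) (hn : 2 ≤ n) :
    n ≤ 4 * {k : ℕ | 1 ≤ k ∧ k ≤ n ∧
      ∃ p : ℕ, p.Prime ∧ (k - 1) * n < p ∧ p ≤ k * n}.ncard := by
  rw [SierpinskiRows.ncard_eq]
  rcases le_or_gt (Real.log n) 36 with h | h
  · exact SierpinskiRows.rows_of_log_le_thirtysix hn h
  · exact SierpinskiRows.rows_of_log_gt_thirtysix h
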